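/- arXiv:2408.10480 — 3 statements merged into one kernel-verified Lean document; each statement's English description precedes it below -/
import Mathlib

section
/- Assume (A1)–(A5). Then there exists a threshold s* ∈ [s₁, s₂) such that c*(s) = 2 for all s ∈ [0, s*] and c*(s) > 2 for all s ∈ (s*, ∞). -/
open Filter Asymptotics MeasureTheory Set

noncomputable section

/-- A traveling wave front with speed `c` for the nonlinearity `g`:
a decreasing `C²` solution of `W'' + c W' + g(W) = 0` connecting `1` (at `-∞`) to `0` (at `+∞`). -/
def IsFront (g : ℝ → ℝ) (c : ℝ) (W : ℝ → ℝ) : Prop :=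
  ContDiff ℝ 2 W ∧
  (∀ ξ, deriv (deriv W) ξ + c * deriv W ξ + g (W ξ) = 0) ∧
  Tendsto W atBot (nhds 1) ∧ Tendsto W atTop (nhds 0) ∧
  (∀ ξ, deriv W ξ < 0)

/-- Barrier lemma: positivity propagates to the right if the derivative is nonnegative
wherever the function is positive. -/
lemma barrier {h h' : ℝ → ℝ} {a b : ℝ} (hab : a ≤ b) (hc : ContinuousOn h (Icc a b))
    (hd : ∀ x ∈ Ico a b, HasDerivAt h (h' x) x)
    (hp : ∀ x ∈ Ico a b, 0 < h x → 0 ≤ h' x) (ha : 0 < h a) : h a / 2 ≤ h b := by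
  set ε : ℝ := h a / 2 / (b - a + 1) with hε
  have hba : 0 < b - a + 1 := by linarith
  have hεpos : 0 < ε := by positivity
  have hεm : ε * (b - a + 1) = h a / 2 := by rw [hε]; field_simp
  have key := image_le_of_deriv_right_lt_deriv_boundary (f := fun x => - h x)
    (f' := fun x => - h' x) (a := a) (b := b) (B := fun x => - h a + ε * (x - a))
    (B' := fun _ => ε) hc.neg (fun x hx => (hd x hx).neg.hasDerivWithinAt) (by simp)
    (fun x => by simpa using (((hasDerivAt_id x).sub_const a).const_mul ε).const_add (-h a))
    (by
      intro x hx hxe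
      have h1 : ε * (x - a) ≤ ε * (b - a + 1) := by
        apply mul_le_mul_of_nonneg_left _ hεpos.le; linarith [hx.2]
      have := hp x hx (by linarith)
      linarith)
  have := key (right_mem_Icc.2 hab)
  nlinarith

/-- Comparison on `[0,1]`. -/
lemma comparison {h h' : ℝ → ℝ} (hc : ContinuousOn h (Icc 0 1))
    (hd : ∀ x ∈ Ioo (0:ℝ) 1, HasDerivAt h (h' x) x)
    (hp : ∀ x ∈ Ioo (0:ℝ) 1, 0 < h x → 0 ≤ h' x) (h1 : h 1 ≤ 0) :
    ∀ w ∈ Icc (0:ℝ) 1, h w ≤ 0 := by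
  have hI : ∀ w ∈ Ioo (0:ℝ) 1, h w ≤ 0 := by
    intro w hw
    by_contra hcon
    push Not at hcon
    have := barrier (h := h) (h' := h') hw.2.le (hc.mono (Icc_subset_Icc hw.1.le le_rfl))
      (fun x hx => hd x ⟨hw.1.trans_le hx.1, hx.2⟩)
      (fun x hx => hp x ⟨hw.1.trans_le hx.1, hx.2⟩) hcon
    linarith
  intro w hw
  have hcl : closure (Ioo (0:ℝ) 1) = Icc 0 1 := closure_Ioo (by norm_num)
  exact ContinuousWithinAt.closure_le (s := Ioo (0:ℝ) 1) (f := h) (g := fun _ => 0)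
    (by rw [hcl]; exact hw) ((hc w hw).mono Ioo_subset_Icc_self) continuousWithinAt_const hI

/-- Solutions of the squared phase-plane equation. -/
def Sol (c : ℝ) (g y : ℝ → ℝ) : Prop :=
  ContinuousOn y (Icc 0 1) ∧
  (∀ w ∈ Ioo (0:ℝ) 1, HasDerivAt y (2 * c * √(y w) - 2 * g w) w) ∧ y 1 = 0

lemma sol_compare {c ε : ℝ} (hc : 0 ≤ c) {g k y z : ℝ → ℝ} (hy : Sol c g y) (hz : Sol c k z)
    (hε : 0 ≤ ε)
    (hgk : ∀ w ∈ Ioo (0:ℝ) 1, g w ≤ k w + ε) : y 0 ≤ z 0 + 2 * ε := by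
  have := comparison (h := fun w => y w - z w - 2 * ε * (1 - w))
    (h' := fun w => (2 * c * √(y w) - 2 * g w) - (2 * c * √(z w) - 2 * k w) + 2 * ε)
    ((hy.1.sub hz.1).sub (by fun_prop))
    (fun x hx => by
      have h1 : HasDerivAt (fun w : ℝ => 2 * ε * (1 - w)) (-(2 * ε)) x := by
        simpa using ((hasDerivAt_id x).const_sub 1).const_mul (2 * ε)
      exact (((hy.2.1 x hx).sub (hz.2.1 x hx)).sub h1).congr_deriv (by ring))
    (fun x hx hpos => by
      have h2 : 0 ≤ 2 * ε * (1 - x) := mul_nonneg (by linarith) (by linarith [hx.2])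
      have h3 : √(z x) ≤ √(y x) := Real.sqrt_le_sqrt (by linarith)
      have h4 := hgk x hx
      nlinarith [mul_le_mul_of_nonneg_left h3 hc])
    (by simp [hy.2.2, hz.2.2]) 0 (by simp)
  linarith

lemma sol_nonneg {c : ℝ} {g y : ℝ → ℝ} (hy : Sol c g y)
    (hg : ∀ w ∈ Ioo (0:ℝ) 1, 0 < g w) : ∀ w ∈ Icc (0:ℝ) 1, 0 ≤ y w := by
  intro w hw
  have := comparison (h := fun w => - y w) (h' := fun w => -(2 * c * √(y w) - 2 * g w))
    hy.1.neg (fun x hx => (hy.2.1 x hx).neg)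
    (fun x hx hpos => by
      rw [Real.sqrt_eq_zero_of_nonpos (by linarith)]
      linarith [hg x hx]) (by simp [hy.2.2]) w hw
  simpa using this

lemma sol_pos {c : ℝ} {g y : ℝ → ℝ} (hy : Sol c g y)
    (hg : ∀ w ∈ Ioo (0:ℝ) 1, 0 < g w) : ∀ w ∈ Ioo (0:ℝ) 1, 0 < y w := by
  intro w hw
  have h0 := sol_nonneg hy hg
  rcases (h0 w (Ioo_subset_Icc_self hw)).lt_or_eq with h | h
  · exact h
  exfalso
  have hmin : IsLocalMin y w := by
    filter_upwards [Ioo_mem_nhds hw.1 hw.2] with x hx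
    rw [← h]; exact h0 x (Ioo_subset_Icc_self hx)
  have := hmin.hasDerivAt_eq_zero (hy.2.1 w hw)
  rw [← h] at this
  simp at this
  linarith [hg w hw]

lemma sqrt_max_lip {δ : ℝ} (hδ : 0 < δ) (a b : ℝ) :
    |√(max a δ) - √(max b δ)| ≤ (√δ)⁻¹ * |a - b| := by
  have hs : 0 < √δ := Real.sqrt_pos.2 hδ
  have h1 : √δ ≤ √(max a δ) := Real.sqrt_le_sqrt (le_max_right _ _)
  have h2 : √δ ≤ √(max b δ) := Real.sqrt_le_sqrt (le_max_right _ _)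
  have e1 : √(max a δ) ^ 2 = max a δ := Real.sq_sqrt (hδ.le.trans (le_max_right _ _))
  have e2 : √(max b δ) ^ 2 = max b δ := Real.sq_sqrt (hδ.le.trans (le_max_right _ _))
  have h3 : |max a δ - max b δ| ≤ |a - b| := abs_max_sub_max_le_abs a b δ
  have h4 : |√(max a δ) - √(max b δ)| * (√(max a δ) + √(max b δ)) = |max a δ - max b δ| := by
    rw [← e1, ← e2, sq_sub_sq, abs_mul, abs_of_pos (by linarith : 0 < √(max a δ) + √(max b δ)),
      mul_comm]
    simp only [e1, e2]
  rw [inv_mul_eq_div, le_div_iff₀ hs]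
  nlinarith [abs_nonneg (√(max a δ) - √(max b δ))]

lemma approx_exists {c M δ : ℝ} (hc : 0 ≤ c) (hδ : 0 < δ) (hδ1 : δ ≤ 1) {g : ℝ → ℝ}
    (hg : Continuous g) (hM : ∀ w, |g w| ≤ M) :
    ∃ y : ℝ → ℝ, Continuous y ∧ (∀ w, y w = y (max 0 (min w 1))) ∧ y 1 = 0 ∧
      ∀ w ∈ Ioo (0:ℝ) 1, HasDerivAt y (2 * c * √(max (y w) δ) - 2 * g w) w := by
  have hM0 : 0 ≤ M := (abs_nonneg _).trans (hM 0)
  set q : ℝ := 2 * c + 2 * M + 2 with hq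
  set R : ℝ := q ^ 2 - 1 with hR
  have hq2 : 2 ≤ q := by linarith
  have hR0 : 0 ≤ R := by nlinarith
  have hK0 : 0 ≤ 2 * c * (√δ)⁻¹ := by positivity
  have PL : IsPicardLindelof (fun (t : ℝ) (x : ℝ) => 2 * c * √(max x δ) - 2 * g t)
      (tmin := 0) (tmax := 1) ⟨1, by simp⟩ 0 R.toNNReal 0 R.toNNReal (2 * c * (√δ)⁻¹).toNNReal := by
    refine ⟨?_, ?_, ?_, ?_⟩
    · intro t _
      apply LipschitzWith.lipschitzOnWith
      apply LipschitzWith.of_dist_le_mul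
      intro a b
      rw [Real.dist_eq, Real.dist_eq]
      have := sqrt_max_lip hδ a b
      calc |2 * c * √(max a δ) - 2 * g t - (2 * c * √(max b δ) - 2 * g t)|
          = 2 * c * |√(max a δ) - √(max b δ)| := by
            rw [← abs_of_nonneg (by linarith : 0 ≤ 2 * c), ← abs_mul, abs_of_nonneg
              (by linarith : 0 ≤ 2 * c)]
            congr 1; ring
        _ ≤ 2 * c * ((√δ)⁻¹ * |a - b|) := mul_le_mul_of_nonneg_left this (by linarith)
        _ = _ := by rw [Real.coe_toNNReal _ hK0]; ring
    · intro x _; fun_prop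
    · intro t _ x hx
      have hx' : |x| ≤ R := by
        simpa [Real.coe_toNNReal _ hR0, hR0] using hx
      have hs : √(max x δ) ≤ q := by
        apply Real.sqrt_le_iff.2 ⟨by linarith, max_le ?_ ?_⟩
        · linarith [le_abs_self x]
        · nlinarith
      have hs0 := Real.sqrt_nonneg (max x δ)
      have := abs_le.1 (hM t)
      rw [Real.coe_toNNReal _ hR0, Real.norm_eq_abs]
      have hb : 2 * c * √(max x δ) ≤ 2 * c * q := mul_le_mul_of_nonneg_left hs (by linarith)
      have hb0 : 0 ≤ 2 * c * √(max x δ) := by positivity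
      have hbq : 2 * c * q + 2 * M ≤ R := by nlinarith
      have : 0 ≤ 2 * c * q := by positivity
      rw [abs_le]; constructor <;> linarith
    · simp
  obtain ⟨α, hα1, hα⟩ := PL.exists_eq_forall_mem_Icc_hasDerivWithinAt₀
  have hcont : ContinuousOn α (Icc 0 1) := fun t ht => (hα t ht).continuousWithinAt
  have hproj : ∀ w : ℝ, max 0 (min w 1) ∈ Icc (0:ℝ) 1 := fun w =>
    ⟨le_max_left _ _, max_le (by norm_num) (min_le_right _ _)⟩
  have hid : ∀ w ∈ Icc (0:ℝ) 1, max 0 (min w 1) = w := fun w hw => by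
    rw [min_eq_left hw.2, max_eq_right hw.1]
  refine ⟨fun w => α (max 0 (min w 1)), hcont.comp_continuous (by fun_prop) hproj, ?_, ?_, ?_⟩
  · intro w; simp only [hid _ (hproj w)]
  · simpa using hα1
  · intro w hw
    have hw' := Ioo_subset_Icc_self hw
    simp only [hid w hw']
    have := (hα w hw').hasDerivAt (Icc_mem_nhds hw.1 hw.2)
    apply this.congr_of_eventuallyEq
    filter_upwards [Icc_mem_nhds hw.1 hw.2] with x hx
    rw [hid x hx]

lemma sol_exists_cont {c M : ℝ} (hc : 0 ≤ c) {g : ℝ → ℝ}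
    (hg : Continuous g) (hM : ∀ w, |g w| ≤ M) : ∃ y, Sol c g y := by
  have hM0 : 0 ≤ M := (abs_nonneg _).trans (hM 0)
  let δ : ℕ → ℝ := fun n => 1 / ((n : ℝ) + 1)
  have hδ0 : ∀ n, 0 < δ n := fun n => by positivity
  have hδanti : Antitone δ := fun m n hmn => one_div_le_one_div_of_le (by positivity) (by
    have : (m : ℝ) ≤ n := by exact_mod_cast hmn
    linarith)
  have hδ1 : ∀ n, δ n ≤ 1 := fun n => by
    have := hδanti (Nat.zero_le n)
    simpa [δ] using this
  have hδlim : Tendsto δ atTop (nhds 0) := tendsto_one_div_add_atTop_nhds_zero_nat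
  choose Y hYc hYp hY1 hYd using fun n => approx_exists hc (hδ0 n) (hδ1 n) hg hM
  have hproj : ∀ w : ℝ, max 0 (min w 1) ∈ Icc (0:ℝ) 1 := fun w =>
    ⟨le_max_left _ _, max_le (by norm_num) (min_le_right _ _)⟩
  have hmono : ∀ w, Monotone fun n => Y n w := by
    intro w m n hmn
    simp only
    rw [hYp m w, hYp n w]
    have := comparison (h := fun w => Y m w - Y n w)
      (h' := fun w => (2 * c * √(max (Y m w) (δ m)) - 2 * g w) -
        (2 * c * √(max (Y n w) (δ n)) - 2 * g w))
      ((hYc m).sub (hYc n)).continuousOn (fun x hx => (hYd m x hx).sub (hYd n x hx))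
      (fun x hx hpos => by
        have h3 : √(max (Y n x) (δ n)) ≤ √(max (Y m x) (δ m)) :=
          Real.sqrt_le_sqrt (max_le_max (by linarith) (hδanti hmn))
        nlinarith [mul_le_mul_of_nonneg_left h3 hc])
      (by simp [hY1]) _ (hproj w)
    linarith
  have hub : ∀ n w, Y n w ≤ 2 * M := by
    intro n w
    rw [hYp n w]
    have := comparison (h := fun w => Y n w - 2 * M * (1 - w))
      (h' := fun w => (2 * c * √(max (Y n w) (δ n)) - 2 * g w) + 2 * M)
      ((hYc n).sub (by fun_prop)).continuousOn (fun x hx => by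
        have h1 : HasDerivAt (fun w : ℝ => 2 * M * (1 - w)) (-(2 * M)) x := by
          simpa using ((hasDerivAt_id x).const_sub 1).const_mul (2 * M)
        exact ((hYd n x hx).sub h1).congr_deriv (by ring))
      (fun x hx _ => by
        have h1 : 0 ≤ 2 * c * √(max (Y n x) (δ n)) := by positivity
        linarith [(abs_le.1 (hM x)).2])
      (by simp [hY1]) _ (hproj w)
    have h2 : 0 ≤ M * max 0 (min w 1) := mul_nonneg hM0 (le_max_left _ _)
    nlinarith
  let y : ℝ → ℝ := fun w => ⨆ n, Y n w
  have hlim : ∀ w, Tendsto (fun n => Y n w) atTop (nhds (y w)) := fun w =>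
    tendsto_atTop_ciSup (hmono w) ⟨2 * M, by rintro _ ⟨n, rfl⟩; exact hub n w⟩
  have hymeas : Measurable y :=
    measurable_of_tendsto_metrizable (fun n => (hYc n).measurable) (tendsto_pi_nhds.2 hlim)
  have hyub : ∀ w, y w ≤ 2 * M := fun w => le_of_tendsto' (hlim w) (fun n => hub n w)
  let φ : ℝ → ℝ := fun w => 2 * c * √(y w) - 2 * g w
  let φn : ℕ → ℝ → ℝ := fun n w => 2 * c * √(max (Y n w) (δ n)) - 2 * g w
  have hφmeas : Measurable φ := by
    have := hg.measurable
    exact ((hymeas.sqrt).const_mul _).sub (this.const_mul _)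
  have hφncont : ∀ n, Continuous (φn n) := fun n => by
    have := hYc n
    fun_prop
  let B : ℝ := 2 * c * √(2 * M + 1) + 2 * M
  have hgen : ∀ t w, t ≤ 2 * M + 1 → |2 * c * √t - 2 * g w| ≤ B := by
    intro t w ht
    have h1 : √t ≤ √(2 * M + 1) := Real.sqrt_le_sqrt ht
    have h2 := mul_le_mul_of_nonneg_left h1 (by linarith : 0 ≤ 2 * c)
    have h3 : 0 ≤ 2 * c * √t := by positivity
    have h4 := abs_le.1 (hM w)
    simp only [B]
    rw [abs_le]; constructor <;> linarith
  have hφb : ∀ w, |φ w| ≤ B := fun w => hgen _ _ (by linarith [hyub w])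
  have hφnb : ∀ n w, |φn n w| ≤ B := fun n w =>
    hgen _ _ (max_le (by linarith [hub n w]) (by linarith [hδ1 n]))
  have hφint : ∀ a b : ℝ, IntervalIntegrable φ volume a b := fun a b => by
    apply IntervalIntegrable.mono_fun (g := φ) (f := fun _ => B) (by simp)
      hφmeas.aestronglyMeasurable
    filter_upwards with x
    rw [Real.norm_eq_abs, Real.norm_eq_abs]
    exact (hφb x).trans (le_abs_self _)
  have hφlim : ∀ w, Tendsto (fun n => φn n w) atTop (nhds (φ w)) := by
    intro w
    have h1 : Tendsto (fun n => √(max (Y n w) (δ n))) atTop (nhds (√(max (y w) 0))) :=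
      (Real.continuous_sqrt.tendsto _).comp ((hlim w).max hδlim)
    have h2 : √(max (y w) 0) = √(y w) := by
      rcases le_total 0 (y w) with h | h
      · rw [max_eq_left h]
      · rw [max_eq_right h, Real.sqrt_zero, Real.sqrt_eq_zero_of_nonpos h]
    rw [h2] at h1
    exact (h1.const_mul _).sub_const _
  have hyz : ∀ w ∈ Icc (0:ℝ) 1, y w = ∫ x in (1:ℝ)..w, φ x := by
    intro w hw
    have hn : ∀ n, ∫ x in (1:ℝ)..w, φn n x = Y n w := by
      intro n
      rw [intervalIntegral.integral_symm,
        intervalIntegral.integral_eq_sub_of_hasDerivAt_of_le hw.2 (hYc n).continuousOn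
        (fun x hx => hYd n x ⟨hw.1.trans_lt hx.1, hx.2⟩)
        ((hφncont n).intervalIntegrable _ _), hY1 n]
      ring
    have := intervalIntegral.tendsto_integral_filter_of_dominated_convergence (μ := volume)
      (a := 1) (b := w) (F := φn) (f := φ) (l := atTop) (fun _ => B)
      (Eventually.of_forall fun n => (hφncont n).aestronglyMeasurable)
      (Eventually.of_forall fun n => Eventually.of_forall fun x _ => hφnb n x)
      (by simp) (Eventually.of_forall fun x _ => hφlim x)
    simp only [hn] at this
    exact tendsto_nhds_unique (hlim w) this
  have hzc : Continuous fun w => ∫ x in (1:ℝ)..w, φ x :=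
    intervalIntegral.continuous_primitive hφint 1
  have hyc : ContinuousOn y (Icc 0 1) := hzc.continuousOn.congr hyz
  refine ⟨y, hyc, ?_, ?_⟩
  · intro w hw
    have hca : ContinuousAt y w := hyc.continuousAt (Icc_mem_nhds hw.1 hw.2)
    have hφc : ContinuousAt φ w :=
      ((Real.continuous_sqrt.continuousAt.comp hca).const_mul _).sub
        (hg.continuousAt.const_mul _)
    have := intervalIntegral.integral_hasDerivAt_right (hφint 1 w)
      hφmeas.stronglyMeasurable.stronglyMeasurableAtFilter hφc
    apply this.congr_of_eventuallyEq
    filter_upwards [Icc_mem_nhds hw.1 hw.2] with x hx using hyz x hx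
  · rw [hyz 1 (by simp)]; simp

lemma sol_exists {c : ℝ} (hc : 0 ≤ c) {g : ℝ → ℝ}
    (hg : ContinuousOn g (Icc 0 1)) : ∃ y, Sol c g y := by
  have hproj : ∀ w : ℝ, max 0 (min w 1) ∈ Icc (0:ℝ) 1 := fun w =>
    ⟨le_max_left _ _, max_le (by norm_num) (min_le_right _ _)⟩
  obtain ⟨M, hM⟩ := isCompact_Icc.exists_bound_of_continuousOn hg
  obtain ⟨y, hy1, hy2, hy3⟩ := sol_exists_cont (M := M) hc
    (g := fun w => g (max 0 (min w 1)))
    (hg.comp_continuous (by fun_prop) hproj) (fun w => hM _ (hproj w))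
  refine ⟨y, hy1, fun w hw => ?_, hy3⟩
  have := hy2 w hw
  beta_reduce at this
  rwa [min_eq_left hw.2.le, max_eq_right hw.1.le] at this

lemma front_sol {c : ℝ} (hc : 0 ≤ c) {g W y : ℝ → ℝ} (hW : IsFront g c W) (hy : Sol c g y) :
    y 0 ≤ 0 := by
  obtain ⟨hC, hode, hbot, htop, hneg⟩ := hW
  have hdW : Differentiable ℝ W := hC.differentiable (by norm_num)
  have hC1 : ContDiff ℝ 1 (deriv W) := by
    have h2 : ContDiff ℝ (1 + 1) W := by simpa [one_add_one_eq_two] using hC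
    exact (contDiff_succ_iff_deriv.1 h2).2.2
  have hdW' : Differentiable ℝ (deriv W) := hC1.differentiable (by norm_num)
  have hanti : StrictAnti W := strictAnti_of_deriv_neg hneg
  have hW0 : ∀ ξ, 0 < W ξ := fun ξ =>
    lt_of_le_of_lt (hanti.antitone.le_of_tendsto htop (ξ + 1)) (hanti (by linarith))
  have hW1 : ∀ ξ, W ξ < 1 := fun ξ =>
    lt_of_lt_of_le (hanti (by linarith : ξ - 1 < ξ)) (hanti.antitone.ge_of_tendsto hbot (ξ - 1))
  have hHd : ∀ ξ, HasDerivAt (fun ξ => y (W ξ) - (deriv W ξ) ^ 2)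
      (2 * c * deriv W ξ * (√(y (W ξ)) + deriv W ξ)) ξ := by
    intro ξ
    have h1 := (hy.2.1 (W ξ) ⟨hW0 ξ, hW1 ξ⟩).comp ξ (hdW ξ).hasDerivAt
    have h2 := ((hdW' ξ).hasDerivAt).pow 2
    refine (h1.sub h2).congr_deriv ?_
    have h3 : deriv (deriv W) ξ = - c * deriv W ξ - g (W ξ) := by linarith [hode ξ]
    rw [h3]; simp; ring
  have key : ∀ ξ, y (W ξ) ≤ (deriv W ξ) ^ 2 := by
    intro ξ
    by_contra hcon
    push Not at hcon
    let h : ℝ → ℝ := fun t => y (W (-t)) - (deriv W (-t)) ^ 2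
    have hd : ∀ t, HasDerivAt h
        (-(2 * c * deriv W (-t) * (√(y (W (-t))) + deriv W (-t)))) t := by
      intro t
      have := (hHd (-t)).comp t (hasDerivAt_neg t)
      exact this.congr_deriv (by ring)
    have hlow : ∀ t, -ξ ≤ t → h (-ξ) / 2 ≤ h t := by
      intro t ht
      refine barrier ht (fun x _ => (hd x).continuousAt.continuousWithinAt) (fun x _ => hd x) ?_ ?_
      · intro x _ hpos
        have h1 : (deriv W (-x)) ^ 2 < y (W (-x)) := by simp only [h] at hpos; linarith
        have h2 : - deriv W (-x) ≤ √(y (W (-x))) := by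
          apply Real.le_sqrt_of_sq_le; nlinarith
        have h3 := hneg (-x)
        have h4 : 0 ≤ c * (-deriv W (-x)) := mul_nonneg hc (by linarith)
        nlinarith [mul_nonneg h4 (by linarith : 0 ≤ √(y (W (-x))) + deriv W (-x))]
      · simp only [h, neg_neg]; linarith
    have hpos : 0 < h (-ξ) := by simp only [h, neg_neg]; linarith
    have hl : Tendsto (fun t : ℝ => y (W (-t))) atTop (nhds 0) := by
      have h1 : Tendsto (fun t : ℝ => W (-t)) atTop (nhdsWithin 1 (Icc 0 1)) :=
        tendsto_nhdsWithin_iff.2 ⟨hbot.comp tendsto_neg_atTop_atBot,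
          Eventually.of_forall fun t => ⟨(hW0 _).le, (hW1 _).le⟩⟩
      have := (hy.1 1 (by simp)).tendsto.comp h1
      rwa [hy.2.2] at this
    have : h (-ξ) / 2 ≤ 0 := by
      refine ge_of_tendsto hl ?_
      filter_upwards [eventually_ge_atTop (-ξ)] with t ht
      have := hlow t ht
      simp only [h] at this ⊢
      nlinarith [sq_nonneg (deriv W (-t))]
    linarith
  have hex : ∀ n : ℕ, ∃ ξ ∈ Ioo (n:ℝ) (n + 1), deriv W ξ = W (n + 1) - W n := by
    intro n
    obtain ⟨ξ, hξ, he⟩ := exists_deriv_eq_slope W (by linarith : (n:ℝ) < n + 1)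
      hdW.continuous.continuousOn hdW.differentiableOn
    exact ⟨ξ, hξ, by rw [he]; simp⟩
  choose ξ hξ hξd using hex
  have hξtop : Tendsto ξ atTop atTop :=
    tendsto_atTop_mono (fun n => (hξ n).1.le) tendsto_natCast_atTop_atTop
  have hdl : Tendsto (fun n => (deriv W (ξ n)) ^ 2) atTop (nhds 0) := by
    simp only [hξd]
    have h1 : Tendsto (fun n : ℕ => W (n + 1)) atTop (nhds 0) :=
      htop.comp (tendsto_atTop_add_const_right _ _ tendsto_natCast_atTop_atTop)
    have h2 : Tendsto (fun n : ℕ => W n) atTop (nhds 0) :=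
      htop.comp tendsto_natCast_atTop_atTop
    simpa using (h1.sub h2).pow 2
  have hyl : Tendsto (fun n => y (W (ξ n))) atTop (nhds (y 0)) := by
    have h1 : Tendsto (fun n => W (ξ n)) atTop (nhdsWithin 0 (Icc 0 1)) :=
      tendsto_nhdsWithin_iff.2 ⟨htop.comp hξtop,
        Eventually.of_forall fun t => ⟨(hW0 _).le, (hW1 _).le⟩⟩
    exact (hy.1 0 (by simp)).tendsto.comp h1
  exact le_of_tendsto_of_tendsto' hyl hdl (fun n => key _)

lemma sol_front {c M : ℝ} (hc : 0 < c) {g y : ℝ → ℝ} (hg : ContinuousOn g (Icc 0 1))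
    (hpos : ∀ w ∈ Ioo (0:ℝ) 1, 0 < g w) (hM0 : 0 ≤ M) (hM : ∀ w ∈ Icc (0:ℝ) 1, g w ≤ M * (1 - w))
    (hy : Sol c g y) (hy0 : y 0 ≤ 0) : ∃ W, IsFront g c W := by
  have hyp := sol_pos hy hpos
  have hynn := sol_nonneg hy hpos
  have hy00 : y 0 = 0 := le_antisymm hy0 (hynn 0 (by simp))
  let p : ℝ → ℝ := fun w => √(y w)
  have hpp : ∀ w ∈ Ioo (0:ℝ) 1, 0 < p w := fun w hw => Real.sqrt_pos.2 (hyp w hw)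
  have hpc : ContinuousOn p (Icc 0 1) := hy.1.sqrt
  have hpd : ∀ w ∈ Ioo (0:ℝ) 1, HasDerivAt p (c - g w / p w) w := by
    intro w hw
    refine ((hy.2.1 w hw).sqrt (hyp w hw).ne').congr_deriv ?_
    have := hpp w hw
    simp only [p] at this ⊢
    field_simp
  let A : ℝ := c + √M
  have hA : 0 < A := by positivity
  have hpA0 : ∀ w ∈ Icc (0:ℝ) 1, p w ≤ A * w := by
    have hm : MonotoneOn (fun w => c * w - p w) (Icc (0:ℝ) 1) := by
      have hd : ∀ x ∈ Ioo (0:ℝ) 1, HasDerivAt (fun w => c * w - p w) (g x / p x) x := by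
        intro x hx
        exact (((hasDerivAt_id x).const_mul c).sub (hpd x hx)).congr_deriv (by ring)
      apply monotoneOn_of_deriv_nonneg (convex_Icc 0 1)
      · exact ContinuousOn.sub (by fun_prop) hpc
      · rw [interior_Icc]
        exact fun x hx => (hd x hx).differentiableAt.differentiableWithinAt
      · rw [interior_Icc]
        intro x hx
        rw [(hd x hx).deriv]
        exact (div_pos (hpos x hx) (hpp x hx)).le
    intro w hw
    have := hm (by simp : (0:ℝ) ∈ Icc (0:ℝ) 1) hw hw.1
    have hp0 : p 0 = 0 := by simp [p, hy00]
    simp only [hp0] at this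
    have h2 : 0 ≤ √M * w := mul_nonneg (Real.sqrt_nonneg _) hw.1
    simp only [A]; nlinarith
  have hpA1 : ∀ w ∈ Icc (0:ℝ) 1, p w ≤ A * (1 - w) := by
    intro w hw
    have hcmp := comparison (h := fun w => y w - M * (1 - w) ^ 2)
      (h' := fun w => (2 * c * √(y w) - 2 * g w) + 2 * M * (1 - w))
      (hy.1.sub (by fun_prop)) (fun x hx => by
        have h1 : HasDerivAt (fun w : ℝ => M * (1 - w) ^ 2) (-(2 * M * (1 - x))) x :=
          ((((hasDerivAt_id x).const_sub 1).pow 2).const_mul M).congr_deriv (by simp; ring)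
        exact ((hy.2.1 x hx).sub h1).congr_deriv (by ring))
      (fun x hx _ => by
        have h1 : 0 ≤ 2 * c * √(y x) := by positivity
        linarith [hM x (Ioo_subset_Icc_self hx)])
      (by simp [hy.2.2]) w hw
    have h1w : 0 ≤ 1 - w := by linarith [hw.2]
    have h3 : p w ≤ √M * (1 - w) := by
      apply Real.sqrt_le_iff.2 ⟨by positivity, ?_⟩
      rw [mul_pow, Real.sq_sqrt hM0]; linarith
    have h4 : 0 ≤ c * (1 - w) := by positivity
    simp only [A]; nlinarith
  have hhalf : (1/2 : ℝ) ∈ Ioo (0:ℝ) 1 := by constructor <;> norm_num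
  let T : ℝ → ℝ := fun w => ∫ x in (1/2:ℝ)..w, (p x)⁻¹
  have hic : ContinuousOn (fun x => (p x)⁻¹) (Ioo 0 1) :=
    (hpc.mono Ioo_subset_Icc_self).inv₀ (fun x hx => (hpp x hx).ne')
  have hTd : ∀ w ∈ Ioo (0:ℝ) 1, HasDerivAt T (p w)⁻¹ w := by
    intro w hw
    apply intervalIntegral.integral_hasDerivAt_right
    · apply ContinuousOn.intervalIntegrable
      exact hic.mono (ordConnected_Ioo.uIcc_subset hhalf hw)
    · exact hic.stronglyMeasurableAtFilter isOpen_Ioo w hw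
    · exact hic.continuousAt (Ioo_mem_nhds hw.1 hw.2)
  have hThalf : T (1/2) = 0 := by simp [T]
  have hTc : ContinuousOn T (Ioo 0 1) := fun w hw => (hTd w hw).continuousAt.continuousWithinAt
  have hTm : StrictMonoOn T (Ioo 0 1) := by
    apply strictMonoOn_of_deriv_pos (convex_Ioo 0 1) hTc
    rw [interior_Ioo]
    intro x hx
    rw [(hTd x hx).deriv]
    exact inv_pos.2 (hpp x hx)
  have hm0 : MonotoneOn (fun w => T w - Real.log w / A) (Ioo (0:ℝ) 1) := by
    have hd : ∀ x ∈ Ioo (0:ℝ) 1, HasDerivAt (fun w => T w - Real.log w / A)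
        ((p x)⁻¹ - x⁻¹ / A) x := fun x hx =>
      (hTd x hx).sub ((Real.hasDerivAt_log hx.1.ne').div_const A)
    apply monotoneOn_of_deriv_nonneg (convex_Ioo 0 1)
    · exact fun x hx => (hd x hx).continuousAt.continuousWithinAt
    · rw [interior_Ioo]
      exact fun x hx => (hd x hx).differentiableAt.differentiableWithinAt
    · rw [interior_Ioo]
      intro x hx
      rw [(hd x hx).deriv, sub_nonneg, div_eq_mul_inv, ← mul_inv]
      apply inv_anti₀ (hpp x hx)
      rw [mul_comm]; exact hpA0 x (Ioo_subset_Icc_self hx)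
  have hm1 : MonotoneOn (fun w => T w + Real.log (1 - w) / A) (Ioo (0:ℝ) 1) := by
    have hd : ∀ x ∈ Ioo (0:ℝ) 1, HasDerivAt (fun w => T w + Real.log (1 - w) / A)
        ((p x)⁻¹ - (1 - x)⁻¹ / A) x := fun x hx => by
      have h1 : HasDerivAt (fun w : ℝ => 1 - w) (-1) x := by
        simpa using (hasDerivAt_id x).const_sub 1
      have h2 := (h1.log (sub_pos.2 hx.2).ne').div_const A
      exact ((hTd x hx).add h2).congr_deriv (by ring)
    apply monotoneOn_of_deriv_nonneg (convex_Ioo 0 1)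
    · exact fun x hx => (hd x hx).continuousAt.continuousWithinAt
    · rw [interior_Ioo]
      exact fun x hx => (hd x hx).differentiableAt.differentiableWithinAt
    · rw [interior_Ioo]
      intro x hx
      rw [(hd x hx).deriv, sub_nonneg, div_eq_mul_inv, ← mul_inv]
      apply inv_anti₀ (hpp x hx)
      rw [mul_comm]; exact hpA1 x (Ioo_subset_Icc_self hx)
  have hsurj : ∀ v : ℝ, ∃ w ∈ Ioo (0:ℝ) 1, T w = v := by
    intro v
    let a : ℝ := 1/2 * Real.exp (-(A * |v|))
    have hexp1 : Real.exp (-(A * |v|)) ≤ 1 := Real.exp_le_one_iff.2 (by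
      have : 0 ≤ A * |v| := by positivity
      linarith)
    have ha0 : 0 < a := by positivity
    have ha1 : a ≤ 1/2 := by simp only [a]; linarith
    have haI : a ∈ Ioo (0:ℝ) 1 := ⟨ha0, by linarith⟩
    have hbI : 1 - a ∈ Ioo (0:ℝ) 1 := ⟨by linarith, by linarith⟩
    have hlog : Real.log a = Real.log (1/2) - A * |v| := by
      simp only [a]
      rw [Real.log_mul (by norm_num) (Real.exp_ne_zero _), Real.log_exp]; ring
    have e1 : (Real.log (1/2) - A * |v|) / A = Real.log (1/2) / A - |v| := by field_simp
    have hTa : T a ≤ v := by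
      have := hm0 haI hhalf ha1
      simp only [hThalf, hlog, e1] at this
      linarith [neg_abs_le v]
    have hTb : v ≤ T (1 - a) := by
      have := hm1 hhalf hbI (by linarith)
      have e2 : (1:ℝ) - 1/2 = 1/2 := by norm_num
      simp only [hThalf, e2, sub_sub_cancel, hlog, e1] at this
      linarith [le_abs_self v]
    have hsub : Icc a (1 - a) ⊆ Ioo 0 1 := fun x hx =>
      ⟨ha0.trans_le hx.1, hx.2.trans_lt hbI.2⟩
    obtain ⟨w, hw, hwv⟩ := intermediate_value_Icc (by linarith : a ≤ 1 - a) (hTc.mono hsub)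
      ⟨hTa, hTb⟩
    exact ⟨w, hsub hw, hwv⟩
  let F : Ioo (0:ℝ) 1 → ℝ := fun w => T w
  have hFm : StrictMono F := fun a b hab => hTm a.2 b.2 hab
  have hFs : Function.Surjective F := fun v => by
    obtain ⟨w, hw, h⟩ := hsurj v
    exact ⟨⟨w, hw⟩, h⟩
  let e : Ioo (0:ℝ) 1 ≃o ℝ := hFm.orderIsoOfSurjective F hFs
  let V : ℝ → ℝ := fun v => (e.symm v : ℝ)
  have hVI : ∀ v, V v ∈ Ioo (0:ℝ) 1 := fun v => (e.symm v).2
  have hVc : Continuous V := continuous_subtype_val.comp e.symm.continuous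
  have hTV : ∀ v, T (V v) = v := fun v => e.apply_symm_apply v
  have hVm : Monotone V := fun a b hab => e.symm.monotone hab
  have hVd : ∀ v, HasDerivAt V (p (V v)) v := by
    intro v
    have := HasDerivAt.of_local_left_inverse hVc.continuousAt (hTd _ (hVI v))
      (inv_pos.2 (hpp _ (hVI v))).ne' (Eventually.of_forall hTV)
    simpa using this
  have hVr : range V = Ioo (0:ℝ) 1 := by
    ext w
    constructor
    · rintro ⟨v, rfl⟩; exact hVI v
    · intro hw
      exact ⟨e ⟨w, hw⟩, by simp [V]⟩
  have hV1 : Tendsto V atTop (nhds 1) :=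
    tendsto_atTop_isLUB hVm (by rw [hVr]; exact isLUB_Ioo (by norm_num))
  have hV0 : Tendsto V atBot (nhds 0) :=
    tendsto_atBot_isGLB hVm (by rw [hVr]; exact isGLB_Ioo (by norm_num))
  let W : ℝ → ℝ := fun ξ => V (-ξ)
  have hWI : ∀ ξ, W ξ ∈ Ioo (0:ℝ) 1 := fun ξ => hVI _
  have hWc : Continuous W := hVc.comp continuous_neg
  have hWd : ∀ ξ, HasDerivAt W (- p (W ξ)) ξ := fun ξ =>
    ((hVd (-ξ)).comp ξ (hasDerivAt_neg ξ)).congr_deriv (by simp [W])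
  have hW' : deriv W = fun ξ => - p (W ξ) := funext fun ξ => (hWd ξ).deriv
  have hWdd : ∀ ξ, HasDerivAt (deriv W) (c * p (W ξ) - g (W ξ)) ξ := by
    intro ξ
    rw [hW']
    refine (((hpd _ (hWI ξ)).comp ξ (hWd ξ)).neg).congr_deriv ?_
    have := hpp _ (hWI ξ)
    field_simp
  have hW'' : deriv (deriv W) = fun ξ => c * p (W ξ) - g (W ξ) := funext fun ξ => (hWdd ξ).deriv
  refine ⟨W, ?_, ?_, ?_, ?_, ?_⟩
  · have h1 : ContDiff ℝ 1 (deriv W) := by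
      rw [contDiff_one_iff_deriv]
      refine ⟨fun ξ => (hWdd ξ).differentiableAt, ?_⟩
      rw [hW'']
      exact ((hpc.comp_continuous hWc fun ξ => Ioo_subset_Icc_self (hWI ξ)).const_mul c).sub
        (hg.comp_continuous hWc fun ξ => Ioo_subset_Icc_self (hWI ξ))
    have h2 : ContDiff ℝ (1 + 1) W :=
      contDiff_succ_iff_deriv.2 ⟨fun ξ => (hWd ξ).differentiableAt, by simp, h1⟩
    simpa [one_add_one_eq_two] using h2
  · intro ξ
    rw [hW'', hW']; ring
  · exact hV1.comp tendsto_neg_atBot_atTop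
  · exact hV0.comp tendsto_neg_atTop_atBot
  · intro ξ
    rw [hW']
    simpa using hpp _ (hWI ξ)

lemma lip_bound {g : ℝ → ℝ} (hg : ContDiffOn ℝ 2 g (Icc 0 1)) (h1 : g 1 = 0) :
    ∃ M, 0 ≤ M ∧ ∀ w ∈ Icc (0:ℝ) 1, g w ≤ M * (1 - w) := by
  have hu : UniqueDiffOn ℝ (Icc (0:ℝ) 1) := uniqueDiffOn_Icc (by norm_num)
  have hc := hg.continuousOn_derivWithin hu (by norm_num)
  obtain ⟨M, hM⟩ := isCompact_Icc.exists_bound_of_continuousOn hc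
  refine ⟨M, (norm_nonneg _).trans (hM 0 (by simp)), fun w hw => ?_⟩
  have := (convex_Icc (0:ℝ) 1).norm_image_sub_le_of_norm_derivWithin_le
    (hg.differentiableOn (by norm_num)) hM (by simp : (1:ℝ) ∈ Icc (0:ℝ) 1) hw
  rw [h1, sub_zero, Real.norm_eq_abs, Real.norm_eq_abs, abs_sub_comm w 1,
    abs_of_nonneg (by linarith [hw.2] : 0 ≤ 1 - w)] at this
  exact (le_abs_self _).trans this

/-- Under (A1)-(A5) there is a threshold `s* ∈ [s₁, s₂)` such that the minimal speed is
`2` on `[0, s*]` and `> 2` on `(s*, ∞)`. -/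
theorem threshold_exists_scalar
    (f : ℝ → ℝ → ℝ) (cstar : ℝ → ℝ) (s₁ s₂ : ℝ)
    -- (A1) monostable condition, with ∂_w f(0;s) = 1
    (hA1 : ∀ s, 0 ≤ s →
      ContDiffOn ℝ 2 (fun w => f w s) (Icc 0 1) ∧
      f 0 s = 0 ∧ f 1 s = 0 ∧
      derivWithin (fun w => f w s) (Icc 0 1) 0 = 1 ∧
      derivWithin (fun w => f w s) (Icc 0 1) 1 < 0 ∧
      (∀ w ∈ Ioo (0:ℝ) 1, 0 < f w s))
    -- (A2) Lipschitz continuity in the parameter, for f, f', f''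
    (hA2 : ∃ L₀ > (0:ℝ), ∀ n : ℕ, n ≤ 2 → ∀ w ∈ Icc (0:ℝ) 1, ∀ sa sb : ℝ, 0 ≤ sa → 0 ≤ sb →
      |iteratedDerivWithin n (fun w => f w sa) (Icc 0 1) w -
        iteratedDerivWithin n (fun w => f w sb) (Icc 0 1) w| ≤ L₀ * |sa - sb|)
    -- (A3) monotonicity condition
    (hA3 : ∀ s sh : ℝ, 0 ≤ s → s < sh →
      (∀ w ∈ Ioo (0:ℝ) 1, f w s < f w sh) ∧
      iteratedDerivWithin 2 (fun w => f w s) (Icc 0 1) 0 <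
        iteratedDerivWithin 2 (fun w => f w sh) (Icc 0 1) 0)
    -- minimal-speed characterization: fronts exist exactly for speeds c ≥ c*(s) ≥ 2
    (hmin : ∀ s, 0 ≤ s → 2 ≤ cstar s ∧
      ∀ c, (∃ W : ℝ → ℝ, IsFront (fun w => f w s) c W) ↔ cstar s ≤ c)
    -- (A4) KPP condition at s₁, hence linear selection there
    (hs₁ : 0 < s₁) (hA4 : ∀ w ∈ Icc (0:ℝ) 1, f w s₁ ≤ w) (hc₁ : cstar s₁ = 2)
    -- (A5) nonlinear selection at some s₂ > s₁
    (hs₂ : s₁ < s₂) (hc₂ : 2 < cstar s₂) :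
    ∃ sstar : ℝ, s₁ ≤ sstar ∧ sstar < s₂ ∧
      (∀ s, 0 ≤ s → s ≤ sstar → cstar s = 2) ∧
      (∀ s, sstar < s → 2 < cstar s) := by
  have hcont : ∀ s, 0 ≤ s → ContinuousOn (fun w => f w s) (Icc 0 1) := fun s hs =>
    (hA1 s hs).1.continuousOn
  have hex : ∀ s, 0 ≤ s → ∃ y, Sol 2 (fun w => f w s) y := fun s hs =>
    sol_exists (by norm_num) (hcont s hs)
  choose! Y hY using hex
  have hiff : ∀ s, 0 ≤ s → (cstar s = 2 ↔ Y s 0 ≤ 0) := by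
    intro s hs
    obtain ⟨hC, -, hf1, -, -, hpos⟩ := hA1 s hs
    obtain ⟨h2, hfr⟩ := hmin s hs
    constructor
    · intro he
      obtain ⟨W, hW⟩ := (hfr 2).2 he.le
      exact front_sol (by norm_num) hW (hY s hs)
    · intro h
      obtain ⟨M, hM0, hM⟩ := lip_bound hC hf1
      exact le_antisymm ((hfr 2).1
        (sol_front (by norm_num) (hcont s hs) hpos hM0 hM (hY s hs) h)) h2
  have hmono : ∀ s t, 0 ≤ s → s ≤ t → cstar t = 2 → cstar s = 2 := by
    intro s t hs hst ht
    rcases hst.eq_or_lt with rfl | hlt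
    · exact ht
    have ht0 := hs.trans hst
    rw [hiff s hs]
    rw [hiff t ht0] at ht
    have := sol_compare (by norm_num) (hY s hs) (hY t ht0) le_rfl
      (fun w hw => by simpa using ((hA3 s t hs hlt).1 w hw).le)
    linarith
  obtain ⟨L, hL, hLip⟩ := hA2
  let S : Set ℝ := {s | 0 ≤ s ∧ cstar s = 2}
  have hS1 : s₁ ∈ S := ⟨hs₁.le, hc₁⟩
  have hSb : ∀ s ∈ S, s ≤ s₂ := by
    intro s hs
    by_contra hcon
    push Not at hcon
    have := hmono s₂ s (by linarith) hcon.le hs.2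
    linarith
  have hbdd : BddAbove S := ⟨s₂, hSb⟩
  have hle : s₁ ≤ sSup S := le_csSup hbdd hS1
  have h0 : 0 ≤ sSup S := hs₁.le.trans hle
  have hstar : cstar (sSup S) = 2 := by
    rw [hiff _ h0]
    apply le_of_forall_pos_le_add
    intro η hη
    obtain ⟨t, ht, htlt⟩ := exists_lt_of_lt_csSup ⟨s₁, hS1⟩
      (by linarith [div_pos hη (by positivity : 0 < 2 * L)] : sSup S - η / (2 * L) < sSup S)
    have htle : t ≤ sSup S := le_csSup hbdd ht
    have := sol_compare (ε := L * (sSup S - t)) (by norm_num) (hY _ h0) (hY t ht.1)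
      (mul_nonneg hL.le (by linarith)) (fun w hw => by
        have := hLip 0 (by norm_num) w (Ioo_subset_Icc_self hw) (sSup S) t h0 ht.1
        simp only [iteratedDerivWithin_zero] at this
        rw [abs_of_nonneg (by linarith : 0 ≤ sSup S - t)] at this
        linarith [le_abs_self (f w (sSup S) - f w t)])
    have h3 := (hiff t ht.1).1 ht.2
    have h4 : sSup S - t < η / (2 * L) := by linarith
    rw [lt_div_iff₀ (by positivity)] at h4
    linarith
  refine ⟨sSup S, hle, ?_, ?_, ?_⟩
  · rcases (csSup_le ⟨s₁, hS1⟩ hSb).lt_or_eq with h | h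
    · exact h
    · rw [h] at hstar; linarith
  · intro s hs hss
    exact hmono s _ hs hss hstar
  · intro s hs
    have hs0 : 0 ≤ s := h0.trans hs.le
    rcases (hmin s hs0).1.lt_or_eq with h | h
    · exact h
    · exact absurd (le_csSup hbdd (show s ∈ S from ⟨hs0, h.symm⟩)) (not_le.2 hs)
end
end

section
/- Let c > 0, let B : ℝ → ℝ be a continuous function having finite limits B(±∞) := lim_{ξ→±∞} B(ξ), and let z : ℝ → ℝ be a locally integrable measurable function satisfying c·z(ξ) = ∫_ℝ J(y) exp(∫_{ξ−y}^{ξ} z(s) ds) dy + B(ξ) for all ξ ∈ ℝ. Then z is uniformly continuous and bounded, the limits ω± := lim_{ξ→±∞} z(ξ) exist, and they are real roots of the characteristic equations c·ω⁺ = ∫_ℝ J(y) e^{ω⁺ y} dy + B(+∞) and c·ω⁻ = ∫_ℝ J(y) e^{ω⁻ y} dy + B(−∞). -/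
open Filter Asymptotics MeasureTheory Set intervalIntegral

noncomputable section

/-- A continuous, nonnegative, even, compactly supported dispersal kernel of total mass 1. -/
def IsKernel (J : ℝ → ℝ) : Prop :=
  Continuous J ∧ (∀ x, 0 ≤ J x) ∧ (∀ x, J (-x) = J x) ∧
  HasCompactSupport J ∧ (∫ x, J x) = 1

/-- Differentiation of a compactly supported parametric integral. -/
theorem aux_deriv_param (K : ℝ → ℝ) (hK : Continuous K) (hKc : HasCompactSupport K)
    (F F' : ℝ → ℝ → ℝ) (hF : Continuous (Function.uncurry F))
    (hF' : Continuous (Function.uncurry F'))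
    (hd : ∀ x y, HasDerivAt (fun x => F x y) (F' x y) x) (x₀ : ℝ) :
    HasDerivAt (fun x => ∫ y, K y * F x y) (∫ y, K y * F' x₀ y) x₀ := by
  have hcont : ∀ G : ℝ → ℝ → ℝ, Continuous (Function.uncurry G) → ∀ x, Continuous (fun y => G x y) :=
    fun G hG x => hG.comp (by fun_prop : Continuous fun y : ℝ => (x, y))
  have hcomp : IsCompact (Metric.closedBall x₀ 1 ×ˢ tsupport K) :=
    (isCompact_closedBall x₀ 1).prod hKc
  obtain ⟨C, hC⟩ := hcomp.exists_bound_of_continuousOn hF'.continuousOn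
  refine (_root_.hasDerivAt_integral_of_dominated_loc_of_deriv_le (μ := volume)
    (F := fun x y => K y * F x y) (F' := fun x y => K y * F' x y)
    (s := Metric.closedBall x₀ 1) (bound := fun y => C * ‖K y‖)
    (Metric.closedBall_mem_nhds x₀ one_pos) ?_ ?_ ?_ ?_ ?_ ?_).2
  · exact Eventually.of_forall fun x => (hK.mul (hcont F hF x)).aestronglyMeasurable
  · exact (hK.mul (hcont F hF x₀)).integrable_of_hasCompactSupport hKc.mul_right
  · exact (hK.mul (hcont F' hF' x₀)).aestronglyMeasurable
  · refine Eventually.of_forall fun y x hx => ?_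
    by_cases hy : y ∈ tsupport K
    · have := hC (x, y) ⟨hx, hy⟩
      rw [norm_mul, mul_comm]
      exact mul_le_mul_of_nonneg_right this (norm_nonneg _)
    · simp [image_eq_zero_of_notMem_tsupport hy]
  · exact (hK.norm.const_mul C |>.integrable_of_hasCompactSupport (hKc.norm.mul_left))
  · exact Eventually.of_forall fun y x _ => (hd x y).const_mul (K y)

theorem aux_cont_param (K : ℝ → ℝ) (hK : Continuous K) (hKc : HasCompactSupport K)
    (F : ℝ → ℝ → ℝ) (hF : Continuous (Function.uncurry F)) :
    Continuous (fun x => ∫ y, K y * F x y) := by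
  have h := continuous_parametric_integral_of_continuous (μ := (volume : Measure ℝ))
    (f := fun x y => K y * F x y) (by
      have : Continuous fun p : ℝ × ℝ => K p.2 * (Function.uncurry F) p := by fun_prop
      exact this) (s := tsupport K) hKc
  refine h.congr fun x => ?_
  apply setIntegral_eq_integral_of_forall_compl_eq_zero
  intro y hy
  simp [image_eq_zero_of_notMem_tsupport hy]

theorem aux_kernel_pos (J : ℝ → ℝ) (hJ : IsKernel J) :
    ∃ a b j : ℝ, 0 < a ∧ a < b ∧ 0 < j ∧ ∀ y ∈ Icc a b, j ≤ J y := by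
  obtain ⟨hc, h0, he, hs, h1⟩ := hJ
  have hex : ∃ y, 0 < J y := by
    by_contra! h
    have : J = fun _ => 0 := funext fun y => le_antisymm (h y) (h0 y)
    rw [this] at h1
    simp at h1
  have hex2 : ∃ y, 0 ≤ y ∧ 0 < J y := by
    obtain ⟨y, hy⟩ := hex
    rcases le_total 0 y with h | h
    · exact ⟨y, h, hy⟩
    · exact ⟨-y, by linarith, by rw [he]; exact hy⟩
  obtain ⟨y, hy0, hy⟩ := hex2
  have hev : ∀ᶠ t in nhds y, J y / 2 < J t :=
    hc.continuousAt.eventually_const_lt (by linarith)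
  obtain ⟨ε, hε, hb⟩ := Metric.eventually_nhds_iff.1 hev
  refine ⟨y + ε / 4, y + ε / 2, J y / 2, by linarith, by linarith, by linarith, ?_⟩
  intro t ht
  refine (hb ?_).le
  rw [Real.dist_eq, abs_of_nonneg (by linarith [ht.1])]
  linarith [ht.2]

/-- Support bound. -/
theorem aux_kernel_supp (J : ℝ → ℝ) (hJ : HasCompactSupport J) :
    ∃ R : ℝ, 0 < R ∧ ∀ y, R < |y| → J y = 0 := by
  obtain ⟨R, hR⟩ := hJ.isCompact.isBounded.subset_closedBall 0
  refine ⟨max R 1, by positivity, fun y hy => ?_⟩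
  apply image_eq_zero_of_notMem_tsupport
  intro h
  have := hR h
  rw [Metric.mem_closedBall, dist_zero_right, Real.norm_eq_abs] at this
  linarith [le_max_left R 1]

/-- primitive -/
def auxP (f : ℝ → ℝ) (x : ℝ) : ℝ := ∫ s in (0 : ℝ)..x, f s

theorem aux_prim (f : ℝ → ℝ) (hf : Continuous f) (x : ℝ) :
    HasDerivAt (auxP f) (f x) x :=
  integral_hasDerivAt_right (hf.intervalIntegrable _ _)
    (hf.stronglyMeasurableAtFilter _ _) hf.continuousAt

theorem aux_prim_cont (f : ℝ → ℝ) (hf : Continuous f) :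
    Continuous (auxP f) :=
  continuous_iff_continuousAt.2 fun x => (aux_prim f hf x).continuousAt

theorem aux_prim_sub (f : ℝ → ℝ) (hf : Continuous f) (x y : ℝ) :
    (∫ s in x..y, f s) = (auxP f y) - auxP f x :=
  (integral_interval_sub_left (hf.intervalIntegrable _ _) (hf.intervalIntegrable _ _)).symm

theorem aux_deriv_exp (J : ℝ → ℝ) (hJ : IsKernel J) (f : ℝ → ℝ) (hf : Continuous f) (x : ℝ) :
    HasDerivAt (fun x => ∫ y, J y * Real.exp (∫ s in (x - y)..x, f s))
      (∫ y, J y * (Real.exp (∫ s in (x - y)..x, f s) * (f x - f (x - y)))) x := by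
  have hZ := aux_prim_cont f hf
  have hD := aux_prim f hf
  simp only [aux_prim_sub f hf]
  set Z := auxP f with hZdef
  refine aux_deriv_param J hJ.1 hJ.2.2.2.1 (fun x y => Real.exp (Z x - Z (x - y)))
    (fun x y => Real.exp (Z x - Z (x - y)) * (f x - f (x - y))) ?_ ?_ ?_ x
  · unfold Function.uncurry; fun_prop
  · unfold Function.uncurry; fun_prop
  · intro x y
    refine HasDerivAt.exp ?_
    refine (hD x).sub ?_
    exact (hD (x - y)).comp_sub_const x y

/-- Solution of the limiting equation. -/
def AuxSol (J : ℝ → ℝ) (c b : ℝ) (f : ℝ → ℝ) : Prop :=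
  Continuous f ∧ ∀ ξ, c * f ξ = (∫ y, J y * Real.exp (∫ s in (ξ - y)..ξ, f s)) + b

theorem AuxSol.translate {J : ℝ → ℝ} {c b : ℝ} {f : ℝ → ℝ} (h : AuxSol J c b f) (t : ℝ) :
    AuxSol J c b (fun x => f (x + t)) := by
  refine ⟨h.1.comp (by fun_prop), fun ξ => ?_⟩
  rw [h.2]
  congr 2
  ext y
  rw [integral_comp_add_right (fun s => f s)]
  congr 4
  ring

theorem AuxSol.const_of_extr_step {J : ℝ → ℝ} (hJ : IsKernel J) {c b : ℝ} {f : ℝ → ℝ}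
    (h : AuxSol J c b f) (x₀ : ℝ) (hx : (∀ x, f x ≤ f x₀) ∨ (∀ x, f x₀ ≤ f x)) (y : ℝ)
    (hy : 0 < J y) : f (x₀ - y) = f x₀ := by
  have hd : HasDerivAt (fun x => c * f x)
      (∫ y, J y * (Real.exp (∫ s in (x₀ - y)..x₀, f s) * (f x₀ - f (x₀ - y)))) x₀ := by
    have := (aux_deriv_exp J hJ f h.1 x₀).add_const b
    refine this.congr_of_eventuallyEq (Eventually.of_forall fun x => ?_)
    simp [h.2 x]
  have hext : IsLocalExtr (fun x => c * f x) x₀ := by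
    rcases hx with hx | hx <;> rcases le_total 0 c with hc | hc
    · exact Or.inr (Eventually.of_forall fun x => mul_le_mul_of_nonneg_left (hx x) hc)
    · exact Or.inl (Eventually.of_forall fun x => mul_le_mul_of_nonpos_left (hx x) hc)
    · exact Or.inl (Eventually.of_forall fun x => mul_le_mul_of_nonneg_left (hx x) hc)
    · exact Or.inr (Eventually.of_forall fun x => mul_le_mul_of_nonpos_left (hx x) hc)
  have h0 := hext.hasDerivAt_eq_zero hd
  have hf := h.1
  have hZ := aux_prim_cont f hf
  have hcont : Continuous fun y => J y * (Real.exp (∫ s in (x₀ - y)..x₀, f s) * (f x₀ - f (x₀ - y))) := by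
    simp only [aux_prim_sub f hf]
    have := hJ.1
    fun_prop
  have hsupp : HasCompactSupport fun y =>
      J y * (Real.exp (∫ s in (x₀ - y)..x₀, f s) * (f x₀ - f (x₀ - y))) :=
    hJ.2.2.2.1.mul_right
  by_contra hne
  have hne' : J y * (Real.exp (∫ s in (x₀ - y)..x₀, f s) * (f x₀ - f (x₀ - y))) ≠ 0 := by
    refine mul_ne_zero hy.ne' (mul_ne_zero (Real.exp_ne_zero _) ?_)
    exact sub_ne_zero.2 (Ne.symm hne)
  rcases hx with hx | hx
  · have := hcont.integral_pos_of_hasCompactSupport_nonneg_nonzero (μ := volume) hsupp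
      (fun t => mul_nonneg (hJ.2.1 t) (mul_nonneg (Real.exp_pos _).le (by linarith [hx (x₀ - t)]))) hne'
    linarith
  · have := hcont.neg.integral_pos_of_hasCompactSupport_nonneg_nonzero (μ := volume) hsupp.neg
      (fun t => by
        have h1 := mul_nonneg (hJ.2.1 t) (mul_nonneg (Real.exp_pos (∫ s in (x₀ - t)..x₀, f s)).le
          (by linarith [hx (x₀ - t)] : 0 ≤ f (x₀ - t) - f x₀))
        simp only [Pi.zero_apply, Pi.neg_apply]
        linarith) (neg_ne_zero.2 hne')
    simp only [Pi.neg_apply, MeasureTheory.integral_neg] at this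
    linarith

theorem AuxSol.const_of_extr {J : ℝ → ℝ} (hJ : IsKernel J) {c b : ℝ} {f : ℝ → ℝ}
    (h : AuxSol J c b f) (hx : (∀ x, f x ≤ f 0) ∨ (∀ x, f 0 ≤ f x)) :
    ∀ x, f x = f 0 := by
  obtain ⟨a, b', j, ha, hab, hj, hJj⟩ := aux_kernel_pos J hJ
  have hpos : ∀ y ∈ Icc a b', 0 < J y := fun y hy => hj.trans_le (hJj y hy)
  have key : ∀ x₀, f x₀ = f 0 → ∀ y, 0 < J y → f (x₀ - y) = f 0 := by
    intro x₀ h0 y hy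
    rw [← h0]
    refine h.const_of_extr_step hJ x₀ ?_ y hy
    rw [h0]; exact hx
  have key2 : ∀ x₀, f x₀ = f 0 → ∀ t ∈ Icc (-(b' - a)) (b' - a), f (x₀ + t) = f 0 := by
    intro x₀ h0 t ht
    rcases le_total 0 t with h1 | h1
    · have h2 := key x₀ h0 a (hpos a ⟨le_rfl, hab.le⟩)
      have h3 := key _ h2 (-(a + t)) (by
        rw [hJ.2.2.1]; exact hpos _ ⟨by linarith, by linarith [ht.2]⟩)
      rw [← h3]; congr 1; ring
    · have h2 := key x₀ h0 (a - t) (hpos _ ⟨by linarith, by linarith [ht.1]⟩)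
      have h3 := key _ h2 (-a) (by
        rw [hJ.2.2.1]; exact hpos _ ⟨by linarith, by linarith [ht.2]⟩)
      rw [← h3]; congr 1; ring
  have key3 : ∀ n : ℕ, ∀ t ∈ Icc (-(b' - a)) (b' - a), f (n * t) = f 0 := by
    intro n t ht
    induction n with
    | zero => simp
    | succ k ih =>
      have := key2 _ ih t ht
      rw [← this]; push_cast; congr 1; ring
  intro x
  obtain ⟨n, hn⟩ := exists_nat_gt (|x| / (b' - a))
  have hba : 0 < b' - a := by linarith
  have hn0 : (0 : ℝ) < n := lt_of_le_of_lt (by positivity) hn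
  have hle : |x / n| ≤ b' - a := by
    rw [abs_div, abs_of_pos hn0, div_le_iff₀ hn0]
    rw [div_lt_iff₀ hba] at hn
    linarith
  have := key3 n (x / n) (abs_le.1 hle)
  rw [← this]; congr 1; field_simp

theorem AuxSol.root_of_const {J : ℝ → ℝ} {c b : ℝ} {f : ℝ → ℝ}
    (h : AuxSol J c b f) (hx : ∀ x, f x = f 0) :
    c * f 0 = (∫ y, J y * Real.exp (f 0 * y)) + b := by
  have h1 := h.2 0
  rw [h1]
  congr 3
  ext y
  congr 2
  rw [intervalIntegral.integral_congr (g := fun _ => f 0) (fun s _ => hx s)]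
  simp [mul_comm]

theorem aux_prim_zero (f : ℝ → ℝ) : auxP f 0 = 0 := by simp [auxP]

theorem AuxSol.no_up {J : ℝ → ℝ} (hJ : IsKernel J) {c b : ℝ} {f : ℝ → ℝ}
    (h : AuxSol J c b f) (l1 l2 θ : ℝ) (h1 : l1 < θ) (h2 : θ < l2)
    (hr1 : c * l1 = (∫ y, J y * Real.exp (l1 * y)) + b)
    (hr2 : c * l2 = (∫ y, J y * Real.exp (l2 * y)) + b)
    (hu : ∀ x, f x ≤ l2)
    (hθ : ∀ x, 0 ≤ x → θ ≤ f x) (h0 : f 0 = θ) : False := by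
  have hf := h.1
  have hPc := aux_prim_cont f hf
  have hPd := aux_prim f hf
  have hJc := hJ.1
  have hJs := hJ.2.2.2.1
  obtain ⟨R, hR, hsupp⟩ := aux_kernel_supp J hJs
  set g : ℝ → ℝ := fun x => Real.exp (-(auxP f x - l1 * x)) with hg
  have hgpos : ∀ x, 0 < g x := fun x => Real.exp_pos _
  have hgd : ∀ x, HasDerivAt g (-(f x - l1) * g x) x := by
    intro x
    have := (((hPd x).sub ((hasDerivAt_id x).const_mul l1)).neg).exp
    refine HasDerivAt.congr_deriv (f := g) this ?_
    change g x * -(f x - l1 * 1) = _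
    ring
  have hgc : Continuous g := by fun_prop
  set K : ℝ → ℝ := fun y => J y * Real.exp (l1 * y) with hK
  have hKc : Continuous K := by fun_prop
  have hKs : HasCompactSupport K := hJs.mul_right
  have hK0 : ∀ y, 0 ≤ K y := fun y => mul_nonneg (hJ.2.1 y) (Real.exp_pos _).le
  have hGc := aux_prim_cont g hgc
  have hGd := aux_prim g hgc
  have hint : ∀ F : ℝ → ℝ, Continuous F → Integrable (fun y => K y * F y) := fun F hF =>
    (hKc.mul hF).integrable_of_hasCompactSupport hKs.mul_right
  have hKint : Integrable K := hKc.integrable_of_hasCompactSupport hKs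
  set G := auxP g with hG
  have heq : ∀ x, c * (-(f x - l1) * g x) = ∫ y, K y * (g x - g (x - y)) := by
    intro x
    have e1 : (∫ y, J y * Real.exp (∫ s in (x - y)..x, f s)) * g x = ∫ y, K y * g (x - y) := by
      rw [← MeasureTheory.integral_mul_const]
      congr 1
      ext y
      simp only [hK, hg]
      rw [aux_prim_sub f hf, mul_assoc, mul_assoc, ← Real.exp_add, ← Real.exp_add]
      congr 2
      ring
    have e2 : ∫ y, K y * (g x - g (x - y)) = (∫ y, K y) * g x - ∫ y, K y * g (x - y) := by
      rw [← MeasureTheory.integral_mul_const, ← MeasureTheory.integral_sub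
        (hKint.mul_const _) (hint _ (by fun_prop))]
      congr 1
      ext y
      ring
    rw [e2, ← e1]
    have := h.2 x
    linear_combination (-g x) * this + g x * hr1
  set I : ℝ → ℝ := fun x => c * g x - ∫ y, K y * (G x - G (x - y)) with hI
  have hId : ∀ x, HasDerivAt I 0 x := by
    intro x
    have hd := aux_deriv_param K hKc hKs (fun x y => G x - G (x - y))
      (fun x y => g x - g (x - y)) (by unfold Function.uncurry; fun_prop)
      (by unfold Function.uncurry; fun_prop)
      (fun x y => (hGd x).sub ((hGd (x - y)).comp_sub_const x y)) x
    have := ((hgd x).const_mul c).sub hd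
    refine HasDerivAt.congr_deriv (f := I) this ?_
    rw [heq x]; ring
  have hIc : ∀ x, I 0 = I x := fun x =>
    is_const_of_deriv_eq_zero (fun x => (hId x).differentiableAt) (fun x => (hId x).deriv) 0 x
  -- decay
  have hgle : ∀ x, 0 ≤ x → g x ≤ Real.exp (-((θ - l1) * x)) := by
    intro x hx
    apply Real.exp_le_exp.2
    have : ∫ s in (0 : ℝ)..x, θ ≤ ∫ s in (0 : ℝ)..x, f s :=
      intervalIntegral.integral_mono_on hx (by simp) (hf.intervalIntegrable _ _)
        (fun s hs => hθ s hs.1)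
    simp at this
    have h3 : x * θ ≤ auxP f x := this
    nlinarith
  set C : ℝ := |c| + (∫ y, K y) * R with hC
  have hIle : ∀ x, R ≤ x → |I 0| ≤ C * Real.exp (-((θ - l1) * (x - R))) := by
    intro x hx
    rw [hIc x]
    set E := Real.exp (-((θ - l1) * (x - R))) with hE
    have hgE : ∀ s, x - R ≤ s → g s ≤ E := by
      intro s hs
      refine (hgle s (by linarith)).trans (Real.exp_le_exp.2 ?_)
      nlinarith
    have b1 : |c * g x| ≤ |c| * E := by
      rw [abs_mul, abs_of_pos (hgpos x)]
      exact mul_le_mul_of_nonneg_left (hgE x (by linarith)) (abs_nonneg c)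
    have b2 : |∫ y, K y * (G x - G (x - y))| ≤ (∫ y, K y) * (R * E) := by
      rw [← MeasureTheory.integral_mul_const, ← Real.norm_eq_abs]
      refine MeasureTheory.norm_integral_le_of_norm_le (hKint.mul_const _)
        (Eventually.of_forall fun y => ?_)
      rw [norm_mul, Real.norm_of_nonneg (hK0 y)]
      by_cases hy : R < |y|
      · simp [hK, hsupp y hy]
      · push Not at hy
        refine mul_le_mul_of_nonneg_left ?_ (hK0 y)
        have hy' := abs_le.1 hy
        rw [hG, ← aux_prim_sub g hgc]
        have := intervalIntegral.norm_integral_le_of_norm_le_const (a := x - y) (b := x) (f := g)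
          (C := E) (fun s hs => by
            rw [Real.norm_of_nonneg (hgpos s).le]
            apply hgE
            rcases Set.mem_uIoc.1 hs with hs | hs <;> linarith [hs.1])
        refine this.trans ?_
        have : |x - (x - y)| ≤ R := by simpa using hy
        nlinarith [Real.exp_pos (-((θ - l1) * (x - R)))]
    calc |I x| ≤ |c * g x| + |∫ y, K y * (G x - G (x - y))| := abs_sub _ _
      _ ≤ |c| * E + (∫ y, K y) * (R * E) := add_le_add b1 b2
      _ = C * E := by rw [hC]; ring
  have hI0 : I 0 = 0 := by
    have ht : Tendsto (fun x : ℝ => C * Real.exp (-((θ - l1) * (x - R)))) atTop (nhds (C * 0)) := by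
      refine Tendsto.const_mul C ?_
      refine Real.tendsto_exp_neg_atTop_nhds_zero.comp ?_
      exact (tendsto_atTop_add_const_right atTop (-R) tendsto_id).const_mul_atTop (by linarith)
    have := ge_of_tendsto ht ((eventually_ge_atTop R).mono hIle)
    rw [mul_zero] at this
    exact abs_eq_zero.1 (le_antisymm this (abs_nonneg _))
  -- comparison
  set d := l2 - l1 with hd
  have hdpos : 0 < d := by linarith
  have hgs_neg : ∀ s, s < 0 → g s < Real.exp (-d * s) := by
    intro s hs
    apply Real.exp_lt_exp.2
    have : ∫ t in s..0, f t < ∫ t in s..0, l2 :=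
      intervalIntegral.integral_lt_integral_of_continuousOn_of_le_of_exists_lt hs
        hf.continuousOn continuousOn_const (fun t _ => hu t)
        ⟨0, ⟨hs.le, le_rfl⟩, by linarith⟩
    rw [aux_prim_sub f hf, aux_prim_zero] at this
    simp at this
    rw [hd]
    nlinarith
  have hgs_pos : ∀ s, 0 ≤ s → Real.exp (-d * s) ≤ g s := by
    intro s hs
    apply Real.exp_le_exp.2
    have : ∫ t in (0 : ℝ)..s, f t ≤ ∫ t in (0 : ℝ)..s, l2 :=
      intervalIntegral.integral_mono_on hs (hf.intervalIntegrable _ _) (by simp)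
        (fun t _ => hu t)
    rw [aux_prim_sub f hf, aux_prim_zero] at this
    simp at this
    rw [hd]
    nlinarith
  have hec : Continuous fun s : ℝ => Real.exp (-d * s) := by fun_prop
  have hexpint : ∀ y, ∫ s in (-y)..0, Real.exp (-d * s) = (Real.exp (d * y) - 1) / d := by
    intro y
    have hder : ∀ s ∈ Set.uIcc (-y) 0, HasDerivAt (fun s => -Real.exp (-d * s) / d)
        (Real.exp (-d * s)) s := by
      intro s _
      have := (((hasDerivAt_id s).const_mul (-d)).exp).neg.div_const d
      refine HasDerivAt.congr_deriv (f := fun s => -Real.exp (-d * s) / d) this ?_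
      change -(Real.exp (-d * s) * (-d * 1)) / d = _
      field_simp
    rw [intervalIntegral.integral_eq_sub_of_hasDerivAt hder (hec.intervalIntegrable _ _)]
    simp
    ring
  have hle : ∀ y, ∫ s in (-y)..0, g s ≤ (Real.exp (d * y) - 1) / d := by
    intro y
    rw [← hexpint]
    rcases le_total 0 y with hy | hy
    · refine intervalIntegral.integral_mono_on (by linarith) (hgc.intervalIntegrable _ _)
        (hec.intervalIntegrable _ _) fun s hs => ?_
      rcases hs.2.lt_or_eq with h | h
      · exact (hgs_neg s h).le
      · rw [h]; simp [hg, aux_prim_zero]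
    · rw [intervalIntegral.integral_symm 0 (-y), intervalIntegral.integral_symm 0 (-y)]
      refine neg_le_neg ?_
      exact intervalIntegral.integral_mono_on (by linarith) 
        (hec.intervalIntegrable _ _) (hgc.intervalIntegrable _ _) fun s hs => hgs_pos s hs.1
  obtain ⟨a, b', j, ha, hab, hj, hJj⟩ := aux_kernel_pos J hJ
  have hlt : ∫ s in (-a)..0, g s < (Real.exp (d * a) - 1) / d := by
    rw [← hexpint]
    refine intervalIntegral.integral_lt_integral_of_continuousOn_of_le_of_exists_lt (by linarith)
      hgc.continuousOn hec.continuousOn (fun s hs => ?_) ⟨-a, ⟨le_rfl, by linarith⟩,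
        hgs_neg _ (by linarith)⟩
    rcases hs.2.lt_or_eq with h | h
    · exact (hgs_neg s h).le
    · rw [h]; simp [hg, aux_prim_zero]
  have hNc : Continuous fun y => K y * ((Real.exp (d * y) - 1) / d - (G 0 - G (0 - y))) := by
    fun_prop
  have hGy : ∀ y, G 0 - G (0 - y) = ∫ s in (-y)..0, g s := by
    intro y
    rw [aux_prim_sub g hgc, zero_sub]
  have hKa : 0 < K a := mul_pos (hj.trans_le (hJj a ⟨le_rfl, hab.le⟩)) (Real.exp_pos _)
  have hpos := hNc.integral_pos_of_hasCompactSupport_nonneg_nonzero (μ := volume) hKs.mul_right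
    (x := a) (fun y => mul_nonneg (hK0 y) (by rw [hGy]; linarith [hle y])) (by
      rw [hGy]
      exact (mul_pos hKa (by linarith)).ne')
  have hsplit : ∫ y, K y * ((Real.exp (d * y) - 1) / d - (G 0 - G (0 - y))) =
      ((∫ y, J y * Real.exp (l2 * y)) - ∫ y, K y) / d - ∫ y, K y * (G 0 - G (0 - y)) := by
    have hl2 : Integrable (fun y => J y * Real.exp (l2 * y)) :=
      (by fun_prop : Continuous fun y => J y * Real.exp (l2 * y)).integrable_of_hasCompactSupport
        hJs.mul_right
    rw [← MeasureTheory.integral_sub hl2 hKint,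
      ← MeasureTheory.integral_div, ← MeasureTheory.integral_sub _ (hint _ (by fun_prop))]
    · congr 1
      ext y
      have : Real.exp (l2 * y) = Real.exp (l1 * y) * Real.exp (d * y) := by
        rw [← Real.exp_add]; congr 1; rw [hd]; ring
      simp only [hK]
      rw [this]; ring
    · have := (hint (fun y => (Real.exp (d * y) - 1) / d) (by fun_prop))
      refine this.congr (Eventually.of_forall fun y => ?_)
      have : Real.exp (l2 * y) = Real.exp (l1 * y) * Real.exp (d * y) := by
        rw [← Real.exp_add]; congr 1; rw [hd]; ring
      simp only [hK]
      rw [this]; ring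
  have hI0' : c = ∫ y, K y * (G 0 - G (0 - y)) := by
    have : I 0 = c * g 0 - ∫ y, K y * (G 0 - G (0 - y)) := rfl
    have hg0 : g 0 = 1 := by simp [hg, aux_prim_zero]
    rw [hI0, hg0] at this
    linarith
  rw [hsplit, ← hI0'] at hpos
  have : ((∫ y, J y * Real.exp (l2 * y)) - ∫ y, K y) / d = c := by
    rw [div_eq_iff hdpos.ne', hd]
    linarith
  linarith

theorem aux_compact (z : ℝ → ℝ) (hz : UniformContinuous z) (M : ℝ) (hM : ∀ x, |z x| ≤ M)
    (ξ : ℕ → ℝ) : ∃ φ : ℕ → ℕ, StrictMono φ ∧ ∃ f : ℝ → ℝ, Continuous f ∧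
      (∀ x, Tendsto (fun n => z (ξ (φ n) + x)) atTop (nhds (f x))) ∧
      (∀ L ε : ℝ, 0 < ε → ∀ᶠ n in atTop, ∀ x ∈ Icc 0 L, |z (ξ (φ n) + x) - f x| < ε) := by
  have hz' := Metric.uniformContinuous_iff.1 hz
  have hδ' : ∀ ε : ℝ, ∃ δ : ℝ, 0 < ε → (0 < δ ∧ ∀ x y, dist x y < δ → dist (z x) (z y) < ε) := by
    intro ε
    by_cases h : 0 < ε
    · obtain ⟨δ, h1, h2⟩ := hz' ε h
      exact ⟨δ, fun _ => ⟨h1, fun x y hxy => h2 hxy⟩⟩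
    · exact ⟨0, fun h' => absurd h' h⟩
  choose δ hδ using hδ'
  let T : Set (ℝ → ℝ) := {f | (∀ x, f x ∈ Icc (-M) M) ∧
    ∀ ε, 0 < ε → ∀ x y, dist x y < δ ε → dist (f x) (f y) ≤ ε}
  have hTcont : ∀ f ∈ T, Continuous f := by
    intro f hf
    refine UniformContinuous.continuous (Metric.uniformContinuous_iff.2 fun ε hε => ?_)
    refine ⟨δ (ε / 2), (hδ (ε / 2) (by linarith)).1, fun x y hxy => ?_⟩
    exact (hf.2 (ε / 2) (by linarith) x y hxy).trans_lt (by linarith)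
  have hTcomp : IsCompact T := by
    have hpi : IsCompact (Set.pi univ fun _ : ℝ => Icc (-M) M) :=
      isCompact_univ_pi fun _ => isCompact_Icc
    have hcl : IsClosed {f : ℝ → ℝ | ∀ ε, 0 < ε → ∀ x y, dist x y < δ ε → dist (f x) (f y) ≤ ε} := by
      simp only [Set.ofPred_forall]
      refine isClosed_iInter fun ε => isClosed_iInter fun _ => isClosed_iInter fun x =>
        isClosed_iInter fun y => isClosed_iInter fun _ => ?_
      exact isClosed_le (by fun_prop) (by fun_prop)
    have := hpi.inter_right hcl
    convert this using 1
    ext f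
    constructor
    · intro hf
      exact ⟨fun x _ => hf.1 x, hf.2⟩
    · intro hf
      exact ⟨fun x => hf.1 x trivial, hf.2⟩
  let S : Set C(ℝ, ℝ) := {f | (f : ℝ → ℝ) ∈ T}
  have hS : IsCompact S := by
    refine ArzelaAscoli.isCompact_of_equicontinuous S ?_ ?_
    · convert hTcomp using 1
      ext f
      constructor
      · rintro ⟨g, hg, rfl⟩; exact hg
      · intro hf; exact ⟨⟨f, hTcont f hf⟩, hf, rfl⟩
    · refine UniformEquicontinuous.equicontinuous ?_
      rw [Metric.uniformEquicontinuous_iff]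
      intro ε hε
      refine ⟨δ (ε / 2), (hδ (ε / 2) (by linarith)).1, fun x y hxy f => ?_⟩
      exact (f.2.2 (ε / 2) (by linarith) x y hxy).trans_lt (by linarith)
  let u : ℕ → C(ℝ, ℝ) := fun n => ⟨fun x => z (ξ n + x), hz.continuous.comp (by fun_prop)⟩
  have hu : ∀ n, u n ∈ S := by
    intro n
    refine ⟨fun x => abs_le.1 (hM _), fun ε hε x y hxy => ?_⟩
    refine ((hδ ε hε).2 _ _ ?_).le
    simpa using hxy
  obtain ⟨f, hf, φ, hφ, ht⟩ := hS.tendsto_subseq hu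
  have ht' := ContinuousMap.tendsto_iff_forall_isCompact_tendstoUniformlyOn.1 ht
  refine ⟨φ, hφ, f, f.continuous, fun x => ?_, fun L ε hε => ?_⟩
  · exact ((ht' {x} isCompact_singleton).tendsto_at rfl)
  · have := Metric.tendstoUniformlyOn_iff.1 (ht' (Icc 0 L) isCompact_Icc) ε hε
    filter_upwards [this] with n hn x hx
    have := hn x hx
    rw [dist_comm] at this
    exact this

theorem aux_limit (J : ℝ → ℝ) (hJ : IsKernel J) (c b : ℝ) (B : ℝ → ℝ)
    (hB : Tendsto B atTop (nhds b)) (z : ℝ → ℝ) (hz : Continuous z) (M : ℝ)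
    (hM : ∀ x, |z x| ≤ M)
    (heq : ∀ ξ, c * z ξ = (∫ y, J y * Real.exp (∫ s in (ξ - y)..ξ, z s)) + B ξ)
    (ξ : ℕ → ℝ) (hξ : Tendsto ξ atTop atTop) (f : ℝ → ℝ) (hf : Continuous f)
    (hlim : ∀ x, Tendsto (fun n => z (ξ n + x)) atTop (nhds (f x))) : AuxSol J c b f := by
  refine ⟨hf, fun x => ?_⟩
  have hJc := hJ.1
  have hinner : ∀ y, Tendsto (fun n => ∫ s in (x - y)..x, z (ξ n + s)) atTop
      (nhds (∫ s in (x - y)..x, f s)) := by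
    intro y
    refine intervalIntegral.tendsto_integral_filter_of_dominated_convergence (fun _ => M) ?_ ?_ ?_ ?_
    · exact Eventually.of_forall fun n =>
        (hz.comp (by fun_prop : Continuous fun s => ξ n + s)).aestronglyMeasurable
    · exact Eventually.of_forall fun n => Eventually.of_forall fun s _ => hM _
    · simp
    · exact Eventually.of_forall fun s _ => hlim s
  have hbd : ∀ n y, |∫ s in (x - y)..x, z (ξ n + s)| ≤ M * |y| := by
    intro n y
    have := intervalIntegral.norm_integral_le_of_norm_le_const (a := x - y) (b := x)
      (f := fun s => z (ξ n + s)) (C := M) (fun s _ => hM _)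
    simpa using this
  have hshift : ∀ n y, (∫ s in (ξ n + x - y)..(ξ n + x), z s) = ∫ s in (x - y)..x, z (ξ n + s) := by
    intro n y
    rw [intervalIntegral.integral_comp_add_left (fun s => z s)]
    congr 1
    ring
  have houter : Tendsto (fun n => ∫ y, J y * Real.exp (∫ s in (ξ n + x - y)..(ξ n + x), z s)) atTop
      (nhds (∫ y, J y * Real.exp (∫ s in (x - y)..x, f s))) := by
    refine MeasureTheory.tendsto_integral_of_dominated_convergence
      (fun y => J y * Real.exp (M * |y|)) ?_ ?_ ?_ ?_
    · intro n
      simp only [aux_prim_sub z hz]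
      have := aux_prim_cont z hz
      exact (by fun_prop : Continuous _).aestronglyMeasurable
    · exact (by fun_prop : Continuous fun y => J y * Real.exp (M * |y|)).integrable_of_hasCompactSupport
        hJ.2.2.2.1.mul_right
    · intro n
      refine Eventually.of_forall fun y => ?_
      rw [norm_mul, Real.norm_of_nonneg (hJ.2.1 y), Real.norm_of_nonneg (Real.exp_pos _).le, hshift]
      exact mul_le_mul_of_nonneg_left (Real.exp_le_exp.2 (abs_le.1 (hbd n y)).2) (hJ.2.1 y)
    · refine Eventually.of_forall fun y => ?_
      simp only [hshift]
      exact ((Real.continuous_exp.tendsto _).comp (hinner y)).const_mul _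
  have hBl : Tendsto (fun n => B (ξ n + x)) atTop (nhds b) :=
    hB.comp (tendsto_atTop_add_const_right _ x hξ)
  refine tendsto_nhds_unique ((hlim x).const_mul c) ?_
  exact (houter.add hBl).congr fun n => (heq _).symm

theorem aux_conv (J : ℝ → ℝ) (hJ : IsKernel J) (c b : ℝ) (B : ℝ → ℝ)
    (hB : Tendsto B atTop (nhds b)) (z : ℝ → ℝ) (hz : UniformContinuous z) (M : ℝ)
    (hM : ∀ x, |z x| ≤ M)
    (heq : ∀ ξ, c * z ξ = (∫ y, J y * Real.exp (∫ s in (ξ - y)..ξ, z s)) + B ξ) :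
    ∃ ω : ℝ, Tendsto z atTop (nhds ω) ∧ c * ω = (∫ y, J y * Real.exp (ω * y)) + b := by
  have hzc := hz.continuous
  have hbu : IsBoundedUnder (· ≤ ·) atTop z := isBoundedUnder_of ⟨M, fun x => (abs_le.1 (hM x)).2⟩
  have hbl : IsBoundedUnder (· ≥ ·) atTop z := isBoundedUnder_of ⟨-M, fun x => (abs_le.1 (hM x)).1⟩
  set l2 := limsup z atTop with hl2
  set l1 := liminf z atTop with hl1
  have hup : ∀ ε, 0 < ε → ∀ᶠ x in atTop, z x < l2 + ε := fun ε hε =>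
    eventually_lt_of_limsup_lt (by linarith) hbu
  have hlow : ∀ ε, 0 < ε → ∀ᶠ x in atTop, l1 - ε < z x := fun ε hε =>
    eventually_lt_of_lt_liminf (by linarith) hbl
  have hfup : ∀ ε, 0 < ε → ∃ᶠ x in atTop, l2 - ε < z x := fun ε hε =>
    frequently_lt_of_lt_limsup hbl.isCoboundedUnder_le (by linarith)
  have hflow : ∀ ε, 0 < ε → ∃ᶠ x in atTop, z x < l1 + ε := fun ε hε =>
    frequently_lt_of_liminf_lt hbu.isCoboundedUnder_ge (by linarith)
  -- limits along sequences
  have hseq : ∀ ξ : ℕ → ℝ, Tendsto ξ atTop atTop → ∃ φ : ℕ → ℕ, StrictMono φ ∧ ∃ f : ℝ → ℝ,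
      AuxSol J c b f ∧ (∀ x, l1 ≤ f x) ∧ (∀ x, f x ≤ l2) ∧
      (∀ x, Tendsto (fun n => z (ξ (φ n) + x)) atTop (nhds (f x))) ∧
      (∀ L ε : ℝ, 0 < ε → ∀ᶠ n in atTop, ∀ x ∈ Icc 0 L, |z (ξ (φ n) + x) - f x| < ε) := by
    intro ξ hξ
    obtain ⟨φ, hφ, f, hfc, hp, huni⟩ := aux_compact z hz M hM ξ
    have hξφ := hξ.comp hφ.tendsto_atTop
    have hξx : ∀ x, Tendsto (fun n => ξ (φ n) + x) atTop atTop := fun x =>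
      tendsto_atTop_add_const_right _ x hξφ
    refine ⟨φ, hφ, f, aux_limit J hJ c b B hB z hzc M hM heq _ hξφ f hfc hp, ?_, ?_, hp, huni⟩
    · intro x
      refine le_of_forall_pos_le_add fun ε hε => ?_
      have := ge_of_tendsto (hp x) (((hξx x).eventually (hlow ε hε)).mono fun n hn => hn.le)
      linarith
    · intro x
      refine le_of_forall_pos_le_add fun ε hε => ?_
      exact le_of_tendsto (hp x) (((hξx x).eventually (hup ε hε)).mono fun n hn => hn.le)
  have hinv : Tendsto (fun n : ℕ => 1 / ((n : ℝ) + 1)) atTop (nhds 0) :=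
    tendsto_one_div_add_atTop_nhds_zero_nat
  -- sequence for the limsup
  have hex2 : ∀ n : ℕ, ∃ x : ℝ, (n : ℝ) ≤ x ∧ l2 - 1 / ((n : ℝ) + 1) < z x := fun n => by
    obtain ⟨x, h1, h2⟩ := ((hfup (1 / ((n : ℝ) + 1)) (by positivity)).and_eventually
      (eventually_ge_atTop (n : ℝ))).exists
    exact ⟨x, h2, h1⟩
  have hex1 : ∀ n : ℕ, ∃ x : ℝ, (n : ℝ) ≤ x ∧ z x < l1 + 1 / ((n : ℝ) + 1) := fun n => by
    obtain ⟨x, h1, h2⟩ := ((hflow (1 / ((n : ℝ) + 1)) (by positivity)).and_eventually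
      (eventually_ge_atTop (n : ℝ))).exists
    exact ⟨x, h2, h1⟩
  choose η2 hη2 hη2' using hex2
  choose η1 hη1 hη1' using hex1
  have hη2t : Tendsto η2 atTop atTop := tendsto_atTop_mono hη2 tendsto_natCast_atTop_atTop
  have hη1t : Tendsto η1 atTop atTop := tendsto_atTop_mono hη1 tendsto_natCast_atTop_atTop
  obtain ⟨φ2, hφ2, f2, hs2, hlo2, hhi2, hp2, hun2⟩ := hseq η2 hη2t
  obtain ⟨φ1, hφ1, f1, hs1, hlo1, hhi1, hp1, -⟩ := hseq η1 hη1t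
  have hf2 : f2 0 = l2 := by
    refine le_antisymm (hhi2 0) ?_
    have h1 : Tendsto (fun n => l2 - 1 / (((φ2 n : ℕ) : ℝ) + 1)) atTop (nhds (l2 - 0)) :=
      (hinv.comp hφ2.tendsto_atTop).const_sub l2
    rw [sub_zero] at h1
    refine le_of_tendsto_of_tendsto' h1 (hp2 0) fun n => ?_
    rw [add_zero]; exact (hη2' _).le
  have hf1 : f1 0 = l1 := by
    refine le_antisymm ?_ (hlo1 0)
    have h1 : Tendsto (fun n => l1 + 1 / (((φ1 n : ℕ) : ℝ) + 1)) atTop (nhds (l1 + 0)) :=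
      (hinv.comp hφ1.tendsto_atTop).const_add l1
    rw [add_zero] at h1
    refine le_of_tendsto_of_tendsto' (hp1 0) h1 fun n => ?_
    rw [add_zero]; exact (hη1' _).le
  have hc2 := hs2.const_of_extr hJ (Or.inl fun x => by rw [hf2]; exact hhi2 x)
  have hc1 := hs1.const_of_extr hJ (Or.inr fun x => by rw [hf1]; exact hlo1 x)
  have hr2 := hs2.root_of_const hc2
  have hr1 := hs1.root_of_const hc1
  rw [hf2] at hr2 hc2
  rw [hf1] at hr1 hc1
  have hle : l1 ≤ l2 := by rw [← hf1]; exact hhi1 0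
  rcases hle.eq_or_lt with he | hlt
  · exact ⟨l2, tendsto_of_liminf_eq_limsup (hl1.symm.trans he) rfl hbu hbl, hr2⟩
  exfalso
  set θ := (l1 + l2) / 2 with hθ
  have h1θ : l1 < θ := by linarith
  have hθ2 : θ < l2 := by linarith
  have hex : ∀ n : ℕ, ∃ x : ℝ, (n : ℝ) ≤ x ∧ z x = θ ∧ ∀ t ∈ Icc (0 : ℝ) n, θ ≤ z (x + t) := by
    intro n
    obtain ⟨a, ha1, ha2⟩ := ((hflow (θ - l1) (by linarith)).and_eventually
      (eventually_ge_atTop (n : ℝ))).exists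
    obtain ⟨k, hk1, hk2⟩ := ((hun2 n (l2 - θ) (by linarith)).and
      ((hη2t.comp hφ2.tendsto_atTop).eventually_ge_atTop a)).exists
    set η := η2 (φ2 k) with hη
    have hk2' : a ≤ η := hk2
    have hge : ∀ t ∈ Icc (0 : ℝ) n, θ ≤ z (η + t) := by
      intro t ht
      have := (abs_lt.1 (hk1 t ht)).1
      rw [hc2] at this
      linarith
    -- last point where z ≤ θ
    let A : Set ℝ := Icc a η ∩ {x | z x ≤ θ}
    have hAc : IsCompact A := isCompact_Icc.inter_right (isClosed_le hzc continuous_const)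
    have hAn : A.Nonempty := ⟨a, ⟨le_rfl, hk2'⟩, by simp only [Set.mem_ofPred_eq]; linarith⟩
    obtain ⟨x, hxA, hxmax⟩ := hAc.exists_isGreatest hAn
    have hafter : ∀ t, x < t → t ≤ η → θ < z t := by
      intro t ht1 ht2
      by_contra hcon
      push Not at hcon
      have := hxmax ⟨⟨hxA.1.1.trans ht1.le, ht2⟩, hcon⟩
      linarith
    have hxge : θ ≤ z x := by
      rcases hxA.1.2.eq_or_lt with h | h
      · have := hge 0 ⟨le_rfl, by positivity⟩
        rw [add_zero] at this
        rw [h]; exact this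
      · have ht : Tendsto z (nhdsWithin x (Ioi x)) (nhds (z x)) := hzc.continuousWithinAt
        refine ge_of_tendsto ht ?_
        filter_upwards [Ioc_mem_nhdsGT h] with t ht
        exact (hafter t ht.1 ht.2).le
    refine ⟨x, ha2.trans hxA.1.1, le_antisymm hxA.2 hxge, fun t ht => ?_⟩
    rcases ht.1.eq_or_lt with h0 | h0
    · rw [← h0, add_zero]; exact hxge
    rcases le_or_gt (x + t) η with h | h
    · exact (hafter _ (by linarith) h).le
    · have := hge (x + t - η) ⟨by linarith, by linarith [ht.2, hxA.1.2]⟩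
      rwa [add_sub_cancel] at this
  choose ξ hξ1 hξ2 hξ3 using hex
  have hξt : Tendsto ξ atTop atTop := tendsto_atTop_mono hξ1 tendsto_natCast_atTop_atTop
  obtain ⟨φ, hφ, f, hs, hlo, hhi, hp, -⟩ := hseq ξ hξt
  refine hs.no_up hJ l1 l2 θ h1θ hθ2 hr1 hr2 hhi ?_ ?_
  · intro x hx
    refine ge_of_tendsto (hp x) ?_
    filter_upwards [(tendsto_natCast_atTop_atTop (R := ℝ) |>.comp hφ.tendsto_atTop).eventually_ge_atTop x]
      with n hn
    exact hξ3 _ x ⟨hx, hn⟩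
  · refine tendsto_nhds_unique (hp 0) ?_
    simp [hξ2]

theorem aux_bdd (J : ℝ → ℝ) (hJ : IsKernel J) (c : ℝ) (hc : 0 < c) (B : ℝ → ℝ)
    (β : ℝ) (hB : ∀ x, |B x| ≤ β) (z : ℝ → ℝ) (hz : Continuous z)
    (heq : ∀ ξ, c * z ξ = (∫ y, J y * Real.exp (∫ s in (ξ - y)..ξ, z s)) + B ξ) :
    ∃ M, ∀ ξ, |z ξ| ≤ M := by
  have hJc := hJ.1
  have hJs := hJ.2.2.2.1
  have hJ0 := hJ.2.1
  have hPc := aux_prim_cont z hz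
  have hPd := aux_prim z hz
  obtain ⟨R, hR, hsupp⟩ := aux_kernel_supp J hJs
  obtain ⟨a, b, j, ha, hab, hj, hJj⟩ := aux_kernel_pos J hJ
  have hβ : 0 ≤ β := (abs_nonneg _).trans (hB 0)
  set μ := β / c with hμ
  have hμ0 : 0 ≤ μ := by positivity
  have hcμ : c * μ = β := by rw [hμ]; field_simp
  set q : ℝ → ℝ := fun x => auxP z x + μ * x with hq
  have hqc : Continuous q := by fun_prop
  have hqd : ∀ x, HasDerivAt q (z x + μ) x := by
    intro x
    refine HasDerivAt.congr_deriv (f := q) ((hPd x).add ((hasDerivAt_id x).const_mul μ)) ?_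
    simp
  simp only [aux_prim_sub z hz] at heq
  have hA : ∀ x, ∫ y, J y * Real.exp (auxP z x - auxP z (x - y)) =
      ∫ y, J y * Real.exp (q x - q (x - y) - μ * y) := by
    intro x
    congr 1
    ext y
    congr 2
    simp only [hq]
    ring
  have hint : ∀ x, Integrable fun y => J y * Real.exp (q x - q (x - y) - μ * y) := fun x =>
    (by fun_prop : Continuous fun y => J y * Real.exp (q x - q (x - y) - μ * y)).integrable_of_hasCompactSupport
      hJs.mul_right
  have hnn : ∀ x y, 0 ≤ J y * Real.exp (q x - q (x - y) - μ * y) := fun x y =>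
    mul_nonneg (hJ0 y) (Real.exp_pos _).le
  have hA0 : ∀ x, 0 ≤ ∫ y, J y * Real.exp (q x - q (x - y) - μ * y) := fun x =>
    MeasureTheory.integral_nonneg (hnn x)
  have hlow : ∀ x, 0 ≤ z x + μ := by
    intro x
    have h1 := heq x
    rw [hA] at h1
    have h2 := hA0 x
    have h3 := (abs_le.1 (hB x)).1
    have : 0 ≤ c * (z x + μ) := by rw [mul_add, hcμ]; linarith
    exact nonneg_of_mul_nonneg_right this hc
  have hmono : Monotone q := monotone_of_hasDerivAt_nonneg hqd (fun x => hlow x)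
  set κ := (b - a) * (j * Real.exp (-(μ * b))) with hκ
  have hκ0 : 0 < κ := mul_pos (by linarith) (mul_pos hj (Real.exp_pos _))
  have hder : ∀ t, κ * Real.exp (q t - q (t - a)) ≤ c * (z t + μ) := by
    intro t
    have h1 : ∫ y in Icc a b, j * (Real.exp (-(μ * b)) * Real.exp (q t - q (t - a))) ≤
        ∫ y in Icc a b, J y * Real.exp (q t - q (t - y) - μ * y) := by
      refine MeasureTheory.setIntegral_mono_on continuous_const.integrableOn_Icc (hint t).integrableOn measurableSet_Icc
        fun y hy => ?_
      rw [← Real.exp_add]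
      refine mul_le_mul (hJj y hy) (Real.exp_le_exp.2 ?_) (Real.exp_pos _).le (hJ0 y)
      have h2 := hmono (by linarith [hy.1] : t - y ≤ t - a)
      have h3 := mul_le_mul_of_nonneg_left hy.2 hμ0
      linarith
    have h2 := MeasureTheory.setIntegral_le_integral (s := Icc a b) (hint t)
      (Eventually.of_forall (hnn t))
    have h3 := heq t
    rw [hA] at h3
    have h4 := (abs_le.1 (hB t)).1
    rw [MeasureTheory.setIntegral_const] at h1
    simp [hab.le] at h1
    rw [mul_add, hcμ]
    have : κ * Real.exp (q t - q (t - a)) =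
      (b - a) * (j * (Real.exp (-(μ * b)) * Real.exp (q t - q (t - a)))) := by rw [hκ]; ring
    rw [this]
    linarith
  set δ := a / 2 with hδ
  have hδ0 : 0 < δ := by positivity
  set L := Real.log (c / (κ * δ)) with hL
  have hstep : ∀ x, q x - q (x - δ) ≤ L := by
    intro x
    -- on [x, x + δ]
    set w := (κ / c) * Real.exp (-q (x - δ)) with hw
    have hanti : AntitoneOn (fun t => Real.exp (-q t) + w * t) (Icc x (x + δ)) := by
      have hd : ∀ t, HasDerivAt (fun t => Real.exp (-q t) + w * t)
          (Real.exp (-q t) * (-(z t + μ)) + w) t := by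
        intro t
        refine HasDerivAt.congr_deriv (f := fun t => Real.exp (-q t) + w * t)
          (((hqd t).neg.exp).add ((hasDerivAt_id t).const_mul w)) ?_
        simp
      refine antitoneOn_of_deriv_nonpos (convex_Icc _ _) (by fun_prop)
        (fun t _ => (hd t).differentiableAt.differentiableWithinAt) fun t ht => ?_
      rw [interior_Icc] at ht
      rw [(hd t).deriv]
      have h1 : (κ / c) * Real.exp (q t - q (t - a)) ≤ z t + μ := by
        rw [div_mul_eq_mul_div, div_le_iff₀ hc]
        linarith [hder t]
      have h2 : w ≤ (κ / c) * Real.exp (-q (t - a)) := by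
        refine mul_le_mul_of_nonneg_left (Real.exp_le_exp.2 ?_) (by positivity)
        have := hmono (by rw [hδ]; linarith [ht.2] : t - a ≤ x - δ)
        linarith
      have h3 : (κ / c) * Real.exp (-q (t - a)) =
          Real.exp (-q t) * ((κ / c) * Real.exp (q t - q (t - a))) := by
        have : Real.exp (-q (t - a)) = Real.exp (-q t) * Real.exp (q t - q (t - a)) := by
          rw [← Real.exp_add]; congr 1; ring
        rw [this]; ring
      have h4 := mul_le_mul_of_nonneg_left h1 (Real.exp_pos (-q t)).le
      linarith
    have h1 := hanti (left_mem_Icc.2 (by linarith)) (right_mem_Icc.2 (by linarith))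
      (by linarith : x ≤ x + δ)
    simp only at h1
    have h2 : w * δ ≤ Real.exp (-q x) := by
      have := Real.exp_pos (-q (x + δ))
      linarith
    have h3 : Real.exp (q x - q (x - δ)) ≤ c / (κ * δ) := by
      rw [le_div_iff₀ (by positivity)]
      have h4 := mul_le_mul_of_nonneg_left h2 (Real.exp_pos (q x)).le
      rw [← Real.exp_add, add_neg_cancel, Real.exp_zero, hw] at h4
      have h5 : Real.exp (q x - q (x - δ)) = Real.exp (q x) * Real.exp (-q (x - δ)) := by
        rw [← Real.exp_add]; rfl
      rw [h5]
      have h6 : Real.exp (q x) * (κ / c * Real.exp (-q (x - δ)) * δ) =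
        (Real.exp (q x) * Real.exp (-q (x - δ)) * (κ * δ)) / c := by field_simp
      rw [h6, div_le_iff₀ hc] at h4
      linarith
    rw [hL, Real.le_log_iff_exp_le (by positivity)]
    exact h3
  have hsteps : ∀ n : ℕ, ∀ x, q x - q (x - n * δ) ≤ n * L := by
    intro n
    induction n with
    | zero => intro x; simp
    | succ k ih =>
      intro x
      have h1 := ih x
      have h2 := hstep (x - k * δ)
      have h3 : x - k * δ - δ = x - ((k + 1 : ℕ) : ℝ) * δ := by push_cast; ring
      rw [h3] at h2
      push_cast at h2 ⊢
      linarith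
  obtain ⟨n, hn⟩ := exists_nat_gt (R / δ)
  rw [div_lt_iff₀ hδ0] at hn
  have hupper : ∀ x, c * z x ≤ Real.exp (n * L + μ * R) + β := by
    intro x
    rw [heq x, hA x]
    refine add_le_add ?_ (abs_le.1 (hB x)).2
    have : ∫ y, J y * Real.exp (q x - q (x - y) - μ * y) ≤
        ∫ y, J y * Real.exp (n * L + μ * R) := by
      refine MeasureTheory.integral_mono (hint x)
        ((hJc.integrable_of_hasCompactSupport hJs).mul_const _) fun y => ?_
      by_cases hy : R < |y|
      · simp [hsupp y hy]
      · push Not at hy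
        have hy' := abs_le.1 hy
        refine mul_le_mul_of_nonneg_left (Real.exp_le_exp.2 ?_) (hJ0 y)
        have h1 := hmono (by linarith : x - n * δ ≤ x - y)
        have h2 := hsteps n x
        have h3 := mul_le_mul_of_nonneg_left (by linarith : -y ≤ R) hμ0
        linarith
    rwa [MeasureTheory.integral_mul_const, hJ.2.2.2.2, one_mul] at this
  refine ⟨max μ ((Real.exp (n * L + μ * R) + β) / c), fun x => abs_le.2 ⟨?_, ?_⟩⟩
  · linarith [hlow x, le_max_left μ ((Real.exp (n * L + μ * R) + β) / c)]
  · refine le_trans ?_ (le_max_right _ _)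
    rw [le_div_iff₀ hc]
    linarith [hupper x]

theorem aux_uc_exp (J : ℝ → ℝ) (hJ : IsKernel J) (z : ℝ → ℝ) (hz : Continuous z)
    (M : ℝ) (hM : ∀ x, |z x| ≤ M) :
    UniformContinuous (fun x => ∫ y, J y * Real.exp (∫ s in (x - y)..x, z s)) := by
  have hd := aux_deriv_exp J hJ z hz
  have hJc := hJ.1
  have hM0 : 0 ≤ M := (abs_nonneg _).trans (hM 0)
  have hDn : 0 ≤ ∫ y, J y * (Real.exp (M * |y|) * (2 * M)) :=
    MeasureTheory.integral_nonneg fun y => mul_nonneg (hJ.2.1 y) (by positivity)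
  have hl : LipschitzWith (Real.toNNReal (∫ y, J y * (Real.exp (M * |y|) * (2 * M))))
      (fun x => ∫ y, J y * Real.exp (∫ s in (x - y)..x, z s)) := by
    refine lipschitzWith_of_nnnorm_deriv_le (fun x => (hd x).differentiableAt) fun x => ?_
    rw [(hd x).deriv, ← NNReal.coe_le_coe, coe_nnnorm, Real.coe_toNNReal _ hDn]
    refine MeasureTheory.norm_integral_le_of_norm_le ?_ (Eventually.of_forall fun y => ?_)
    · exact (by fun_prop : Continuous fun y => J y * (Real.exp (M * |y|) * (2 * M))).integrable_of_hasCompactSupport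
        hJ.2.2.2.1.mul_right
    · rw [norm_mul, norm_mul, Real.norm_of_nonneg (hJ.2.1 y), Real.norm_of_nonneg (Real.exp_pos _).le]
      refine mul_le_mul_of_nonneg_left ?_ (hJ.2.1 y)
      have h1 := intervalIntegral.norm_integral_le_of_norm_le_const (a := x - y) (b := x)
        (f := z) (C := M) (fun s _ => hM _)
      rw [sub_sub_cancel, Real.norm_eq_abs] at h1
      refine mul_le_mul (Real.exp_le_exp.2 (abs_le.1 h1).2) ?_ (norm_nonneg _) (Real.exp_pos _).le
      refine (norm_sub_le _ _).trans ?_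
      rw [Real.norm_eq_abs, Real.norm_eq_abs]
      linarith [hM x, hM (x - y)]
  exact hl.uniformContinuous

theorem aux_lim_bdd (B : ℝ → ℝ) (hB : Continuous B) (Bp Bm : ℝ)
    (hBp : Tendsto B atTop (nhds Bp)) (hBm : Tendsto B atBot (nhds Bm)) :
    ∃ β, ∀ x, |B x| ≤ β := by
  obtain ⟨N, hN⟩ := eventually_atTop.1 (hBp.abs.eventually_lt_const (lt_add_one |Bp|))
  obtain ⟨N', hN'⟩ := eventually_atBot.1 (hBm.abs.eventually_lt_const (lt_add_one |Bm|))
  obtain ⟨C, hC⟩ := (isCompact_Icc (a := N') (b := N)).exists_bound_of_continuousOn hB.continuousOn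
  refine ⟨max C (max (|Bp| + 1) (|Bm| + 1)), fun x => ?_⟩
  rcases le_total N x with h | h
  · exact (hN x h).le.trans (by simp)
  rcases le_total x N' with h' | h'
  · exact (hN' x h').le.trans (by simp)
  exact (hC x ⟨h', h⟩).trans (le_max_left _ _)

theorem aux_lim_uc (B : ℝ → ℝ) (hB : Continuous B) (Bp Bm : ℝ)
    (hBp : Tendsto B atTop (nhds Bp)) (hBm : Tendsto B atBot (nhds Bm)) :
    UniformContinuous B := by
  set r : ℝ → ℝ := fun x => Bm + (Bp - Bm) * max 0 (min 1 x) with hr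
  have hru : UniformContinuous r := by
    have h1 : LipschitzWith 1 fun x : ℝ => max 0 (min 1 x) :=
      (LipschitzWith.id.const_min 1).const_max 0
    have h2 : UniformContinuous fun x : ℝ => (Bp - Bm) • max 0 (min 1 x) :=
      h1.uniformContinuous.const_smul (Bp - Bm)
    exact uniformContinuous_const.add h2
  have hdc : Continuous fun x => B x - r x := hB.sub hru.continuous
  have hlim : Tendsto (fun x => B x - r x) (cocompact ℝ) (nhds 0) := by
    rw [cocompact_eq_atBot_atTop]
    refine Tendsto.sup ?_ ?_
    · have h1 : Tendsto r atBot (nhds Bm) := by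
        refine tendsto_const_nhds.congr' ?_
        filter_upwards [eventually_le_atBot (0 : ℝ)] with x hx
        simp [hr, max_eq_left ((min_le_right 1 x).trans hx)]
      simpa using hBm.sub h1
    · have h1 : Tendsto r atTop (nhds Bp) := by
        refine tendsto_const_nhds.congr' ?_
        filter_upwards [eventually_ge_atTop (1 : ℝ)] with x hx
        simp [hr, min_eq_left hx]
      simpa using hBp.sub h1
  have := (hdc.uniformContinuous_of_tendsto_cocompact hlim).add hru
  simpa using this

theorem limits_of_logarithmic_derivative
    (J : ℝ → ℝ) (hJ : IsKernel J)
    (c : ℝ) (hc : 0 < c)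
    (B : ℝ → ℝ) (hB : Continuous B) (Bp Bm : ℝ)
    (hBp : Tendsto B atTop (nhds Bp)) (hBm : Tendsto B atBot (nhds Bm))
    (z : ℝ → ℝ) (hz : Measurable z) (hzloc : LocallyIntegrable z volume)
    (heq : ∀ ξ, c * z ξ = (∫ y, J y * Real.exp (∫ s in (ξ - y)..ξ, z s)) + B ξ) :
    UniformContinuous z ∧ (∃ M, ∀ ξ, |z ξ| ≤ M) ∧
    (∃ ωp : ℝ, Tendsto z atTop (nhds ωp) ∧
      c * ωp = (∫ y, J y * Real.exp (ωp * y)) + Bp) ∧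
    (∃ ωm : ℝ, Tendsto z atBot (nhds ωm) ∧
      c * ωm = (∫ y, J y * Real.exp (ωm * y)) + Bm) := by
  have hzeq : z = fun ξ => c⁻¹ • ((∫ y, J y * Real.exp (∫ s in (ξ - y)..ξ, z s)) + B ξ) := by
    ext ξ
    rw [← heq, smul_eq_mul, inv_mul_cancel_left₀ hc.ne']
  have hzc : Continuous z := by
    have hii : ∀ a b, IntervalIntegrable z volume a b := fun a b =>
      (hzloc.integrableOn_isCompact isCompact_uIcc).intervalIntegrable
    have hPc : Continuous (auxP z) := intervalIntegral.continuous_primitive hii 0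
    have h1 : Continuous fun ξ => ∫ y, J y * Real.exp (∫ s in (ξ - y)..ξ, z s) := by
      have hs : ∀ x y, ∫ s in x..y, z s = auxP z y - auxP z x := fun x y =>
        (integral_interval_sub_left (hii _ _) (hii _ _)).symm
      simp only [hs]
      exact aux_cont_param J hJ.1 hJ.2.2.2.1 (fun x y => Real.exp (auxP z x - auxP z (x - y)))
        (by unfold Function.uncurry; fun_prop)
    rw [hzeq]
    exact (h1.add hB).const_smul (c⁻¹)
  obtain ⟨β, hβ⟩ := aux_lim_bdd B hB Bp Bm hBp hBm
  obtain ⟨M, hM⟩ := aux_bdd J hJ c hc B β hβ z hzc heq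
  have hzu : UniformContinuous z := by
    rw [hzeq]
    exact ((aux_uc_exp J hJ z hzc M hM).add (aux_lim_uc B hB Bp Bm hBp hBm)).const_smul (c⁻¹)
  refine ⟨hzu, ⟨M, hM⟩, aux_conv J hJ c Bp B hBp z hzu M hM heq, ?_⟩
  -- reflection
  have hrefl : ∀ ξ, (-c) * (-z (-ξ)) =
      (∫ y, J y * Real.exp (∫ s in (ξ - y)..ξ, -z (-s))) + B (-ξ) := by
    intro ξ
    rw [neg_mul_neg, heq (-ξ)]
    congr 1
    rw [← MeasureTheory.integral_neg_eq_self]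
    congr 1
    ext y
    rw [hJ.2.2.1]
    congr 2
    rw [intervalIntegral.integral_neg, intervalIntegral.integral_comp_neg (fun s => z s),
      ← intervalIntegral.integral_symm]
    congr 1
    ring
  obtain ⟨ω, hω, hroot⟩ := aux_conv J hJ (-c) Bm (fun x => B (-x))
    (hBm.comp tendsto_neg_atTop_atBot) (fun x => -z (-x))
    ((hzu.comp uniformContinuous_neg).neg) M (fun x => by rw [abs_neg]; exact hM _) hrefl
  refine ⟨-ω, ?_, ?_⟩
  · have := (hω.comp tendsto_neg_atBot_atTop).neg
    refine this.congr fun x => ?_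
    simp
  · rw [← MeasureTheory.integral_neg_eq_self]
    simp only [hJ.2.2.1, neg_mul_neg]
    linarith
end
end

section
/- Assume c_NL*(q) = c₀*, i.e. the minimal speed is linearly selected. Then the minimal traveling wave 𝒲_q satisfies 𝒲_q(ξ) = A ξ e^{−λ₀ξ} + B e^{−λ₀ξ} + o(e^{−λ₀ξ}) as ξ → +∞, where A ≥ 0 and B ∈ ℝ, and B > 0 if A = 0 (in particular A and B do not vanish simultaneously). -/
open Filter Asymptotics MeasureTheory Set

noncomputable section

/-- A nonlocal traveling wave front with speed `c` for the kernel `J` and nonlinearity `g`: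
a decreasing `C¹` solution of `J∗W - W + cW' + g(W) = 0` connecting `1` to `0`. -/
def IsNLFront (J : ℝ → ℝ) (g : ℝ → ℝ) (c : ℝ) (W : ℝ → ℝ) : Prop :=
  ContDiff ℝ 1 W ∧
  (∀ ξ, (∫ y, J (ξ - y) * W y) - W ξ + c * deriv W ξ + g (W ξ) = 0) ∧
  Tendsto W atBot (nhds 1) ∧ Tendsto W atTop (nhds 0) ∧
  (∀ ξ, deriv W ξ < 0)

/-- The linearized minimal speed `c₀* = inf_{λ>0} (∫ J(x)e^{λx}dx + γ₀ - 1)/λ`. -/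
noncomputable def c0star (J : ℝ → ℝ) (γ₀ : ℝ) : ℝ :=
  sInf ((fun l : ℝ => ((∫ x, J x * Real.exp (l * x)) + γ₀ - 1) / l) '' Ioi 0)

/-- Working package: a nonnegative continuous kernel vanishing outside `(-R, R)`. -/
structure Ker (K : ℝ → ℝ) (R : ℝ) : Prop where
  cont : Continuous K
  nonneg : ∀ y, 0 ≤ K y
  Rpos : 0 < R
  zero : ∀ y, R ≤ |y| → K y = 0

lemma Ker.hcs {K : ℝ → ℝ} {R : ℝ} (h : Ker K R) : HasCompactSupport K := by
  apply HasCompactSupport.of_support_subset_isCompact (isCompact_Icc (a := -R) (b := R))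
  intro y hy
  by_contra hc
  apply hy
  apply h.zero
  rw [mem_Icc, ← abs_le] at hc
  linarith [not_le.mp hc]

lemma Ker.integrable {K : ℝ → ℝ} {R : ℝ} (h : Ker K R) {k : ℝ → ℝ} (hk : Continuous k) :
    Integrable (fun y => K y * k y) :=
  (h.cont.mul hk).integrable_of_hasCompactSupport h.hcs.mul_right

lemma Ker.mono {K : ℝ → ℝ} {R : ℝ} (h : Ker K R) {k l : ℝ → ℝ} (hk : Continuous k)
    (hl : Continuous l) (hkl : ∀ y, |y| ≤ R → k y ≤ l y) :
    ∫ y, K y * k y ≤ ∫ y, K y * l y := by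
  apply integral_mono (h.integrable hk) (h.integrable hl)
  intro y
  rcases le_total |y| R with hy | hy
  · exact mul_le_mul_of_nonneg_left (hkl y hy) (h.nonneg y)
  · simp [h.zero y hy]

lemma Ker.integral_nonneg {K : ℝ → ℝ} {R : ℝ} (h : Ker K R) {k : ℝ → ℝ}
    (hk : ∀ y, |y| ≤ R → 0 ≤ k y) : 0 ≤ ∫ y, K y * k y := by
  apply MeasureTheory.integral_nonneg
  intro y
  rcases le_total |y| R with hy | hy
  · exact mul_nonneg (h.nonneg y) (hk y hy)
  · simp [h.zero y hy]

/-- Differentiation under the integral sign. -/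
lemma Ker.hasDerivAt {K : ℝ → ℝ} {R : ℝ} (h : Ker K R) {k k' : ℝ → ℝ → ℝ}
    (hk : ∀ x, Continuous (k x)) (hk' : Continuous (Function.uncurry k'))
    (hd : ∀ x y, HasDerivAt (fun x => k x y) (k' x y) x) (x : ℝ) :
    HasDerivAt (fun x => ∫ y, K y * k x y) (∫ y, K y * k' x y) x := by
  have hcomp : IsCompact (Icc (x-1) (x+1) ×ˢ Icc (-R) R) := isCompact_Icc.prod isCompact_Icc
  obtain ⟨C, hC⟩ := hcomp.exists_bound_of_continuousOn hk'.continuousOn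
  have hk'x : ∀ x, Continuous (k' x) := fun x => hk'.comp (by fun_prop : Continuous fun y => (x, y))
  refine (hasDerivAt_integral_of_dominated_loc_of_deriv_le
    (F := fun x y => K y * k x y) (F' := fun x y => K y * k' x y)
    (bound := fun y => K y * C) (s := Icc (x-1) (x+1)) ?_ ?_ ?_ ?_ ?_ ?_ ?_).2
  · exact Icc_mem_nhds (by linarith) (by linarith)
  · exact Eventually.of_forall fun x => (h.integrable (hk x)).aestronglyMeasurable
  · exact h.integrable (hk x)
  · exact (h.integrable (hk'x x)).aestronglyMeasurable
  · refine Eventually.of_forall fun y t ht => ?_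
    rw [norm_mul, Real.norm_of_nonneg (h.nonneg y)]
    rcases le_total |y| R with hy | hy
    · exact mul_le_mul_of_nonneg_left (hC (t, y) ⟨ht, abs_le.mp hy⟩) (h.nonneg y)
    · simp [h.zero y hy]
  · exact h.integrable continuous_const
  · exact Eventually.of_forall fun y t _ => (hd t y).const_mul _

/-- The operator `K ∗ H - (∫ K) H + (∫ y K) F` where F is the derivative of H. -/
def Gop (K H F : ℝ → ℝ) (ξ : ℝ) : ℝ :=
  (∫ y, K y * H (ξ - y)) - (∫ y, K y * 1) * H ξ + (∫ y, K y * y) * F ξ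

lemma Ker.Gop_hasDerivAt {K : ℝ → ℝ} {R : ℝ} (h : Ker K R) {H F v : ℝ → ℝ}
    (hH : ∀ x, HasDerivAt H (F x) x) (hF : ∀ x, HasDerivAt F (v x) x) (x : ℝ) :
    HasDerivAt (Gop K H F) (Gop K F v x) x := by
  have hHc : Continuous H := continuous_iff_continuousAt.2 fun x => (hH x).continuousAt
  have hFc : Continuous F := continuous_iff_continuousAt.2 fun x => (hF x).continuousAt
  unfold Gop
  refine HasDerivAt.add (HasDerivAt.sub ?_ ((hH x).const_mul _)) ((hF x).const_mul _)
  apply h.hasDerivAt (k := fun x y => H (x - y)) (k' := fun x y => F (x - y))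
  · intro x; fun_prop
  · fun_prop
  · intro x y
    simpa using (hH (x - y)).comp_sub_const x y

lemma Ker.Gop_eq {K : ℝ → ℝ} {R : ℝ} (h : Ker K R) {H F : ℝ → ℝ} (hH : Continuous H) (ξ : ℝ) :
    Gop K H F ξ = ∫ y, K y * (H (ξ - y) - H ξ + y * F ξ) := by
  have e : ∀ y, K y * (H (ξ - y) - H ξ + y * F ξ)
    = K y * H (ξ - y) - (K y * 1) * H ξ + (K y * y) * F ξ := fun y => by ring
  simp_rw [e]
  have i1 : Integrable fun y => K y * H (ξ - y) := h.integrable (by fun_prop)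
  have i2 : Integrable fun y => (K y * 1) * H ξ := (h.integrable continuous_const).mul_const _
  have i3 : Integrable fun y => (K y * y) * F ξ := (h.integrable continuous_id).mul_const _
  have i12 : Integrable fun y => K y * H (ξ - y) - (K y * 1) * H ξ := i1.sub i2
  rw [integral_add i12 i3, integral_sub i1 i2]
  simp only [Gop, integral_mul_const, mul_one]

lemma Ker.Gop_sub {K : ℝ → ℝ} {R : ℝ} (h : Ker K R) {H F H' F' : ℝ → ℝ} (hH : Continuous H)
    (hH' : Continuous H') (ξ : ℝ) :
    Gop K (fun x => H x - H' x) (fun x => F x - F' x) ξ = Gop K H F ξ - Gop K H' F' ξ := by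
  have i1 : Integrable fun y => K y * H (ξ - y) := h.integrable (by fun_prop)
  have i2 : Integrable fun y => K y * H' (ξ - y) := h.integrable (by fun_prop)
  unfold Gop
  simp_rw [mul_sub]
  rw [integral_sub i1 i2]; ring

lemma Gop_neg {K : ℝ → ℝ} {H F : ℝ → ℝ} (ξ : ℝ) :
    Gop K (fun x => - H x) (fun x => - F x) ξ = - Gop K H F ξ := by
  unfold Gop
  simp_rw [mul_neg]
  rw [integral_neg]; ring

/-- one-sided second moment -/
def sigp (K : ℝ → ℝ) : ℝ := ∫ y, K y * (max y 0)^2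

lemma tangent_right {H F v : ℝ → ℝ} {a b m : ℝ} 
    (hH : ∀ x, HasDerivAt H (F x) x) (hF : ∀ x, HasDerivAt F (v x) x)
    (hab : a ≤ b) (hv : ∀ s ∈ Icc a b, m ≤ v s) :
    H a + (b - a) * F a + m / 2 * (b - a)^2 ≤ H b := by
  have h1 : MonotoneOn (fun x => F x - m * x) (Icc a b) := by
    apply monotoneOn_of_deriv_nonneg (convex_Icc a b)
    · exact fun x _ => ((hF x).fun_sub ((hasDerivAt_id' x).const_mul m)).continuousAt.continuousWithinAt
    · exact fun x _ => ((hF x).fun_sub ((hasDerivAt_id' x).const_mul m)).differentiableAt.differentiableWithinAt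
    · intro x hx
      rw [((hF x).fun_sub ((hasDerivAt_id' x).const_mul m)).deriv]
      have := hv x (interior_subset hx); linarith
  have hd : ∀ x, HasDerivAt (fun x => H x - (x - a) * F a - m / 2 * (x-a)^2)
      (F x - F a - m * (x - a)) x := by
    intro x
    have := ((hH x).fun_sub (((hasDerivAt_id' x).sub_const a).mul_const (F a))).fun_sub
      ((((hasDerivAt_id' x).sub_const a).fun_pow 2).const_mul (m/2))
    refine this.congr_deriv ?_
    simp; ring
  have h2 : MonotoneOn (fun x => H x - (x - a) * F a - m / 2 * (x-a)^2) (Icc a b) := by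
    apply monotoneOn_of_deriv_nonneg (convex_Icc a b)
    · exact fun x _ => (hd x).continuousAt.continuousWithinAt
    · exact fun x _ => (hd x).differentiableAt.differentiableWithinAt
    · intro x hx
      rw [(hd x).deriv]
      have hx' := interior_subset hx
      have := h1 (left_mem_Icc.2 hab) hx' hx'.1
      simp only at this; linarith
  have := h2 (left_mem_Icc.2 hab) (right_mem_Icc.2 hab) hab
  simp only [sub_self] at this
  nlinarith

lemma tangent_left {H F v : ℝ → ℝ} {a b m : ℝ} 
    (hH : ∀ x, HasDerivAt H (F x) x) (hF : ∀ x, HasDerivAt F (v x) x)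
    (hab : a ≤ b) (hv : ∀ s ∈ Icc a b, m ≤ v s) :
    H b - (b - a) * F b + m / 2 * (b - a)^2 ≤ H a := by
  have := tangent_right (H := fun x => H (-x)) (F := fun x => - F (-x)) (v := fun x => v (-x))
    (a := -b) (b := -a) (m := m) ?_ ?_ (by linarith) ?_
  · simp only [neg_neg] at this
    nlinarith
  · intro x
    simpa [Function.comp_def] using (hH (-x)).comp x (hasDerivAt_neg x)
  · intro x
    have := ((hF (-x)).comp x (hasDerivAt_neg x)).fun_neg
    simpa [Function.comp_def] using this
  · intro s hs
    exact hv _ ⟨by linarith [hs.2], by linarith [hs.1]⟩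

lemma Ker.Gop_lower {K : ℝ → ℝ} {R : ℝ} (h : Ker K R) {H F v : ℝ → ℝ}
    (hH : ∀ x, HasDerivAt H (F x) x) (hF : ∀ x, HasDerivAt F (v x) x) {ξ m : ℝ}
    (hv : ∀ s ∈ Icc (ξ - R) ξ, m ≤ v s) (hv' : ∀ s ∈ Icc ξ (ξ + R), 0 ≤ v s) :
    m / 2 * sigp K ≤ Gop K H F ξ := by
  have hHc : Continuous H := continuous_iff_continuousAt.2 fun x => (hH x).continuousAt
  rw [h.Gop_eq hHc, sigp, ← integral_const_mul]
  have e : ∀ y, m / 2 * (K y * (max y 0)^2) = K y * (m / 2 * (max y 0)^2) := fun y => by ring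
  simp_rw [e]
  apply h.mono (by fun_prop) (by fun_prop)
  intro y hy
  rw [abs_le] at hy
  rcases le_total 0 y with h0 | h0
  · rw [max_eq_left h0]
    have := tangent_left (a := ξ - y) (b := ξ) (m := m) hH hF (by linarith)
      (fun s hs => hv s ⟨by linarith [hs.1], hs.2⟩)
    simp only [sub_sub_cancel] at this
    linarith
  · rw [max_eq_right h0]
    have := tangent_right (a := ξ) (b := ξ - y) (m := 0) hH hF (by linarith)
      (fun s hs => hv' s ⟨hs.1, by linarith [hs.2]⟩)
    simp only [sub_sub_cancel_left] at this
    nlinarith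

/-- One-sided Gronwall. -/
lemma forward {z z' : ℝ → ℝ} {c M η x T : ℝ} (hc : 0 < c) (hη : 0 ≤ η) (hM : 0 ≤ M)
    (hz : ∀ x, HasDerivAt z (z' x) x) (hzx : 0 ≤ z x)
    (hle : ∀ s ∈ Icc x (x + T), c * z' s ≤ M * z s + η) :
    ∀ s ∈ Icc x (x + T), z s ≤ Real.exp (M / c * T) * (z x + η / c * T) := by
  intro s hs
  have hd : ∀ t, HasDerivAt (fun t => Real.exp (-(M / c) * (t - x)) * z t - η / c * (t - x))
      (Real.exp (-(M / c) * (t - x)) * (z' t - M / c * z t) - η / c) t := by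
    intro t
    have h1 : HasDerivAt (fun t => -(M / c) * (t - x)) (-(M/c)) t := by
      simpa using ((hasDerivAt_id t).sub_const x).const_mul (-(M/c))
    have h2 : HasDerivAt (fun t => η / c * (t - x)) (η / c) t := by
      simpa using ((hasDerivAt_id t).sub_const x).const_mul (η / c)
    refine ((h1.exp.fun_mul (hz t)).fun_sub h2).congr_deriv ?_
    ring
  have ha : AntitoneOn (fun t => Real.exp (-(M / c) * (t - x)) * z t - η / c * (t - x))
      (Icc x (x + T)) := by
    apply antitoneOn_of_deriv_nonpos (convex_Icc _ _)
    · exact fun t _ => (hd t).continuousAt.continuousWithinAt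
    · exact fun t _ => (hd t).differentiableAt.differentiableWithinAt
    · intro t ht
      rw [(hd t).deriv]
      have ht' := interior_subset ht
      have h1 := hle t ht'
      have h2 : z' t - M / c * z t ≤ η / c := by
        rw [div_mul_eq_mul_div, sub_le_iff_le_add, ← add_div, le_div_iff₀ hc]; linarith
      have h3 : Real.exp (-(M / c) * (t - x)) ≤ 1 := by
        apply Real.exp_le_one_iff.2
        have : 0 ≤ M / c := by positivity
        nlinarith [ht'.1]
      have h4 : 0 ≤ η / c := by positivity
      nlinarith [Real.exp_pos (-(M / c) * (t - x))]
  have h0 := ha (left_mem_Icc.2 (hs.1.trans hs.2)) hs hs.1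
  simp only [sub_self, mul_zero, Real.exp_zero, one_mul, sub_zero] at h0
  have hMc : 0 ≤ M / c := by positivity
  have h4 : 0 ≤ η / c := by positivity
  have h5 : Real.exp (-(M / c) * (s - x)) * z s ≤ z x + η / c * T := by nlinarith [hs.2]
  have h6 : z s = Real.exp (M / c * (s - x)) * (Real.exp (-(M / c) * (s - x)) * z s) := by
    rw [← mul_assoc, ← Real.exp_add]; ring_nf; simp
  have hT : 0 ≤ T := by linarith [hs.1, hs.2]
  rw [h6]
  refine (mul_le_mul_of_nonneg_left h5 (Real.exp_pos _).le).trans ?_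
  apply mul_le_mul_of_nonneg_right _ (by positivity)
  apply Real.exp_le_exp.2
  apply mul_le_mul_of_nonneg_left _ hMc
  linarith [hs.2]

/-- Exponentially decaying derivative. -/
lemma exp_lim {D d : ℝ → ℝ} {C α X : ℝ} (hα : 0 < α) (hD : ∀ x, HasDerivAt D (d x) x)
    (hd : ∀ x, X ≤ x → |d x| ≤ C * Real.exp (-(α * x))) :
    ∃ l, Tendsto D atTop (nhds l) ∧ ∀ x, X ≤ x → |D x - l| ≤ C / α * Real.exp (-(α * x)) := by
  have hE : ∀ x, HasDerivAt (fun x => C / α * Real.exp (-(α * x))) (-(C * Real.exp (-(α * x)))) x := by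
    intro x
    have h1 : HasDerivAt (fun x => -(α * x)) (-α) x := by
      simpa using ((hasDerivAt_id' x).const_mul α).fun_neg
    refine (h1.exp.const_mul (C / α)).congr_deriv ?_
    field_simp
  have hE0 : Tendsto (fun x => C / α * Real.exp (-(α * x))) atTop (nhds 0) := by
    have : Tendsto (fun x => Real.exp (-(α * x))) atTop (nhds 0) := by
      apply Real.tendsto_exp_atBot.comp
      exact tendsto_neg_atTop_atBot.comp (tendsto_id.const_mul_atTop hα)
    simpa using this.const_mul (C / α)
  have hC : 0 ≤ C := by
    have := (abs_nonneg _).trans (hd X le_rfl)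
    exact nonneg_of_mul_nonneg_left this (Real.exp_pos _)
  have hm : AntitoneOn (fun x => D x + C / α * Real.exp (-(α * x))) (Ici X) := by
    apply antitoneOn_of_deriv_nonpos (convex_Ici _)
    · exact fun t _ => ((hD t).fun_add (hE t)).continuousAt.continuousWithinAt
    · exact fun t _ => ((hD t).fun_add (hE t)).differentiableAt.differentiableWithinAt
    · intro t ht
      rw [((hD t).fun_add (hE t)).deriv]
      have := (abs_le.1 (hd t (interior_subset ht))).2
      linarith
  have hn : MonotoneOn (fun x => D x - C / α * Real.exp (-(α * x))) (Ici X) := by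
    apply monotoneOn_of_deriv_nonneg (convex_Ici _)
    · exact fun t _ => ((hD t).fun_sub (hE t)).continuousAt.continuousWithinAt
    · exact fun t _ => ((hD t).fun_sub (hE t)).differentiableAt.differentiableWithinAt
    · intro t ht
      rw [((hD t).fun_sub (hE t)).deriv]
      have := (abs_le.1 (hd t (interior_subset ht))).1
      linarith
  have hpos : ∀ x, 0 ≤ C / α * Real.exp (-(α * x)) := fun x => by positivity
  -- monotone extension
  have hmono : Monotone (fun x => D (max x X) - C / α * Real.exp (-(α * (max x X)))) := by
    intro a b hab
    exact hn (mem_Ici.2 (le_max_right _ _)) (mem_Ici.2 (le_max_right _ _)) (max_le_max_right _ hab)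
  have hbdd : BddAbove (range (fun x => D (max x X) - C / α * Real.exp (-(α * (max x X))))) := by
    refine ⟨D X + C / α * Real.exp (-(α * X)), ?_⟩
    rintro _ ⟨x, rfl⟩
    have := hm (mem_Ici.2 le_rfl) (le_max_right x X) (le_max_right x X)
    simp only at this ⊢
    linarith [hpos (max x X)]
  have hl := tendsto_atTop_ciSup hmono hbdd
  set l := ⨆ x, (D (max x X) - C / α * Real.exp (-(α * (max x X)))) with hldef
  have hl' : Tendsto (fun x => D x - C / α * Real.exp (-(α * x))) atTop (nhds l) := by
    refine hl.congr' ?_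
    filter_upwards [eventually_ge_atTop X] with x hx
    rw [max_eq_left hx]
  have hDl : Tendsto D atTop (nhds l) := by
    have := hl'.add hE0
    simpa using this
  refine ⟨l, hDl, fun x hx => ?_⟩
  rw [abs_le]
  constructor
  · have h1 : Tendsto (fun x => D x + C / α * Real.exp (-(α * x))) atTop (nhds l) := by
      simpa using hDl.add hE0
    have : l ≤ D x + C / α * Real.exp (-(α * x)) := by
      refine le_of_tendsto h1 ?_
      filter_upwards [eventually_ge_atTop x] with y hy
      exact hm hx (hx.trans hy) hy
    linarith
  · have : D x - C / α * Real.exp (-(α * x)) ≤ l := by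
      refine ge_of_tendsto hl' ?_
      filter_upwards [eventually_ge_atTop x] with y hy
      exact hn hx (hx.trans hy) hy
    linarith

lemma Ker.bdd_above {K : ℝ → ℝ} {R : ℝ} (h : Ker K R) (hc : 0 < ∫ y, K y * y)
    (hσ : 0 < sigp K) {V F v v1 : ℝ → ℝ}
    (hV : ∀ x, HasDerivAt V (F x) x) (hF : ∀ x, HasDerivAt F (v x) x)
    (hv : ∀ x, HasDerivAt v (v1 x) x) {X C : ℝ} (hX : 0 ≤ X) (hC : 0 ≤ C)
    (hT : ∀ ξ, X ≤ ξ → Gop K V F ξ ≤ C) (hg : ∀ ξ, X ≤ ξ → |Gop K v v1 ξ| ≤ C)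
    (hb : ∀ ξ, X ≤ ξ → v ξ ≤ C * (1 + ξ)) : ∃ C', ∀ ξ, X ≤ ξ → v ξ ≤ C' := by
  have hR := h.Rpos
  have hvc : Continuous v := continuous_iff_continuousAt.2 fun x => (hv x).continuousAt
  obtain ⟨c, hcdef⟩ : ∃ c, c = ∫ y, K y * y := ⟨_, rfl⟩
  obtain ⟨M, hMdef⟩ : ∃ M, M = ∫ y, K y * 1 := ⟨_, rfl⟩
  obtain ⟨σ, hσdef⟩ : ∃ σ, σ = ∫ y, K y * y^2 := ⟨_, rfl⟩
  rw [← hcdef] at hc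
  have hM : 0 ≤ M := by rw [hMdef]; exact h.integral_nonneg fun _ _ => zero_le_one
  have hσ0 : 0 ≤ σ := by rw [hσdef]; exact h.integral_nonneg fun _ _ => sq_nonneg _
  obtain ⟨C1, hC1⟩ : ∃ C1, C1 = Real.exp (M / c * (2 * R)) * (0 + (σ + C) / c * (2 * R)) :=
    ⟨_, rfl⟩
  obtain ⟨C0, hC0⟩ := (isCompact_Icc (a := X) (b := X + R)).exists_bound_of_continuousOn
    hvc.continuousOn
  refine ⟨max C0 (C1 + 2 * C / sigp K), ?_⟩
  have key : ∀ ε, 0 < ε → ε ≤ 1 → ∀ ξ, X ≤ ξ →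
      v ξ ≤ max C0 (C1 + 2 * C / sigp K) + ε * ξ ^ 2 := by
    intro ε hε hε1 ξ hξ
    -- existence of a maximum point of `v - ε ξ²`
    obtain ⟨x, hxX, hmax⟩ : ∃ x, X ≤ x ∧ ∀ s, X ≤ s → v s - ε * s^2 ≤ v x - ε * x^2 := by
      obtain ⟨N, hN⟩ : ∃ N, N = max (X + 1) ((2 * C + |v X| + ε * X^2) / ε) := ⟨_, rfl⟩
      have hN1 : X + 1 ≤ N := hN ▸ le_max_left _ _
      have hN2 : 2 * C + |v X| + ε * X^2 ≤ ε * N := by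
        have : (2 * C + |v X| + ε * X^2) / ε ≤ N := hN ▸ le_max_right _ _
        rw [div_le_iff₀ hε] at this; linarith
      obtain ⟨x, hx, hxm⟩ := (isCompact_Icc (a := X) (b := N)).exists_isMaxOn
        (nonempty_Icc.2 (by linarith)) (f := fun s => v s - ε * s^2) (by fun_prop)
      refine ⟨x, hx.1, fun s hs => ?_⟩
      rcases le_total s N with hsN | hsN
      · exact hxm ⟨hs, hsN⟩
      · have h1 : v X - ε * X^2 ≤ v x - ε * x^2 := hxm ⟨le_rfl, by linarith⟩
        refine le_trans ?_ h1
        have h2 := hb s hs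
        have hs1 : 1 ≤ s := by linarith
        have h3 : (2 * C + |v X| + ε * X^2) * s ≤ ε * N * s :=
          mul_le_mul_of_nonneg_right hN2 (by linarith)
        have h4 : ε * N * s ≤ ε * s^2 := by
          have := mul_le_mul_of_nonneg_right hsN (show 0 ≤ ε * s by positivity)
          nlinarith
        have h5 : 0 ≤ |v X| + ε * X^2 := by positivity
        have h6 : |v X| + ε * X^2 ≤ (|v X| + ε * X^2) * s := by nlinarith
        have h7 := neg_abs_le (v X)
        nlinarith
    have hvx : v x ≤ max C0 (C1 + 2 * C / sigp K) := by
      rcases le_total x (X + R) with hxR | hxR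
      · exact ((le_abs_self _).trans (hC0 x ⟨hxX, hxR⟩)).trans (le_max_left _ _)
      refine le_trans ?_ (le_max_right _ _)
      by_contra hcon
      push Not at hcon
      have hz0 : ∀ s, X ≤ s → 0 ≤ v x + ε * (s^2 - x^2) - v s := by
        intro s hs; have := hmax s hs; linarith
      have hfor := forward (z := fun s => v x + ε * (s^2 - x^2) - v s)
        (z' := fun s => ε * (2 * s) - v1 s) (c := c) (M := M) (η := σ + C) (x := x) (T := 2 * R)
        hc (by linarith) hM ?_ ?_ ?_
      · have hlow : ∀ s ∈ Icc x (x + 2 * R), v x - C1 ≤ v s := by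
          intro s hs
          have h1 := hfor s hs
          simp only [sub_self, mul_zero, add_zero] at h1
          rw [← hC1] at h1
          have : 0 ≤ ε * (s^2 - x^2) := by
            apply mul_nonneg hε.le; nlinarith [hs.1]
          linarith
        have hpos : 0 ≤ 2 * C / sigp K := by positivity
        have h2 := h.Gop_lower (ξ := x + R) (m := v x - C1) hV hF
          (fun s hs => hlow s ⟨by linarith [hs.1], by linarith [hs.2]⟩)
          (fun s hs => le_trans (by linarith) (hlow s ⟨by linarith [hs.1], by linarith [hs.2]⟩))
        have h3 := hT (x + R) (by linarith)
        have h4 : 2 * C / sigp K * sigp K = 2 * C := by field_simp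
        nlinarith
      · intro s
        have h1 : HasDerivAt (fun s => v x + ε * (s^2 - x^2)) (ε * (2 * s)) s := by
          have := ((((hasDerivAt_id' s).fun_pow 2).sub_const (x^2)).const_mul ε).const_add (v x)
          refine this.congr_deriv ?_
          simp
        exact h1.fun_sub (hv s)
      · simp
      · intro s hs
        have hKz : 0 ≤ ∫ y, K y * (v x + ε * ((s - y)^2 - x^2) - v (s - y)) := by
          apply h.integral_nonneg
          intro y hy
          apply hz0
          linarith [(abs_le.1 hy).2, hs.1]
        have e : ∀ y, K y * (v x + ε * ((s - y)^2 - x^2) - v (s - y))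
          = (K y * 1) * (v x + ε * (s^2 - x^2)) - (K y * y) * (2 * ε * s) + (K y * y^2) * ε
            - K y * v (s - y) := fun y => by ring
        simp_rw [e] at hKz
        have i1 : Integrable fun y => (K y * 1) * (v x + ε * (s^2 - x^2)) :=
          (h.integrable continuous_const).mul_const _
        have i2 : Integrable fun y => (K y * y) * (2 * ε * s) :=
          (h.integrable continuous_id).mul_const _
        have i3 : Integrable fun y => (K y * y^2) * ε :=
          (h.integrable (by fun_prop)).mul_const _
        have i4 : Integrable fun y => K y * v (s - y) := h.integrable (by fun_prop)
        have i12 := i1.sub i2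
        have i123 := i12.add i3
        simp only [Pi.sub_def, Pi.add_def] at i12 i123
        rw [integral_sub i123 i4, integral_add i12 i3, integral_sub i1 i2] at hKz
        rw [integral_mul_const (v x + ε * (s^2 - x^2)) (fun y => K y * 1),
          integral_mul_const _ (fun y => K y * y), integral_mul_const _ (fun y => K y * y^2),
          ← hMdef, ← hcdef, ← hσdef] at hKz
        have hG := (abs_le.1 (hg s (by linarith [hs.1]))).1
        unfold Gop at hG
        rw [← hMdef, ← hcdef] at hG
        have : σ * ε ≤ σ := by nlinarith
        nlinarith
    have h1 := hmax ξ hξ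
    have h2 : 0 ≤ ε * x^2 := by positivity
    linarith
  intro ξ hξ
  have hlim : Tendsto (fun ε : ℝ => max C0 (C1 + 2 * C / sigp K) + ε * ξ ^ 2) (nhdsWithin 0 (Ioi 0))
      (nhds (max C0 (C1 + 2 * C / sigp K) + 0 * ξ^2)) := by
    apply Tendsto.mono_left _ nhdsWithin_le_nhds
    apply Continuous.tendsto (by fun_prop : Continuous fun ε : ℝ => max C0 (C1 + 2 * C / sigp K) + ε * ξ ^ 2)
  rw [zero_mul, add_zero] at hlim
  refine ge_of_tendsto hlim ?_
  filter_upwards [Ioo_mem_nhdsGT (zero_lt_one (α := ℝ))] with ε hε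
  exact key ε hε.1 hε.2.le ξ hξ

lemma Ker.eventually_le {K : ℝ → ℝ} {R : ℝ} (h : Ker K R) (hc : 0 < ∫ y, K y * y)
    (hσ : 0 < sigp K) {V F v v1 : ℝ → ℝ}
    (hV : ∀ x, HasDerivAt V (F x) x) (hF : ∀ x, HasDerivAt F (v x) x)
    (hv : ∀ x, HasDerivAt v (v1 x) x)
    (hT : Tendsto (Gop K V F) atTop (nhds 0)) (hg : Tendsto (Gop K v v1) atTop (nhds 0))
    {C' : ℝ} (hb : ∀ᶠ ξ in atTop, v ξ ≤ C') : ∀ δ > 0, ∀ᶠ ξ in atTop, v ξ ≤ δ := by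
  have hR := h.Rpos
  have hvc : Continuous v := continuous_iff_continuousAt.2 fun x => (hv x).continuousAt
  obtain ⟨c, hcdef⟩ : ∃ c, c = ∫ y, K y * y := ⟨_, rfl⟩
  obtain ⟨M, hMdef⟩ : ∃ M, M = ∫ y, K y * 1 := ⟨_, rfl⟩
  rw [← hcdef] at hc
  have hM : 0 ≤ M := by rw [hMdef]; exact h.integral_nonneg fun _ _ => zero_le_one
  obtain ⟨S, hS⟩ : ∃ S : Set ℝ, S = {m | 0 ≤ m ∧ ∀ᶠ ξ in atTop, v ξ ≤ m} := ⟨_, rfl⟩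
  have hSne : S.Nonempty := by
    refine ⟨max C' 0, ?_⟩
    rw [hS]
    exact ⟨le_max_right _ _, hb.mono fun ξ hξ => hξ.trans (le_max_left _ _)⟩
  have hSb : BddBelow S := ⟨0, fun m hm => by rw [hS] at hm; exact hm.1⟩
  obtain ⟨m, hm⟩ : ∃ m, m = sInf S := ⟨_, rfl⟩
  have hm0 : 0 ≤ m := by rw [hm]; exact le_csInf hSne fun b hb => by rw [hS] at hb; exact hb.1
  have hup : ∀ δ > 0, ∀ᶠ ξ in atTop, v ξ ≤ m + δ := by
    intro δ hδ
    obtain ⟨b, hb, hbm⟩ := exists_lt_of_csInf_lt hSne (show sInf S < m + δ by linarith)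
    rw [hS] at hb
    exact hb.2.mono fun ξ hξ => by linarith
  rcases hm0.eq_or_lt with h0 | hmpos
  · intro δ hδ
    simpa [← h0] using hup δ hδ
  exfalso
  obtain ⟨E, hE⟩ : ∃ E, E = Real.exp (M / c * (2 * R)) * (2 + 1 / c * (2 * R)) := ⟨_, rfl⟩
  have hEpos : 0 < E := by rw [hE]; positivity
  obtain ⟨δ, hδ⟩ : ∃ δ, δ = min (m / (2 * E)) (m / 2) := ⟨_, rfl⟩
  have hδpos : 0 < δ := by rw [hδ]; positivity
  have hδ1 : E * δ ≤ m / 2 := by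
    have : δ ≤ m / (2 * E) := hδ ▸ min_le_left _ _
    rw [le_div_iff₀ (by positivity)] at this; linarith
  have hδ2 : δ ≤ m / 2 := hδ ▸ min_le_right _ _
  have hfreq : ∃ᶠ ξ in atTop, m - δ < v ξ := by
    intro hn
    have : m - δ ∈ S := by
      rw [hS]
      exact ⟨by linarith, hn.mono fun ξ hξ => not_lt.1 hξ⟩
    have := csInf_le hSb this
    linarith
  have hev := (hup δ hδpos).and
    ((hT.eventually (gt_mem_nhds (show 0 < m / 4 * sigp K by positivity))).and
      (hg.eventually (Ioo_mem_nhds (neg_lt_zero.2 hδpos) hδpos)))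
  obtain ⟨X, hX⟩ := eventually_atTop.1 hev
  obtain ⟨x, hxv, hxX⟩ := (hfreq.and_eventually (eventually_ge_atTop (X + R))).exists
  have hfor := forward (z := fun s => m + δ - v s)
        (z' := fun s => - v1 s) (c := c) (M := M) (η := δ) (x := x) (T := 2 * R)
        hc hδpos.le hM ?_ ?_ ?_
  · have hlow : ∀ s ∈ Icc x (x + 2 * R), m / 2 ≤ v s := by
      intro s hs
      have h1 := hfor s hs
      have h2 : Real.exp (M / c * (2 * R)) * (m + δ - v x + δ / c * (2 * R)) ≤ E * δ := by
        rw [hE, mul_assoc]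
        apply mul_le_mul_of_nonneg_left _ (Real.exp_pos _).le
        have : (2 + 1 / c * (2 * R)) * δ = 2 * δ + δ / c * (2 * R) := by ring
        rw [this]; linarith
      linarith
    have h2 := h.Gop_lower (ξ := x + R) (m := m / 2) hV hF
          (fun s hs => hlow s ⟨by linarith [hs.1], by linarith [hs.2]⟩)
          (fun s hs => le_trans (by linarith) (hlow s ⟨by linarith [hs.1], by linarith [hs.2]⟩))
    have h3 := (hX (x + R) (by linarith)).2.1
    linarith
  · intro s
    simpa using (hv s).const_sub (m + δ)
  · have := (hX x (by linarith)).1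
    linarith
  · intro s hs
    have hKz : 0 ≤ ∫ y, K y * (m + δ - v (s - y)) := by
      apply h.integral_nonneg
      intro y hy
      have := (hX (s - y) (by linarith [(abs_le.1 hy).2, hs.1])).1
      linarith
    have e : ∀ y, K y * (m + δ - v (s - y)) = (K y * 1) * (m + δ) - K y * v (s - y) :=
      fun y => by ring
    simp_rw [e] at hKz
    have i1 : Integrable fun y => (K y * 1) * (m + δ) :=
      (h.integrable continuous_const).mul_const _
    have i4 : Integrable fun y => K y * v (s - y) := h.integrable (by fun_prop)
    rw [integral_sub i1 i4, integral_mul_const (m + δ) (fun y => K y * 1), ← hMdef] at hKz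
    have hG := (hX s (by linarith [hs.1])).2.2.1
    unfold Gop at hG
    rw [← hMdef, ← hcdef] at hG
    nlinarith

/-- Tauberian statement: the two-fold primitive information forces `v → 0`. -/
lemma Ker.tendsto_zero {K : ℝ → ℝ} {R : ℝ} (h : Ker K R) (hc : 0 < ∫ y, K y * y)
    (hσ : 0 < sigp K) {V F v v1 : ℝ → ℝ}
    (hV : ∀ x, HasDerivAt V (F x) x) (hF : ∀ x, HasDerivAt F (v x) x)
    (hv : ∀ x, HasDerivAt v (v1 x) x)
    (hT : Tendsto (Gop K V F) atTop (nhds 0)) (hg : Tendsto (Gop K v v1) atTop (nhds 0))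
    {C X : ℝ} (hb : ∀ ξ, X ≤ ξ → |v ξ| ≤ C * (1 + ξ)) : Tendsto v atTop (nhds 0) := by
  have main : ∀ {V F v v1 : ℝ → ℝ}, (∀ x, HasDerivAt V (F x) x) → (∀ x, HasDerivAt F (v x) x) →
      (∀ x, HasDerivAt v (v1 x) x) → Tendsto (Gop K V F) atTop (nhds 0) →
      Tendsto (Gop K v v1) atTop (nhds 0) → (∀ ξ, X ≤ ξ → |v ξ| ≤ C * (1 + ξ)) →
      ∀ δ > 0, ∀ᶠ ξ in atTop, v ξ ≤ δ := by
    intro V F v v1 hV hF hv hT hg hb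
    have hev := (hT.eventually (gt_mem_nhds (zero_lt_one (α := ℝ)))).and
      (hg.eventually (Ioo_mem_nhds (neg_lt_zero.2 (zero_lt_one (α := ℝ))) zero_lt_one))
    obtain ⟨X1, hX1⟩ := eventually_atTop.1 hev
    have hbb : ∃ C', ∀ ξ, max (max X X1) 0 ≤ ξ → v ξ ≤ C' := by
      refine h.bdd_above (X := max (max X X1) 0) (C := max C 1) hc hσ hV hF hv
        (le_max_right _ _) (le_trans zero_le_one (le_max_right _ _)) ?_ ?_ ?_
      · intro ξ hξ
        have := (hX1 ξ (le_trans (le_trans (le_max_right _ _) (le_max_left _ _)) hξ)).1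
        exact this.le.trans (le_max_right _ _)
      · intro ξ hξ
        have := (hX1 ξ (le_trans (le_trans (le_max_right _ _) (le_max_left _ _)) hξ)).2
        exact (abs_le.2 ⟨this.1.le, this.2.le⟩).trans (le_max_right _ _)
      · intro ξ hξ
        have h1 := hb ξ (le_trans (le_trans (le_max_left _ _) (le_max_left _ _)) hξ)
        have h0 : 0 ≤ ξ := le_trans (le_max_right _ _) hξ
        exact ((le_abs_self _).trans h1).trans
          (mul_le_mul_of_nonneg_right (le_max_left _ _) (by linarith))
    obtain ⟨C', hC'⟩ := hbb
    exact h.eventually_le hc hσ hV hF hv hT hg (eventually_atTop.2 ⟨_, hC'⟩)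
  have m1 := main hV hF hv hT hg hb
  have m2 := main (V := fun x => - V x) (F := fun x => - F x) (v := fun x => - v x)
    (v1 := fun x => - v1 x) (fun x => (hV x).fun_neg) (fun x => (hF x).fun_neg)
    (fun x => (hv x).fun_neg) (by simpa [funext fun ξ => Gop_neg (K := K) (H := V) (F := F) ξ] using hT.neg)
    (by simpa [funext fun ξ => Gop_neg (K := K) (H := v) (F := v1) ξ] using hg.neg)
    (by simpa using hb)
  rw [Metric.tendsto_nhds]
  intro ε hε
  filter_upwards [m1 (ε/2) (by linarith), m2 (ε/2) (by linarith)] with ξ h1 h2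
  rw [Real.dist_eq, sub_zero, abs_lt]
  constructor <;> linarith

lemma Ker.Gop_cubic {K : ℝ → ℝ} {R : ℝ} (h : Ker K R) (A B ξ : ℝ) :
    Gop K (fun x => A / 6 * x^3 + B / 2 * x^2) (fun x => A / 2 * x^2 + B * x) ξ
      = (A / 2 * ξ + B / 2) * (∫ y, K y * y^2) - A / 6 * ∫ y, K y * y^3 := by
  rw [h.Gop_eq (by fun_prop)]
  have e : ∀ y, K y * (A / 6 * (ξ - y)^3 + B / 2 * (ξ - y)^2 - (A / 6 * ξ^3 + B / 2 * ξ^2)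
      + y * (A / 2 * ξ^2 + B * ξ))
      = (A / 2 * ξ + B / 2) * (K y * y^2) - A / 6 * (K y * y^3) := fun y => by ring
  simp_rw [e]
  rw [integral_sub ((h.integrable (by fun_prop)).const_mul _)
    ((h.integrable (by fun_prop)).const_mul _), integral_const_mul, integral_const_mul]

lemma Ker.Gop_affine {K : ℝ → ℝ} {R : ℝ} (h : Ker K R) (A B ξ : ℝ) :
    Gop K (fun x => A * x + B) (fun _ => A) ξ = 0 := by
  rw [h.Gop_eq (by fun_prop)]
  have e : ∀ y, K y * (A * (ξ - y) + B - (A * ξ + B) + y * A) = 0 := fun y => by ring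
  simp_rw [e]
  simp

lemma Ker.core {K : ℝ → ℝ} {R : ℝ} (h : Ker K R) (hc : 0 < ∫ y, K y * y)
    (hσ : 0 < sigp K) {lam α C0 C1 X : ℝ} (hlam : 0 < lam) (hα : 0 < α) (hC0 : 0 ≤ C0)
    {u u1 : ℝ → ℝ} (hu : ∀ x, HasDerivAt u (u1 x) x) (hpos : ∀ x, 0 < u x)
    (hmono : ∀ a b, a ≤ b → u b * Real.exp (-(lam * b)) ≤ u a * Real.exp (-(lam * a)))
    (hq : ∀ ξ, X ≤ ξ → |Gop K u u1 ξ| ≤ C0 * u ξ ^ 2 * Real.exp (-(lam * ξ)))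
    (he : ∀ ξ, X ≤ ξ → |Gop K u u1 ξ| ≤ C1 * Real.exp (-(α * ξ))) :
    ∃ A B : ℝ, 0 ≤ A ∧ (0 < A ∨ (A = 0 ∧ 0 < B)) ∧
      Tendsto (fun ξ => u ξ - (A * ξ + B)) atTop (nhds 0) := by
  have hR := h.Rpos
  have huc : Continuous u := continuous_iff_continuousAt.2 fun x => (hu x).continuousAt
  obtain ⟨F, hF⟩ : ∃ F : ℝ → ℝ, ∀ x, HasDerivAt F (u x) x :=
    ⟨fun x => ∫ s in (0:ℝ)..x, u s, fun x => (huc.integral_hasStrictDerivAt 0 x).hasDerivAt⟩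
  have hFc : Continuous F := continuous_iff_continuousAt.2 fun x => (hF x).continuousAt
  obtain ⟨H, hH⟩ : ∃ H : ℝ → ℝ, ∀ x, HasDerivAt H (F x) x :=
    ⟨fun x => ∫ s in (0:ℝ)..x, F s, fun x => (hFc.integral_hasStrictDerivAt 0 x).hasDerivAt⟩
  have hHc : Continuous H := continuous_iff_continuousAt.2 fun x => (hH x).continuousAt
  obtain ⟨σ, hσdef⟩ : ∃ σ, σ = ∫ y, K y * y^2 := ⟨_, rfl⟩
  have hσpos : 0 < σ := by
    refine hσ.trans_le ?_
    rw [hσdef]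
    apply h.mono (by fun_prop) (by fun_prop)
    intro y _
    rcases le_total 0 y with h0 | h0
    · rw [max_eq_left h0]
    · rw [max_eq_right h0]; nlinarith
  obtain ⟨κ, hκ⟩ : ∃ κ, κ = Real.exp (-(lam * R)) / 2 * sigp K := ⟨_, rfl⟩
  have hκpos : 0 < κ := by rw [hκ]; positivity
  have hlow : ∀ ξ, κ * u ξ ≤ Gop K H F ξ := by
    intro ξ
    have := h.Gop_lower (ξ := ξ) (m := u ξ * Real.exp (-(lam * R))) hH hF ?_
      (fun s _ => (hpos s).le)
    · rw [hκ]; linarith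
    · intro s hs
      have h1 := hmono s ξ hs.2
      have h2 : u ξ * Real.exp (-(lam * R)) 
          = u ξ * Real.exp (-(lam * ξ)) * Real.exp (lam * (ξ - R)) := by
        rw [mul_assoc, ← Real.exp_add]; ring_nf
      have h3 : u s = u s * Real.exp (-(lam * s)) * Real.exp (lam * s) := by
        rw [mul_assoc, ← Real.exp_add]; simp
      rw [h2, h3]
      apply mul_le_mul h1 _ (Real.exp_pos _).le (mul_pos (hpos s) (Real.exp_pos _)).le
      apply Real.exp_le_exp.2
      apply mul_le_mul_of_nonneg_left hs.1 hlam.le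
  obtain ⟨a, ha, hab⟩ := exp_lim hα (h.Gop_hasDerivAt hF hu) he
  have hT' : ∀ x, HasDerivAt (fun x => Gop K H F x - a * x) (Gop K F u x - a) x := by
    intro x
    simpa using (h.Gop_hasDerivAt hH hF x).fun_sub ((hasDerivAt_id' x).const_mul a)
  obtain ⟨b, hb, -⟩ := exp_lim hα hT' hab
  -- `a ≥ 0`
  have ha0 : 0 ≤ a := by
    by_contra hneg
    push Not at hneg
    have h1 : Tendsto (fun x => (Gop K H F x - a * x) + a * x) atTop atBot :=
      hb.add_atBot (tendsto_id.const_mul_atTop_of_neg hneg)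
    obtain ⟨x, hx⟩ := (h1.eventually (eventually_lt_atBot 0)).exists
    have := hlow x
    have := mul_pos hκpos (hpos x)
    linarith
  obtain ⟨k3, hk3⟩ : ∃ k, k = ∫ y, K y * y^3 := ⟨_, rfl⟩
  obtain ⟨A, hA⟩ : ∃ A, A = 2 * a / σ := ⟨_, rfl⟩
  obtain ⟨B, hB⟩ : ∃ B, B = 2 / σ * (b + A / 6 * k3) := ⟨_, rfl⟩
  have hA0 : 0 ≤ A := by rw [hA]; positivity
  have hlimv : Tendsto (fun ξ => u ξ - (A * ξ + B)) atTop (nhds 0) := by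
    obtain ⟨X1, hX1⟩ := eventually_atTop.1 (hb.eventually (gt_mem_nhds (show b < b + 1 by linarith)))
    refine h.tendsto_zero hc hσ (V := fun x => H x - (A / 6 * x^3 + B / 2 * x^2))
      (F := fun x => F x - (A / 2 * x^2 + B * x)) (v1 := fun x => u1 x - A) ?_ ?_ ?_ ?_ ?_
      (C := (a + |b| + 1) / κ + A + |B|) (X := max X1 0) ?_
    · intro x
      refine (hH x).fun_sub ?_
      have := (((hasDerivAt_id' x).fun_pow 3).const_mul (A/6)).fun_add
        (((hasDerivAt_id' x).fun_pow 2).const_mul (B/2))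
      refine this.congr_deriv ?_
      simp; ring
    · intro x
      refine (hF x).fun_sub ?_
      have := (((hasDerivAt_id' x).fun_pow 2).const_mul (A/2)).fun_add
        ((hasDerivAt_id' x).const_mul B)
      refine this.congr_deriv ?_
      simp; ring
    · intro x
      refine (hu x).fun_sub ?_
      simpa using ((hasDerivAt_id' x).const_mul A).add_const B
    · have e : Gop K (fun x => H x - (A / 6 * x^3 + B / 2 * x^2))
          (fun x => F x - (A / 2 * x^2 + B * x)) = fun x => (Gop K H F x - a * x) - b := by
        funext x
        rw [h.Gop_sub hHc (by fun_prop), h.Gop_cubic, ← hσdef, ← hk3, hB, hA]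
        field_simp
        ring
      rw [e]
      simpa using hb.sub_const b
    · have e : Gop K (fun x => u x - (A * x + B)) (fun x => u1 x - A) = Gop K u u1 := by
        funext x
        rw [h.Gop_sub huc (by fun_prop), h.Gop_affine, sub_zero]
      rw [e]
      apply squeeze_zero_norm' (a := fun ξ => C1 * Real.exp (-(α * ξ)))
      · filter_upwards [eventually_ge_atTop X] with ξ hξ using he ξ hξ
      · have : Tendsto (fun x => Real.exp (-(α * x))) atTop (nhds 0) := by
          apply Real.tendsto_exp_atBot.comp
          exact tendsto_neg_atTop_atBot.comp (tendsto_id.const_mul_atTop hα)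
        simpa using this.const_mul C1
    · intro ξ hξ
      have h0 : 0 ≤ ξ := le_trans (le_max_right _ _) hξ
      have h1 := hX1 ξ (le_trans (le_max_left _ _) hξ)
      have h2 := hlow ξ
      have h3 : u ξ ≤ (a + |b| + 1) / κ * (1 + ξ) := by
        rw [div_mul_eq_mul_div, le_div_iff₀ hκpos]
        have := le_abs_self b
        have : 0 ≤ |b| * ξ := by positivity
        nlinarith
      have h4 := hpos ξ
      have h5 : |u ξ - (A * ξ + B)| ≤ |u ξ| + (|A * ξ| + |B|) :=
        (abs_sub _ _).trans (add_le_add le_rfl (abs_add_le _ _))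
      rw [abs_of_pos h4, abs_of_nonneg (mul_nonneg hA0 h0)] at h5
      have : 0 ≤ |B| * ξ := by positivity
      nlinarith
  refine ⟨A, B, hA0, ?_, hlimv⟩
  rcases hA0.eq_or_lt with hA' | hA'
  swap
  · exact Or.inl hA'
  right
  refine ⟨hA'.symm, ?_⟩
  have ha' : a = 0 := by
    have : 2 * a / σ = 0 := by rw [← hA, ← hA']
    field_simp at this; linarith
  subst ha'
  have hA0' : A = 0 := hA'.symm
  subst hA0'
  have huB : Tendsto u atTop (nhds B) := by
    have := hlimv.add_const B
    simpa using this
  have hB0 : 0 ≤ B := ge_of_tendsto huB (Eventually.of_forall fun x => (hpos x).le)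
  rcases hB0.eq_or_lt with hB' | hB'
  swap
  · exact hB'
  exfalso
  have hb0 : b = 0 := by
    have : 2 / σ * (b + 0 / 6 * k3) = 0 := by rw [← hB, ← hB']
    field_simp at this
    simpa using this
  rw [← hB'] at huB
  simp only [zero_mul, sub_zero] at hb
  rw [hb0] at hb
  have hexp : Tendsto (fun x => C0 / lam / lam * Real.exp (-(lam * x))) atTop (nhds 0) := by
    have : Tendsto (fun x => Real.exp (-(lam * x))) atTop (nhds 0) := by
      apply Real.tendsto_exp_atBot.comp
      exact tendsto_neg_atTop_atBot.comp (tendsto_id.const_mul_atTop hlam)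
    simpa using this.const_mul (C0 / lam / lam)
  obtain ⟨X2, hX2⟩ := eventually_atTop.1 ((huB.eventually (gt_mem_nhds (zero_lt_one (α := ℝ)))).and
    (hexp.eventually (gt_mem_nhds (show 0 < κ / 2 by linarith))))
  have step : ∀ n : ℕ, ∀ ξ, max X X2 ≤ ξ → u ξ ≤ (1/2)^n := by
    intro n
    induction n with
    | zero => intro ξ hξ; simpa using (hX2 ξ (le_trans (le_max_right _ _) hξ)).1.le
    | succ n ih =>
      obtain ⟨D, hD⟩ : ∃ D : ℝ, D = (1/2)^n := ⟨_, rfl⟩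
      have hD0 : 0 < D := by rw [hD]; positivity
      have hD1 : D ≤ 1 := by rw [hD]; exact pow_le_one₀ (by norm_num) (by norm_num)
      rw [← hD] at ih
      intro ξ hξ
      rw [pow_succ, ← hD]
      have hg : ∀ s, max X X2 ≤ s → |Gop K u u1 s| ≤ C0 * D^2 * Real.exp (-(lam * s)) := by
        intro s hs
        refine (hq s (le_trans (le_max_left _ _) hs)).trans ?_
        apply mul_le_mul_of_nonneg_right _ (Real.exp_pos _).le
        apply mul_le_mul_of_nonneg_left _ hC0
        exact pow_le_pow_left₀ (hpos s).le (ih s hs) 2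
      obtain ⟨l1, hl1, hl1'⟩ := exp_lim hlam (h.Gop_hasDerivAt hF hu) hg
      have : l1 = 0 := tendsto_nhds_unique hl1 ha
      subst this
      simp only [sub_zero] at hl1'
      obtain ⟨l2, hl2, hl2'⟩ := exp_lim hlam (h.Gop_hasDerivAt hH hF) hl1'
      have : l2 = 0 := tendsto_nhds_unique hl2 hb
      subst this
      simp only [sub_zero] at hl2'
      have h1 := (le_abs_self _).trans (hl2' ξ hξ)
      have h2 := hlow ξ
      have h3 := (hX2 ξ (le_trans (le_max_right _ _) hξ)).2
      have h4 : C0 * D^2 / lam / lam * Real.exp (-(lam * ξ))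
        = D^2 * (C0 / lam / lam * Real.exp (-(lam * ξ))) := by ring
      rw [h4] at h1
      have h5 : D^2 * (C0 / lam / lam * Real.exp (-(lam * ξ))) ≤ D * (κ / 2) := by
        apply mul_le_mul _ h3.le (by positivity) hD0.le
        nlinarith
      have h6 : κ * u ξ ≤ κ * (D * (1/2)) := by linarith
      exact le_of_mul_le_mul_left h6 hκpos
  have hlim : Tendsto (fun n : ℕ => ((1:ℝ)/2)^n) atTop (nhds 0) :=
    tendsto_pow_atTop_nhds_zero_of_lt_one (by norm_num) (by norm_num)
  have := ge_of_tendsto hlim (Eventually.of_forall fun n => step n (max X X2) le_rfl)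
  linarith [hpos (max X X2)]

lemma gauss_int {θ lam : ℝ} (hθ : 0 < θ) :
    Integrable (fun x : ℝ => Real.exp (lam * x - θ * x^2)) ∧
    Integrable (fun x : ℝ => x * Real.exp (lam * x - θ * x^2)) := by
  obtain ⟨a, ha⟩ : ∃ a, a = lam / (2 * θ) := ⟨_, rfl⟩
  have e : ∀ x, Real.exp (lam * x - θ * x^2)
      = Real.exp (θ * a^2) * Real.exp (-θ * (x - a)^2) := by
    intro x
    rw [← Real.exp_add, ha]; congr 1; field_simp; ring
  have i1 : Integrable (fun x : ℝ => Real.exp (-θ * (x - a)^2)) :=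
    (integrable_exp_neg_mul_sq hθ).comp_sub_right a
  have i2 : Integrable (fun x : ℝ => (x - a) * Real.exp (-θ * (x - a)^2)) :=
    (integrable_mul_exp_neg_mul_sq hθ).comp_sub_right a
  constructor
  · simp_rw [e]; exact i1.const_mul _
  · have e2 : ∀ x, x * Real.exp (lam * x - θ * x^2) = Real.exp (θ * a^2) *
      ((x - a) * Real.exp (-θ * (x - a)^2)) + (Real.exp (θ * a^2) * a) * Real.exp (-θ * (x - a)^2) := by
      intro x; rw [e]; ring
    simp_rw [e2]
    exact (i2.const_mul _).add (i1.const_mul _)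

set_option maxHeartbeats 4000000 in
lemma Ker.decay {J : ℝ → ℝ} {R : ℝ} (h : Ker J R) (heven : ∀ x, J (-x) = J x)
    (hmass : ∫ y, J y = 1) {c γ lam κ Cr : ℝ} (hc : 0 < c) (hγ : 0 < γ) (hlam : 0 < lam)
    (hκ : 0 < κ) (hCr : 0 ≤ Cr)
    (hM1 : ∀ s, 1 ≤ ∫ y, J y * Real.exp (s * y))
    (hΦ : ∀ s, 0 ≤ s → s ≤ lam → κ ≤ (∫ y, J y * Real.exp (s * y)) - 1 - c * s + γ)
    {W W1 r : ℝ → ℝ} (hW : ∀ x, HasDerivAt W (W1 x) x) (hpos : ∀ x, 0 < W x)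
    (hle1 : ∀ x, W x ≤ 1) (hanti : Antitone W) (hlim : Tendsto W atTop (nhds 0))
    (hrc : Continuous r) (hr : ∀ x, |r x| ≤ Cr * W x ^ 2)
    (heq : ∀ ξ, (∫ y, J (ξ - y) * W y) - W ξ + c * W1 ξ + γ * W ξ = r ξ) :
    ∃ C, ∀ ξ, 1 ≤ ξ → W ξ ≤ C * Real.exp (-(lam * ξ)) := by
  have hR := h.Rpos
  have hWc : Continuous W := continuous_iff_continuousAt.2 fun x => (hW x).continuousAt
  have hJi : Integrable J := by simpa using h.integrable (continuous_const (y := (1:ℝ)))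
  have hJ1 : ∫ y, J y * 1 = 1 := by simpa using hmass
  have hκγ : κ ≤ γ := by
    have := hΦ 0 le_rfl hlam.le
    simp only [zero_mul, Real.exp_zero, mul_zero] at this
    linarith
  -- threshold beyond which the remainder is small
  obtain ⟨X, hX0, hX⟩ : ∃ X, 0 ≤ X ∧ ∀ ξ, X ≤ ξ → Cr * W ξ ≤ κ / 4 := by
    have h1 : Tendsto (fun ξ => Cr * W ξ) atTop (nhds 0) := by simpa using hlim.const_mul Cr
    obtain ⟨X, hX⟩ := eventually_atTop.1 (h1.eventually (gt_mem_nhds (show 0 < κ / 4 by linarith)))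
    exact ⟨max X 0, le_max_right _ _, fun ξ hξ => (hX ξ (le_trans (le_max_left _ _) hξ)).le⟩
  obtain ⟨D, hD⟩ : ∃ D, D = (1 + c * lam + Cr + 2 * c / lam) * Real.exp (lam * X / 2) := ⟨_, rfl⟩
  obtain ⟨E, hE⟩ : ∃ E : ℝ → ℝ, E = (Iio X).indicator fun ξ => D * Real.exp (lam / 2 * ξ) := ⟨_, rfl⟩
  have hD0 : 0 ≤ D := by rw [hD]; positivity
  have hEint : Integrable E := by
    rw [hE, integrable_indicator_iff measurableSet_Iio]
    exact ((integrableOn_exp_mul_Iic (by positivity) X).mono_set Iio_subset_Iic_self).const_mul D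
  have hE0 : ∀ ξ, 0 ≤ E ξ := by
    intro ξ; rw [hE]; exact indicator_nonneg (fun _ _ => by positivity) _
  obtain ⟨IE, hIE⟩ : ∃ IE, IE = ∫ ξ, E ξ := ⟨_, rfl⟩
  obtain ⟨θ0, hθ0⟩ : ∃ θ0, θ0 = min (1/2) (min κ 1 / (2 * ((R^2 + 1) * Real.exp (lam * R)))) := ⟨_, rfl⟩
  have hθ0pos : 0 < θ0 := by rw [hθ0]; positivity
  have key : ∀ θ, 0 < θ → θ ≤ θ0 → ∀ ξ0, 1 ≤ ξ0 →
      κ / 4 * (W ξ0 * Real.exp (lam * (ξ0 - 1) - θ * ξ0^2)) ≤ IE := by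
    intro θ hθ hθle ξ0 hξ0
    have hθ2 : θ ≤ 1 / 2 := hθle.trans (hθ0 ▸ min_le_left _ _)
    have hθ3' : θ * ((R^2 + 1) * Real.exp (lam * R)) ≤ min κ 1 / 2 := by
      have : θ ≤ min κ 1 / (2 * ((R^2 + 1) * Real.exp (lam * R))) := hθle.trans (hθ0 ▸ min_le_right _ _)
      rw [le_div_iff₀ (by positivity)] at this
      linarith
    have hθ3 : θ * ((R^2 + 1) * Real.exp (lam * R)) ≤ κ / 2 := by
      linarith [min_le_left κ 1]
    have hθ4 : θ * ((R^2 + 1) * Real.exp (lam * R)) ≤ 1 / 2 := by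
      linarith [min_le_right κ 1]
    obtain ⟨φ, hφ⟩ : ∃ φ : ℝ → ℝ, φ = fun x => Real.exp (lam * x - θ * x^2) := ⟨_, rfl⟩
    have hφpos : ∀ x, 0 < φ x := fun x => by rw [hφ]; exact Real.exp_pos _
    have hφc : Continuous φ := by rw [hφ]; fun_prop
    have hφi : Integrable φ := by rw [hφ]; exact (gauss_int hθ).1
    have hxφi : Integrable (fun x => x * φ x) := by rw [hφ]; exact (gauss_int hθ).2
    have hφd : ∀ x, HasDerivAt φ ((lam - 2 * θ * x) * φ x) x := by
      intro x
      rw [hφ]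
      have h1 : HasDerivAt (fun x => lam * x - θ * x^2) (lam - 2 * θ * x) x := by
        refine (((hasDerivAt_id' x).const_mul lam).fun_sub
          (((hasDerivAt_id' x).fun_pow 2).const_mul θ)).congr_deriv ?_
        simp; ring
      refine h1.exp.congr_deriv ?_
      ring
    have hφle : ∀ x, φ x ≤ Real.exp (lam * x) := by
      intro x; rw [hφ]; apply Real.exp_le_exp.2; nlinarith [sq_nonneg x]
    have bddW : ∀ {g : ℝ → ℝ}, Integrable g → Integrable fun x => g x * W x := by
      intro g hg
      refine hg.mul_bdd (c := 1) hWc.aestronglyMeasurable ?_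
      exact Eventually.of_forall fun x => by
        rw [Real.norm_of_nonneg (hpos x).le]; exact hle1 x
    -- Fubini
    have hprod : Integrable (Function.uncurry fun s ξ => φ ξ * J (s - ξ) * W s)
        ((volume : Measure ℝ).prod volume) := by
      have h1 := hφi.convolution_integrand (ContinuousLinearMap.mul ℝ ℝ) hJi (μ := volume) (ν := volume)
      refine h1.mono ?_ ?_
      · have hJc := h.cont
        exact (by fun_prop : Continuous (Function.uncurry fun s ξ => φ ξ * J (s - ξ) * W s)).aestronglyMeasurable
      · refine Eventually.of_forall fun p => ?_
        simp only [Function.uncurry, ContinuousLinearMap.mul_apply']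
        rw [norm_mul _ (W p.1), Real.norm_of_nonneg (hpos p.1).le]
        exact mul_le_of_le_one_right (norm_nonneg _) (hle1 _)
    have hswap := integral_integral_swap hprod
    obtain ⟨P, hP⟩ : ∃ P : ℝ → ℝ, P = fun s => ∫ y, J y * φ (s + y) := ⟨_, rfl⟩
    have hL : ∀ s, ∫ ξ, φ ξ * J (s - ξ) * W s = P s * W s := by
      intro s
      rw [integral_mul_const, hP]
      congr 1
      rw [← integral_add_left_eq_self (fun ξ => φ ξ * J (s - ξ)) s]
      congr 1; funext y
      rw [sub_add_cancel_left, heven]; ring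
    have hRt : ∀ ξ, ∫ s, φ ξ * J (s - ξ) * W s = φ ξ * ∫ y, J (ξ - y) * W y := by
      intro ξ
      rw [← integral_const_mul]
      congr 1; funext s
      rw [← heven (s - ξ), neg_sub]; ring
    have hPWi : Integrable fun s => P s * W s := by
      have := hprod.integral_prod_left
      simpa only [Function.uncurry, hL] using this
    have hφNi : Integrable fun ξ => φ ξ * ∫ y, J (ξ - y) * W y := by
      have := hprod.integral_prod_right
      simpa only [Function.uncurry, hRt] using this
    simp only [hL, hRt] at hswap
    have hφri : Integrable fun ξ => φ ξ * r ξ := by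
      refine hφi.mul_bdd (c := Cr) hrc.aestronglyMeasurable ?_
      refine Eventually.of_forall fun x => (hr x).trans ?_
      have : W x ^ 2 ≤ 1 := pow_le_one₀ (hpos x).le (hle1 x)
      nlinarith
    have hφWi := bddW hφi
    have hxφWi := bddW hxφi
    have hW1 : ∀ x, φ x * W1 x = (1/c) * (φ x * r x - φ x * (∫ y, J (x - y) * W y)
        + (1 - γ) * (φ x * W x)) := by
      intro x
      rw [← heq x]; field_simp; ring
    have hφW1i : Integrable fun x => φ x * W1 x := by
      simp_rw [hW1]
      exact ((hφri.sub hφNi).add (hφWi.const_mul _)).const_mul _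
    have hφ'Wi : Integrable fun x => ((lam - 2 * θ * x) * φ x) * W x := by
      have : ∀ x, ((lam - 2 * θ * x) * φ x) * W x = lam * (φ x * W x) - 2 * θ * (x * φ x * W x) :=
        fun x => by ring
      simp_rw [this]
      exact (hφWi.const_mul _).sub (hxφWi.const_mul _)
    have hibp := integral_mul_deriv_eq_deriv_mul_of_integrable (fun x _ => hφd x) (fun x _ => hW x)
      hφW1i hφ'Wi hφWi
    -- the vanishing quantity
    have hzero : ∫ x, (P x * W x - (1 - γ) * (φ x * W x) - c * (((lam - 2 * θ * x) * φ x) * W x)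
        - φ x * r x) = 0 := by
      have j1 : Integrable fun x => P x * W x - (1 - γ) * (φ x * W x) := hPWi.sub (hφWi.const_mul _)
      have j2 : Integrable fun x => P x * W x - (1 - γ) * (φ x * W x)
        - c * (((lam - 2 * θ * x) * φ x) * W x) := j1.sub (hφ'Wi.const_mul _)
      rw [integral_sub j2 hφri, integral_sub j1 (hφ'Wi.const_mul _),
        integral_sub hPWi (hφWi.const_mul _), integral_const_mul, integral_const_mul, hswap]
      have e1 : ∀ x, φ x * (∫ y, J (x - y) * W y) = (1 - γ) * (φ x * W x) - c * (φ x * W1 x)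
          + φ x * r x := by
        intro x; rw [← heq x]; ring
      have j3 : Integrable fun x => (1 - γ) * (φ x * W x) - c * (φ x * W1 x) :=
        (hφWi.const_mul _).sub (hφW1i.const_mul _)
      rw [integral_congr_ae (Eventually.of_forall e1), integral_add j3 hφri,
        integral_sub (hφWi.const_mul _) (hφW1i.const_mul _), integral_const_mul, integral_const_mul,
        hibp]
      ring
    have hqi : Integrable fun x => (P x * W x - (1 - γ) * (φ x * W x)
        - c * (((lam - 2 * θ * x) * φ x) * W x) - φ x * r x) :=
      ((hPWi.sub (hφWi.const_mul _)).sub (hφ'Wi.const_mul _)).sub hφri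
    obtain ⟨m, hm⟩ : ∃ m, m = W ξ0 * Real.exp (lam * (ξ0 - 1) - θ * ξ0^2) := ⟨_, rfl⟩
    have hm0 : 0 ≤ m := by rw [hm]; exact (mul_pos (hpos _) (Real.exp_pos _)).le
    -- bound on P for ξ ≥ 0
    have hP0 : ∀ x, 0 ≤ P x := by
      intro x; rw [hP]
      exact h.integral_nonneg fun y _ => (hφpos _).le
    have hPlow : ∀ x, 0 ≤ x → (1 + c * (lam - 2 * θ * x) - γ + κ / 2) * φ x ≤ P x := by
      intro x hx
      obtain ⟨s, hs⟩ : ∃ s, s = lam - 2 * θ * x := ⟨_, rfl⟩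
      have hslam : s ≤ lam := by rw [hs]; nlinarith
      have h1 : (1 - θ * R^2) * (∫ y, J y * Real.exp (s * y)) * φ x ≤ P x := by
        rw [hP, mul_right_comm, ← integral_const_mul]
        have e : ∀ y, (1 - θ * R^2) * φ x * (J y * Real.exp (s * y))
          = J y * ((1 - θ * R^2) * φ x * Real.exp (s * y)) := fun y => by ring
        simp_rw [e]
        apply h.mono (by fun_prop) (by fun_prop)
        intro y hy
        have e2 : φ (x + y) = Real.exp (-(θ * y^2)) * φ x * Real.exp (s * y) := by
          rw [hφ, hs]; simp only
          rw [← Real.exp_add, ← Real.exp_add]; congr 1; ring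
        rw [e2]
        apply mul_le_mul_of_nonneg_right _ (Real.exp_pos _).le
        apply mul_le_mul_of_nonneg_right _ (hφpos x).le
        have h2 := Real.add_one_le_exp (-(θ * y^2))
        have h3 : y^2 ≤ R^2 := sq_le_sq' (abs_le.1 hy).1 (abs_le.1 hy).2
        nlinarith
      refine le_trans (mul_le_mul_of_nonneg_right ?_ (hφpos x).le) h1
      rw [← hs]
      have hexp1 : 1 ≤ Real.exp (lam * R) := Real.one_le_exp (by positivity)
      have hθR0 : θ * R^2 * Real.exp (lam * R) ≤ θ * ((R^2 + 1) * Real.exp (lam * R)) := by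
        have : 0 ≤ θ * Real.exp (lam * R) := by positivity
        linarith
      have hθRn : 0 ≤ θ * R^2 := by positivity
      have hθR1 : θ * R^2 ≤ θ * R^2 * Real.exp (lam * R) := le_mul_of_one_le_right hθRn hexp1
      rcases le_total 0 s with hs0 | hs0
      · have h2 := hΦ s hs0 hslam
        have h3 : ∫ y, J y * Real.exp (s * y) ≤ Real.exp (lam * R) := by
          have : ∫ y, J y * Real.exp (s * y) ≤ ∫ y, J y * Real.exp (lam * R) := by
            apply h.mono (by fun_prop) (by fun_prop)
            intro y hy
            apply Real.exp_le_exp.2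
            have hy' := (abs_le.1 hy).2
            exact (mul_le_mul_of_nonneg_left hy' hs0).trans (mul_le_mul_of_nonneg_right hslam hR.le)
          rwa [integral_mul_const, hmass, one_mul] at this
        have h4 := mul_le_mul_of_nonneg_left h3 hθRn
        linarith
      · have h2 := hM1 s
        have h5 : (1 - θ * R^2) * 1 ≤ (1 - θ * R^2) * ∫ y, J y * Real.exp (s * y) :=
          mul_le_mul_of_nonneg_left h2 (by linarith)
        have h6 : c * s ≤ 0 := mul_nonpos_of_nonneg_of_nonpos hc.le hs0
        linarith
    have hpt : ∀ x, κ / 4 * (Icc (ξ0 - 1) ξ0).indicator (fun _ => m) x - E x ≤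
        (P x * W x - (1 - γ) * (φ x * W x) - c * (((lam - 2 * θ * x) * φ x) * W x)
        - φ x * r x) := by
      intro x
      have hWx := hpos x
      have hW1x := hle1 x
      have hφx := hφpos x
      have hrx := (abs_le.1 (hr x)).2
      rcases lt_or_ge x 0 with hx | hx
      · rw [indicator_of_notMem (by intro hh; linarith [hh.1]), hE,
          indicator_of_mem (show x ∈ Iio X from lt_of_lt_of_le hx hX0)]
        have h1 : Real.exp (lam * x) = Real.exp (lam / 2 * x) * Real.exp (lam / 2 * x) := by
          rw [← Real.exp_add]; ring_nf
        have h2 : Real.exp (lam / 2 * x) ≤ 1 := Real.exp_le_one_iff.2 (by nlinarith)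
        have h3 : -x * Real.exp (lam / 2 * x) ≤ 2 / lam := by
          have h4 := Real.add_one_le_exp (-(lam / 2 * x))
          have h5 : -x ≤ 2 / lam * Real.exp (-(lam / 2 * x)) := by
            rw [div_mul_eq_mul_div, le_div_iff₀ hlam]; linarith
          have h6 : Real.exp (-(lam / 2 * x)) * Real.exp (lam / 2 * x) = 1 := by
            rw [← Real.exp_add]; simp
          have := mul_le_mul_of_nonneg_right h5 (Real.exp_pos (lam / 2 * x)).le
          rwa [mul_assoc, h6, mul_one] at this
        have hexpX : 1 ≤ Real.exp (lam * X / 2) := Real.one_le_exp (by positivity)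
        have h7 : (1 + c * lam + Cr + c * (-x)) * Real.exp (lam * x)
            ≤ D * Real.exp (lam / 2 * x) := by
          rw [h1, ← mul_assoc]
          apply mul_le_mul_of_nonneg_right _ (Real.exp_pos _).le
          have h8 : c * (-x * Real.exp (lam / 2 * x)) ≤ 2 * c / lam := by
            have := mul_le_mul_of_nonneg_left h3 hc.le
            calc _ ≤ _ := this
              _ = _ := by ring
          have h9 : (1 + c * lam + Cr) * Real.exp (lam / 2 * x) ≤ 1 + c * lam + Cr :=
            mul_le_of_le_one_right (by positivity) h2
          have h10 : 1 + c * lam + Cr + 2 * c / lam ≤ D := by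
            rw [hD]; exact le_mul_of_one_le_right (by positivity) hexpX
          linarith
        have h11 : P x * W x ≥ 0 := mul_nonneg (hP0 x) hWx.le
        have h12 : (1 + c * (lam - 2 * θ * x)) * (φ x * W x) ≤
            (1 + c * lam + c * (-x)) * φ x := by
          have a1 : φ x * W x ≤ φ x := mul_le_of_le_one_right hφx.le hW1x
          have a2 : 1 + c * (lam - 2 * θ * x) ≤ 1 + c * lam + c * (-x) := by
            have := mul_nonneg (mul_nonneg hc.le (show 0 ≤ 1 - 2 * θ by linarith)) (neg_pos.2 hx).le
            linarith
          have a3 : 0 ≤ 1 + c * lam + c * (-x) := by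
            linarith [mul_pos hc hlam, mul_pos hc (neg_pos.2 hx)]
          exact mul_le_mul a2 a1 (mul_pos hφx hWx).le a3
        have h13 : φ x * r x ≤ Cr * φ x := by
          have : r x ≤ Cr := hrx.trans (mul_le_of_le_one_right hCr (pow_le_one₀ hWx.le hW1x))
          have := mul_le_mul_of_nonneg_left this hφx.le
          linarith
        have h14 : (1 + c * lam + Cr + c * (-x)) * φ x ≤
            (1 + c * lam + Cr + c * (-x)) * Real.exp (lam * x) := by
          apply mul_le_mul_of_nonneg_left (hφle x)
          linarith [mul_pos hc hlam, mul_pos hc (neg_pos.2 hx)]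
        have h15 : 0 ≤ γ * (φ x * W x) := by positivity
        linarith
      · have hPx := mul_le_mul_of_nonneg_right (hPlow x hx) hWx.le
        have hind : (Icc (ξ0 - 1) ξ0).indicator (fun _ => m) x ≤ φ x * W x := by
          by_cases hmem : x ∈ Icc (ξ0 - 1) ξ0
          · rw [indicator_of_mem hmem, hm, mul_comm]
            apply mul_le_mul _ (hanti hmem.2) (hpos _).le hφx.le
            rw [hφ]
            apply Real.exp_le_exp.2
            have a1 := mul_le_mul_of_nonneg_left hmem.1 hlam.le
            have a2 : x^2 ≤ ξ0^2 := pow_le_pow_left₀ hx hmem.2 2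
            have a3 := mul_le_mul_of_nonneg_left a2 hθ.le
            linarith
          · rw [indicator_of_notMem hmem]; positivity
        rcases lt_or_ge x X with hxX | hxX
        · have h13 : φ x * r x ≤ E x := by
            rw [hE, indicator_of_mem (show x ∈ Iio X from hxX)]
            have b1 : r x ≤ Cr := hrx.trans (mul_le_of_le_one_right hCr (pow_le_one₀ hWx.le hW1x))
            have b2 : φ x * r x ≤ Real.exp (lam * x) * Cr := by
              have := hφle x
              nlinarith [Real.exp_pos (lam * x)]
            have b3 : Real.exp (lam * x) ≤ Real.exp (lam * X / 2) * Real.exp (lam / 2 * x) := by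
              rw [← Real.exp_add]; apply Real.exp_le_exp.2; nlinarith
            have b4 : Cr * Real.exp (lam * X / 2) ≤ D := by
              rw [hD]; apply mul_le_mul_of_nonneg_right _ (Real.exp_pos _).le
              have : 0 ≤ c * lam := by positivity
              have : 0 ≤ 2 * c / lam := by positivity
              linarith
            have b5 := mul_le_mul_of_nonneg_right b4 (Real.exp_pos (lam / 2 * x)).le
            have b6 := mul_le_mul_of_nonneg_left b3 hCr
            linarith
          have c1 : 0 ≤ κ / 4 * (φ x * W x) := by positivity
          have c2 := mul_le_mul_of_nonneg_left hind (show 0 ≤ κ / 4 by positivity)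
          linarith
        · have h13 : φ x * r x ≤ κ / 4 * (φ x * W x) := by
            have b1 := hX x hxX
            have b2 : r x ≤ κ / 4 * W x := by
              have := mul_le_mul_of_nonneg_right b1 hWx.le
              linarith
            have := mul_le_mul_of_nonneg_left b2 hφx.le
            linarith
          have := hE0 x
          have c2 := mul_le_mul_of_nonneg_left hind (show 0 ≤ κ / 4 by positivity)
          linarith
    have hindi : Integrable fun x => κ / 4 * (Icc (ξ0 - 1) ξ0).indicator (fun _ => m) x :=
      Integrable.const_mul (by
        rw [integrable_indicator_iff measurableSet_Icc]
        exact integrableOn_const (by simp)) _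
    have hfin := integral_mono (hindi.sub hEint) hqi hpt
    rw [hzero] at hfin
    simp only [Pi.sub_apply] at hfin
    rw [integral_sub hindi hEint, integral_const_mul, integral_indicator measurableSet_Icc,
      setIntegral_const, ← hIE] at hfin
    simp at hfin
    rw [← hm]; linarith
  refine ⟨4 * IE / κ * Real.exp lam, fun ξ hξ => ?_⟩
  have hl : Tendsto (fun θ : ℝ => κ / 4 * (W ξ * Real.exp (lam * (ξ - 1) - θ * ξ^2)))
      (nhdsWithin 0 (Ioi 0)) (nhds (κ / 4 * (W ξ * Real.exp (lam * (ξ - 1) - 0 * ξ^2)))) := by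
    apply Tendsto.mono_left _ nhdsWithin_le_nhds
    exact Continuous.tendsto (by fun_prop :
      Continuous fun θ : ℝ => κ / 4 * (W ξ * Real.exp (lam * (ξ - 1) - θ * ξ^2))) 0
  have h1 : κ / 4 * (W ξ * Real.exp (lam * (ξ - 1) - 0 * ξ^2)) ≤ IE := by
    refine le_of_tendsto hl ?_
    filter_upwards [Ioo_mem_nhdsGT hθ0pos] with θ hθ
    exact key θ hθ.1 hθ.2.le ξ hξ
  rw [zero_mul, sub_zero] at h1
  have h2 : W ξ = W ξ * Real.exp (lam * (ξ - 1)) * (Real.exp lam * Real.exp (-(lam * ξ))) := by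
    rw [mul_assoc, ← Real.exp_add, ← Real.exp_add]; ring_nf; simp
  rw [h2, mul_assoc (4 * IE / κ)]
  apply mul_le_mul_of_nonneg_right _ (by positivity)
  rw [le_div_iff₀ hκ]; linarith

section MainAux

variable {J : ℝ → ℝ} {R : ℝ}

lemma Ker.mgf_hasDerivAt (h : Ker J R) (s : ℝ) :
    HasDerivAt (fun s => ∫ y, J y * Real.exp (s * y)) (∫ y, J y * (y * Real.exp (s * y))) s := by
  refine h.hasDerivAt (k := fun s y => Real.exp (s * y)) (k' := fun s y => y * Real.exp (s * y))
    (fun x => by fun_prop) (by unfold Function.uncurry; fun_prop) (fun x y => ?_) s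
  refine ((hasDerivAt_id' x).mul_const y).exp.congr_deriv ?_
  ring

lemma Ker.one_le_mgf (h : Ker J R) (heven : ∀ x, J (-x) = J x) (hmass : ∫ y, J y = 1) (s : ℝ) :
    1 ≤ ∫ y, J y * Real.exp (s * y) := by
  have h0 : ∫ y, J y * y = 0 := by
    have h1 := integral_neg_eq_self (fun y => J y * y) volume
    have h2 : ∀ y, J (-y) * (-y) = -(J y * y) := fun y => by rw [heven]; ring
    simp only [h2] at h1
    rw [integral_neg] at h1
    linarith
  have h1 : ∫ y, J y * (s * y + 1) ≤ ∫ y, J y * Real.exp (s * y) :=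
    h.mono (by fun_prop) (by fun_prop) fun y _ => Real.add_one_le_exp _
  have h2 : ∀ y, J y * (s * y + 1) = s * (J y * y) + J y * 1 := fun y => by ring
  simp_rw [h2] at h1
  rw [integral_add ((h.integrable continuous_id').const_mul s) (h.integrable (continuous_const (y := (1:ℝ)))),
    integral_const_mul, h0] at h1
  simp only [mul_one] at h1
  linarith

lemma Ker.exists_pos (h : Ker J R) (heven : ∀ x, J (-x) = J x) (hmass : ∫ y, J y = 1) :
    ∃ y, 0 < y ∧ 0 < J y := by
  by_contra hcon
  push Not at hcon
  have hp : ∀ y, 0 < y → J y = 0 := fun y hy => le_antisymm (hcon y hy) (h.nonneg y)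
  have hn : ∀ y, y ≠ 0 → J y = 0 := by
    intro y hy
    rcases lt_or_gt_of_ne hy with h1 | h1
    · rw [← heven]; exact hp _ (by linarith)
    · exact hp y h1
  have : J =ᵐ[volume] fun _ => (0:ℝ) := by
    have h1 : ∀ᵐ y : ℝ, y ≠ 0 := by simp [ae_iff]
    filter_upwards [h1] with y hy using hn y hy
  rw [integral_congr_ae this] at hmass
  simp at hmass

lemma taylor_bound {f : ℝ → ℝ} {γ : ℝ} (hf1 : ContDiffOn ℝ 2 f (Icc 0 1)) (hf0 : f 0 = 0)
    (hdf0 : derivWithin f (Icc 0 1) 0 = γ) :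
    ∃ C, 0 ≤ C ∧ ∀ w ∈ Icc (0:ℝ) 1, |γ * w - f w| ≤ C * w ^ 2 := by
  obtain ⟨C, hC⟩ := exists_taylor_mean_remainder_bound (n := 1) (zero_le_one' ℝ)
    (f := f) (by norm_num; exact hf1)
  refine ⟨max C 0, le_max_right _ _, fun w hw => ?_⟩
  have h1 := hC w hw
  rw [taylorWithinEval_succ, taylor_within_zero_eval, hf0] at h1
  simp [iteratedDerivWithin_one, hdf0] at h1
  rw [abs_sub_comm, mul_comm γ w]
  refine h1.trans ?_
  apply mul_le_mul_of_nonneg_right (le_max_left _ _) (by positivity)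

end MainAux

/-- If the minimal nonlocal speed is linearly selected, then the minimal front satisfies
`𝒲(ξ) = A ξ e^{-λ₀ξ} + B e^{-λ₀ξ} + o(e^{-λ₀ξ})` with `A ≥ 0`, and `B > 0` if `A = 0`. -/
theorem nonlocal_minimal_wave_decay
    (J : ℝ → ℝ) (hJ : IsKernel J)
    (f : ℝ → ℝ) (γ₀ : ℝ)
    -- monostable condition with f'(0) = γ₀ > 0
    (hf1 : ContDiffOn ℝ 2 f (Icc 0 1)) (hf0 : f 0 = 0) (hf1' : f 1 = 0)
    (hγ₀ : 0 < γ₀) (hdf0 : derivWithin f (Icc 0 1) 0 = γ₀)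
    (hdf1 : derivWithin f (Icc 0 1) 1 < 0)
    (hfpos : ∀ w ∈ Ioo (0:ℝ) 1, 0 < f w)
    -- λ₀ is the unique positive number with ∫ J e^{λ₀ x} dx - 1 + γ₀ = c₀* λ₀
    (lam₀ : ℝ) (hlam₀ : 0 < lam₀)
    (hroot : (∫ x, J x * Real.exp (lam₀ * x)) - 1 + γ₀ = c0star J γ₀ * lam₀)
    (huniqroot : ∀ l, 0 < l →
      (∫ x, J x * Real.exp (l * x)) - 1 + γ₀ = c0star J γ₀ * l → l = lam₀)
    -- minimal speed c_NL* and its characterization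
    (cNL : ℝ) (hge : c0star J γ₀ ≤ cNL)
    (hmin : ∀ c, (∃ V : ℝ → ℝ, IsNLFront J f c V) ↔ cNL ≤ c)
    -- linear selection
    (hlin : cNL = c0star J γ₀)
    -- the minimal traveling wave
    (W : ℝ → ℝ) (hW : IsNLFront J f cNL W) :
    ∃ A B : ℝ, 0 ≤ A ∧ (0 < A ∨ (A = 0 ∧ 0 < B)) ∧
      (fun ξ => W ξ - (A * ξ * Real.exp (-(lam₀ * ξ)) + B * Real.exp (-(lam₀ * ξ))))
        =o[atTop] fun ξ => Real.exp (-(lam₀ * ξ)) := by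
  obtain ⟨hJc, hJ0, heven, hJs, hmass⟩ := hJ
  obtain ⟨R, hR, hJz⟩ : ∃ R : ℝ, 0 < R ∧ ∀ x : ℝ, R ≤ ‖x‖ → J x = 0 := hJs.exists_pos_le_norm
  have h : Ker J R := ⟨hJc, hJ0, hR, fun y hy => hJz y hy⟩
  obtain ⟨c, hcdef⟩ : ∃ c, c = c0star J γ₀ := ⟨_, rfl⟩
  have hcc : cNL = c := hlin.trans hcdef.symm
  rw [hcc] at hW
  rw [← hcdef] at hroot huniqroot
  obtain ⟨hWC, hWeq, hWbot, hWtop, hWd⟩ := hW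
  have hM1 := h.one_le_mgf heven hmass
  have hcle : ∀ l, 0 < l → c * l ≤ (∫ x, J x * Real.exp (l * x)) - 1 + γ₀ := by
    intro l hl
    have h1 : c ≤ ((∫ x, J x * Real.exp (l * x)) + γ₀ - 1) / l := by
      rw [hcdef]
      apply csInf_le
      · refine ⟨0, ?_⟩
        rintro _ ⟨s, hs, rfl⟩
        have := hM1 s
        exact div_nonneg (by linarith) (le_of_lt hs)
      · exact ⟨l, hl, rfl⟩
    rw [le_div_iff₀ hl] at h1
    linarith
  have hc : 0 < c := by
    have := hM1 lam₀
    have h2 : 0 < c * lam₀ := by linarith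
    exact (pos_iff_pos_of_mul_pos h2).2 hlam₀
  -- positivity of the dispersion relation below `lam₀`
  have hMd := h.mgf_hasDerivAt
  have hMc : Continuous fun s => ∫ y, J y * Real.exp (s * y) :=
    continuous_iff_continuousAt.2 fun s => (hMd s).continuousAt
  obtain ⟨κ, hκ, hΦ⟩ : ∃ κ, 0 < κ ∧ ∀ s, 0 ≤ s → s ≤ 3 * lam₀ / 4 →
      κ ≤ (∫ y, J y * Real.exp (s * y)) - 1 - c * s + γ₀ := by
    obtain ⟨s0, hs0, hmin0⟩ := (isCompact_Icc (a := (0:ℝ)) (b := 3 * lam₀ / 4)).exists_isMinOn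
      ⟨0, le_rfl, by positivity⟩
      (f := fun s => (∫ y, J y * Real.exp (s * y)) - 1 - c * s + γ₀) (by fun_prop)
    refine ⟨_, ?_, fun s h1 h2 => hmin0 ⟨h1, h2⟩⟩
    rcases eq_or_lt_of_le hs0.1 with h1 | h1
    · rw [← h1]
      simp only [zero_mul, Real.exp_zero, mul_zero, mul_one, hmass]
      linarith
    · have h2 := hcle s0 h1
      refine lt_of_le_of_ne (by linarith) fun h3 => ?_
      have h4 := huniqroot s0 h1 (by linarith)
      have := hs0.2
      linarith
  -- the tilted kernel
  obtain ⟨K, hKdef⟩ : ∃ K : ℝ → ℝ, K = fun y => J y * Real.exp (lam₀ * y) := ⟨_, rfl⟩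
  have hK : Ker K R := by
    rw [hKdef]
    exact ⟨by fun_prop, fun y => mul_nonneg (hJ0 y) (Real.exp_pos _).le, hR,
      fun y hy => by simp [h.zero y hy]⟩
  have hK0 : ∫ y, K y * 1 = 1 - γ₀ + c * lam₀ := by
    simp only [mul_one, hKdef]; linarith
  have hK1 : ∫ y, K y * y = c := by
    have e : ∫ y, K y * y = ∫ y, J y * (y * Real.exp (lam₀ * y)) := by
      congr 1; funext y; rw [hKdef]; ring
    rw [e]
    have hd : HasDerivAt (fun s => (∫ y, J y * Real.exp (s * y)) - c * s)
        ((∫ y, J y * (y * Real.exp (lam₀ * y))) - c) lam₀ :=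
      ((hMd lam₀).fun_sub ((hasDerivAt_id' lam₀).const_mul c)).congr_deriv (by ring)
    have hm : IsLocalMin (fun s => (∫ y, J y * Real.exp (s * y)) - c * s) lam₀ := by
      filter_upwards [lt_mem_nhds hlam₀] with s hs
      have := hcle s hs
      linarith
    have := hm.hasDerivAt_eq_zero hd
    linarith
  have hσ : 0 < sigp K := by
    obtain ⟨y0, hy0, hJy0⟩ := h.exists_pos heven hmass
    unfold sigp
    refine Continuous.integral_pos_of_hasCompactSupport_nonneg_nonzero (x := y0)
      (hK.cont.mul (by fun_prop)) hK.hcs.mul_right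
      (fun y => mul_nonneg (hK.nonneg y) (by positivity)) ?_
    have h1 : 0 < K y0 := by rw [hKdef]; exact mul_pos hJy0 (Real.exp_pos _)
    have h2 : 0 < max y0 0 := lt_max_of_lt_left hy0
    positivity
  -- the wave profile
  have hWdiff : ∀ x, HasDerivAt W (deriv W x) x := fun x =>
    ((hWC.differentiable (by norm_num)) x).hasDerivAt
  have hWcont : Continuous W := hWC.continuous
  have hanti : StrictAnti W := strictAnti_of_deriv_neg hWd
  have hpos : ∀ x, 0 < W x := by
    intro x
    have h1 : 0 ≤ W (x + 1) := hanti.antitone.le_of_tendsto hWtop (x + 1)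
    exact lt_of_le_of_lt h1 (hanti (by linarith))
  have hle1 : ∀ x, W x ≤ 1 := fun x => hanti.antitone.ge_of_tendsto hWbot x
  obtain ⟨Cr, hCr, hTay⟩ := taylor_bound hf1 hf0 hdf0
  obtain ⟨r, hrdef⟩ : ∃ r : ℝ → ℝ, r = fun x => γ₀ * W x - f (W x) := ⟨_, rfl⟩
  have hrc : Continuous r := by
    rw [hrdef]
    refine (hWcont.const_mul γ₀).sub ?_
    exact hf1.continuousOn.comp_continuous hWcont fun x => ⟨(hpos x).le, hle1 x⟩
  have hr : ∀ x, |r x| ≤ Cr * W x ^ 2 := fun x => by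
    rw [hrdef]; exact hTay (W x) ⟨(hpos x).le, hle1 x⟩
  have heq : ∀ ξ, (∫ y, J (ξ - y) * W y) - W ξ + c * deriv W ξ + γ₀ * W ξ = r ξ := by
    intro ξ
    have := hWeq ξ
    rw [hrdef]
    linarith
  obtain ⟨C, hC⟩ := h.decay heven hmass hc hγ₀ (show 0 < 3 * lam₀ / 4 by positivity) hκ hCr hM1 hΦ
    hWdiff hpos hle1 hanti.antitone hWtop hrc hr heq
  -- the rescaled profile
  obtain ⟨u, hu⟩ : ∃ u : ℝ → ℝ, u = fun ξ => W ξ * Real.exp (lam₀ * ξ) := ⟨_, rfl⟩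
  obtain ⟨u1, hu1⟩ : ∃ u1 : ℝ → ℝ,
    u1 = fun ξ => (deriv W ξ + lam₀ * W ξ) * Real.exp (lam₀ * ξ) := ⟨_, rfl⟩
  have hud : ∀ x, HasDerivAt u (u1 x) x := by
    intro x
    rw [hu, hu1]
    have h1 : HasDerivAt (fun x => Real.exp (lam₀ * x)) (Real.exp (lam₀ * x) * (lam₀ * 1)) x :=
      ((hasDerivAt_id' x).const_mul lam₀).exp
    refine ((hWdiff x).fun_mul h1).congr_deriv ?_
    ring
  have hexp : ∀ x, Real.exp (lam₀ * x) * Real.exp (-(lam₀ * x)) = 1 := fun x => by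
    rw [← Real.exp_add]; simp
  have huW : ∀ x, u x * Real.exp (-(lam₀ * x)) = W x := fun x => by
    rw [hu]; simp only; rw [mul_assoc, hexp, mul_one]
  have hG : ∀ ξ, Gop K u u1 ξ = Real.exp (lam₀ * ξ) * r ξ := by
    intro ξ
    have e1 : ∫ y, K y * u (ξ - y) = Real.exp (lam₀ * ξ) * ∫ y, J (ξ - y) * W y := by
      rw [← integral_sub_left_eq_self (fun y => J (ξ - y) * W y) volume ξ, ← integral_const_mul]
      congr 1; funext y
      rw [hKdef, hu]; simp only
      have e2 : Real.exp (lam₀ * ξ) = Real.exp (lam₀ * y) * Real.exp (lam₀ * (ξ - y)) := by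
        rw [← Real.exp_add]; ring_nf
      rw [e2, sub_sub_cancel]; ring
    unfold Gop
    rw [e1, hK0, hK1, ← heq ξ, hu, hu1]
    ring
  have hGabs : ∀ ξ, |Gop K u u1 ξ| ≤ Cr * (W ξ ^ 2 * Real.exp (lam₀ * ξ)) := by
    intro ξ
    rw [hG, abs_mul, abs_of_pos (Real.exp_pos _)]
    have := mul_le_mul_of_nonneg_left (hr ξ) (Real.exp_pos (lam₀ * ξ)).le
    linarith
  obtain ⟨A, B, hA, hAB, hlim⟩ := hK.core (hK1.symm ▸ hc) hσ (lam := lam₀) (α := lam₀ / 2)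
    (C0 := Cr) (C1 := Cr * C ^ 2) (X := 1) (u := u) (u1 := u1) hlam₀ (by positivity) hCr hud
    (fun x => by rw [hu]; exact mul_pos (hpos x) (Real.exp_pos _))
    (fun a b hab => by rw [huW, huW]; exact hanti.antitone hab)
    (fun ξ _ => (hGabs ξ).trans (le_of_eq (by
      have e : Real.exp (lam₀ * ξ) = Real.exp (lam₀ * ξ) * (Real.exp (lam₀ * ξ)
        * Real.exp (-(lam₀ * ξ))) := by rw [hexp, mul_one]
      rw [e, hu]; ring)))
    (fun ξ hξ => (hGabs ξ).trans (by
      rw [mul_assoc]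
      apply mul_le_mul_of_nonneg_left _ hCr
      have h1 : W ξ ^ 2 ≤ (C * Real.exp (-(3 * lam₀ / 4 * ξ))) ^ 2 :=
        pow_le_pow_left₀ (hpos ξ).le (hC ξ hξ) 2
      refine (mul_le_mul_of_nonneg_right h1 (Real.exp_pos _).le).trans (le_of_eq ?_)
      rw [mul_pow, mul_assoc, ← Real.exp_nat_mul, ← Real.exp_add]
      congr 2; push_cast; ring))
  refine ⟨A, B, hA, hAB, ?_⟩
  have h1 : (fun ξ => W ξ - (A * ξ * Real.exp (-(lam₀ * ξ)) + B * Real.exp (-(lam₀ * ξ))))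
      = fun ξ => (u ξ - (A * ξ + B)) * Real.exp (-(lam₀ * ξ)) := by
    funext ξ; rw [← huW ξ]; ring
  rw [h1]
  have h2 : (fun ξ => u ξ - (A * ξ + B)) =o[atTop] fun _ => (1:ℝ) := (isLittleO_one_iff ℝ).2 hlim
  simpa using h2.mul_isBigO (isBigO_refl (fun ξ => Real.exp (-(lam₀ * ξ))) atTop)
end
end
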